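/- Let β ∈ [0,1] and α = 3 − 2β. For every ε > 0 there exist δ > 0 and a constant C = C(δ, ε, γ) such that ∫_* (ρ_{θ♯}μ)(⋃_{D ∈ 𝔻_θ} D) dλ(θ) ≤ C R^{−δ} μ(ℝ³) c_β(λ)^{1/2} λ(ℝ)^{1/2} for every R ≥ 1, every Borel measure λ on I with c_β(λ) < ∞, every Borel measure μ on the unit ball B₃(0,1) with c_α(μ) ≤ 1, and every family {𝔻_θ}_{θ ∈ I}, where each 𝔻_θ is a collection of intervals of radius R^{−1} in the line spanned by γ(θ) with cardinality |𝔻_θ| ≤ R^{1−ε} μ(ℝ³). Here ∫_* denotes the lower integral: the supremum of ∫ φ dλ over λ-measurable functions φ with 0 ≤ φ(θ) ≤ (ρ_{θ♯}μ)(⋃_{D ∈ 𝔻_θ} D) for all θ. -/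

import Mathlib

/-!
STATEMENT 9 (Lemma 3.1 / `energylemma`): let `β ∈ [0,1]` and `α = 3 - 2β`. For
every `ε > 0` there exist `δ > 0` and `C = C(δ, ε, γ)` such that
`∫_* (ρ_{θ♯}μ)(⋃_{D ∈ 𝔻_θ} D) dλ(θ) ≤ C R^{-δ} μ(ℝ³) c_β(λ)^{1/2} λ(ℝ)^{1/2}`
for every `R ≥ 1`, every Borel measure `λ` on `I` with `c_β(λ) < ∞`, every Borel
measure `μ` on `B₃(0,1)` with `c_α(μ) ≤ 1`, and every family `{𝔻_θ}` of
collections of radius-`R⁻¹` intervals in the line spanned by `γ θ` with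
`|𝔻_θ| ≤ R^{1-ε} μ(ℝ³)`.  Each interval is recorded by the coordinate `c` of its
centre `c • γ θ` on the line.  `∫_*` is the lower integral.
-/

open MeasureTheory Metric Set
open scoped ENNReal RealInnerProductSpace

noncomputable section

abbrev E3 : Type := EuclideanSpace ℝ (Fin 3)

/-- `c_α(μ) = sup_{x, r>0} μ(B(x,r)) / r^α`. -/
def frostmanConst {X : Type*} [PseudoMetricSpace X] [MeasurableSpace X]
    (μ : Measure X) (α : ℝ) : ℝ≥0∞ :=
  ⨆ (x : X) (r : ℝ) (_ : 0 < r), μ (Metric.ball x r) / ENNReal.ofReal (r ^ α)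

/-- Orthogonal projection onto the line spanned by `γ θ`:  `ρ_θ x = ⟨x, γ θ⟩ γ θ`. -/
def lineProj (γ : ℝ → E3) (θ : ℝ) (x : E3) : E3 := ⟪x, γ θ⟫ • γ θ

/-- The lower integral `∫_* f dλ`: the supremum of `∫ φ dλ` over `λ`-measurable
functions `φ` with `0 ≤ φ ≤ f`. -/
def lowerIntegral (lam : Measure ℝ) (f : ℝ → ℝ≥0∞) : ℝ≥0∞ :=
  ⨆ (φ : ℝ → ℝ≥0∞) (_ : AEMeasurable φ lam) (_ : ∀ θ, φ θ ≤ f θ), ∫⁻ θ, φ θ ∂lam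

/-- The interval of radius `R⁻¹` in the line spanned by `γ θ` whose centre has
coordinate `c`. -/
def lineInterval (γ : ℝ → E3) (θ R c : ℝ) : Set E3 :=
  {x : E3 | ∃ s : ℝ, |s - c| ≤ R⁻¹ ∧ x = s • γ θ}

/-!
At scale `R⁻¹` the measure `λ` may be replaced by Frostman weights on finitely many directions, and
the indicator of the slabs over `𝔻_θ` is dominated by its convolution with a Fejér kernel of order
about `R`, that is by a plane wave in the direction `γ θ` plus a constant of size
`R^{-ε} μ(ℝ³)`.  The wave is cut into geometric blocks of frequencies in `[r, (1 + κ) r)`, `r ≤ R`,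
each of which has its spectrum on a thin piece of the cone over `γ`.

By the uncertainty principle the sixth power of a block can be integrated against a fixed
band-limited measure `m` instead of `μ`, at the cost of a factor `r^{3 - α} = r^{2β}`.  Against `m`,
`ℓ²` decoupling in `L⁶` for the cone reduces the block to arcs of length about `r^{-1/2}`.  On
each arc, orthogonality of directions that are `r⁻¹` apart gains `r^{-β}` in the squared `L²` norm,
and the Frostman condition bounds the mass of the arc, of which two more factors are used, by
`r^{-β/2}`; altogether this gains `r^{-2β}` and cancels the loss.  What survives
is the `L²` norm of the profiles, of size `R^{-ε} μ(ℝ³)`, whose sixth root pays for the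
`r^η`-losses in decoupling.  Decoupling itself is proved by bilinear descent: wherever the curve
bends transversally, products of far apart blocks have no frequencies in common with the fourth
power of a coarser transversal block.
-/

/-- Bounded continuous functions, as a predicate on functions rather than as the bundled type
`X →ᵇ E`, so that `fun_prop` derives it for the products of powers of norms integrated below. -/
@[fun_prop]
def BddContinuous {X E : Type*} [TopologicalSpace X] [NormedAddCommGroup E] (f : X → E) : Prop :=
  Continuous f ∧ ∃ C : ℝ, ∀ x, ‖f x‖ ≤ C

namespace BddContinuous

variable {X E R ι : Type*} [TopologicalSpace X] [NormedAddCommGroup E] [NormedRing R]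

@[fun_prop]
theorem const (c : E) : BddContinuous fun _ : X => c :=
  ⟨continuous_const, ‖c‖, fun _ => le_rfl⟩

@[fun_prop]
theorem add {f g : X → E} (hf : BddContinuous f) (hg : BddContinuous g) :
    BddContinuous fun x => f x + g x := by
  obtain ⟨hf, C, hC⟩ := hf
  obtain ⟨hg, D, hD⟩ := hg
  exact ⟨hf.add hg, C + D, fun x => (norm_add_le _ _).trans (add_le_add (hC x) (hD x))⟩

@[fun_prop]
theorem mul {f g : X → R} (hf : BddContinuous f) (hg : BddContinuous g) :
    BddContinuous fun x => f x * g x := by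
  obtain ⟨hf, C, hC⟩ := hf
  obtain ⟨hg, D, hD⟩ := hg
  exact ⟨hf.mul hg, C * D, fun x => (norm_mul_le _ _).trans
    (mul_le_mul (hC x) (hD x) (norm_nonneg _) ((norm_nonneg _).trans (hC x)))⟩

@[fun_prop]
theorem pow {f : X → R} (hf : BddContinuous f) (n : ℕ) : BddContinuous fun x => f x ^ n := by
  induction n with
  | zero => simpa only [pow_zero] using const (X := X) (1 : R)
  | succ n ih => simpa only [pow_succ] using ih.mul hf

@[fun_prop]
theorem norm {f : X → E} (hf : BddContinuous f) : BddContinuous fun x => ‖f x‖ :=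
  ⟨hf.1.norm, hf.2.imp fun C hC x => by simpa only [norm_norm] using hC x⟩

@[fun_prop]
theorem conj {f : X → ℂ} (hf : BddContinuous f) :
    BddContinuous fun x => starRingEnd ℂ (f x) :=
  ⟨Complex.continuous_conj.comp hf.1, hf.2.imp fun C hC x => by
    simpa only [RCLike.norm_conj] using hC x⟩

@[fun_prop]
theorem ofReal {f : X → ℝ} (hf : BddContinuous f) : BddContinuous fun x => (f x : ℂ) :=
  ⟨Complex.continuous_ofReal.comp hf.1, hf.2.imp fun C hC x => by
    simpa only [Complex.norm_real] using hC x⟩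

@[fun_prop]
theorem sum {f : ι → X → E} (s : Finset ι) (hf : ∀ i, BddContinuous (f i)) :
    BddContinuous fun x => ∑ i ∈ s, f i x := by
  classical
  induction s using Finset.induction_on with
  | empty => simpa only [Finset.sum_empty] using const (X := X) (0 : E)
  | insert a s ha ih =>
    simp only [Finset.sum_insert ha]
    exact (hf a).add ih

theorem integrable [SecondCountableTopology X] [MeasurableSpace X] [BorelSpace X]
    {m : Measure X} [IsFiniteMeasure m] {f : X → E} (hf : BddContinuous f) : Integrable f m := by
  obtain ⟨hf, C, hC⟩ := hf
  exact Integrable.of_bound hf.aestronglyMeasurable C (Filter.Eventually.of_forall hC)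

theorem memLp [SecondCountableTopology X] [MeasurableSpace X] [BorelSpace X]
    {m : Measure X} [IsFiniteMeasure m] {f : X → E} (hf : BddContinuous f) (p : ℝ≥0∞) :
    MemLp f p m := by
  obtain ⟨hf, C, hC⟩ := hf
  exact MemLp.of_bound hf.aestronglyMeasurable C (Filter.Eventually.of_forall hC)

end BddContinuous

/-- The indices `i` and `j` differ by at least `N`. -/
abbrev Separated (N i j : ℕ) : Prop := i + N ≤ j ∨ j + N ≤ i

theorem card_filter_not_separated_le (s : Finset ℕ) (N i : ℕ) :
    (s.filter fun j => ¬ Separated N i j).card ≤ 2 * N - 1 := by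
  have hsub : (s.filter fun j => ¬ Separated N i j) ⊆ Finset.Ico (i + 1 - N) (i + N) := by
    intro j hj
    rw [Finset.mem_filter] at hj
    rw [Finset.mem_Ico]
    omega
  have hcard := Finset.card_le_card hsub
  rw [Nat.card_Ico] at hcard
  omega

theorem sum_sum_filter_half_add_le {ι : Type*} (s : Finset ι) (r : ι → ι → Prop)
    [DecidableRel r] (hr : ∀ i j, r i j → r j i) {M : ℕ}
    (hM : ∀ i ∈ s, (s.filter (r i)).card ≤ M) {A : ι → ℝ} (hA : ∀ i ∈ s, 0 ≤ A i) :
    ∑ i ∈ s, ∑ j ∈ s with r i j, (A i + A j) / 2 ≤ M * ∑ i ∈ s, A i := by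
  have hswap : ∑ i ∈ s, ∑ j ∈ s with r i j, A j = ∑ i ∈ s, ∑ j ∈ s with r i j, A i :=
    Finset.sum_comm' fun i j => by simp only [Finset.mem_filter]; grind
  calc ∑ i ∈ s, ∑ j ∈ s with r i j, (A i + A j) / 2
      = ∑ i ∈ s, ∑ j ∈ s with r i j, A i := by
        simp only [← Finset.sum_div, Finset.sum_add_distrib, hswap]
        ring
    _ = ∑ i ∈ s, (s.filter (r i)).card * A i := by
        simp only [Finset.sum_const, nsmul_eq_mul]
    _ ≤ ∑ i ∈ s, M * A i := Finset.sum_le_sum fun i hi =>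
        mul_le_mul_of_nonneg_right (Nat.cast_le.2 (hM i hi)) (hA i hi)
    _ = M * ∑ i ∈ s, A i := (Finset.mul_sum _ _ _).symm

section WeightedOrthogonality

variable {X : Type*} [TopologicalSpace X] [SecondCountableTopology X] [MeasurableSpace X]
  [BorelSpace X] (m : Measure X) [IsFiniteMeasure m]

theorem integral_norm_sum_sq_mul {ι : Type*} (s : Finset ι) {v : ι → X → ℂ} {w : X → ℝ}
    (hv : ∀ i, BddContinuous (v i)) (hw : BddContinuous w) :
    ∫ x, ‖∑ i ∈ s, v i x‖ ^ 2 * w x ∂m =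
      ∑ i ∈ s, ∑ j ∈ s, (∫ x, v i x * starRingEnd ℂ (v j x) * (w x : ℂ) ∂m).re := by
  have hint : ∀ i j, Integrable (fun x => v i x * starRingEnd ℂ (v j x) * (w x : ℂ)) m :=
    fun i j => BddContinuous.integrable (by fun_prop)
  have hexpand : ∀ x, ((‖∑ i ∈ s, v i x‖ ^ 2 * w x : ℝ) : ℂ) =
      ∑ i ∈ s, ∑ j ∈ s, v i x * starRingEnd ℂ (v j x) * (w x : ℂ) := fun x => by
    rw [← Complex.normSq_eq_norm_sq, Complex.ofReal_mul, ← Complex.mul_conj, map_sum,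
      Finset.sum_mul_sum, Finset.sum_mul]
    simp only [Finset.sum_mul]
  rw [← Complex.ofReal_re (∫ x, _ ∂m), ← integral_complex_ofReal]
  simp only [hexpand]
  rw [integral_finsetSum _ fun i _ => integrable_finsetSum _ fun j _ => hint i j, Complex.re_sum]
  refine Finset.sum_congr rfl fun i _ => ?_
  rw [integral_finsetSum _ fun j _ => hint i j, Complex.re_sum]

theorem re_integral_mul_conj_mul_le {f g : X → ℂ} {w : X → ℝ} (hf : BddContinuous f)
    (hg : BddContinuous g) (hw : BddContinuous w) (hw0 : ∀ x, 0 ≤ w x) :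
    (∫ x, f x * starRingEnd ℂ (g x) * (w x : ℂ) ∂m).re ≤
      (∫ x, ‖f x‖ ^ 2 * w x ∂m + ∫ x, ‖g x‖ ^ 2 * w x ∂m) / 2 := by
  refine (Complex.re_le_norm _).trans ((norm_integral_le_integral_norm _).trans ?_)
  rw [← integral_add (BddContinuous.integrable (by fun_prop))
    (BddContinuous.integrable (by fun_prop)), ← integral_div]
  refine integral_mono (BddContinuous.integrable (by fun_prop))
    ((BddContinuous.integrable (by fun_prop)).div_const _) fun x => ?_
  simp only [norm_mul, RCLike.norm_conj, Complex.norm_real, Real.norm_of_nonneg (hw0 x)]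
  nlinarith [mul_nonneg (hw0 x) (sq_nonneg (‖f x‖ - ‖g x‖))]

theorem integral_norm_sum_sq_mul_le_of_separated (s : Finset ℕ) {v : ℕ → X → ℂ} {w : X → ℝ}
    (hv : ∀ i, BddContinuous (v i)) (hw : BddContinuous w) (hw0 : ∀ x, 0 ≤ w x) (N : ℕ)
    (horth : ∀ i ∈ s, ∀ j ∈ s, Separated N i j →
      ∫ x, v i x * starRingEnd ℂ (v j x) * (w x : ℂ) ∂m = 0) :
    ∫ x, ‖∑ i ∈ s, v i x‖ ^ 2 * w x ∂m ≤ 2 * N * ∑ i ∈ s, ∫ x, ‖v i x‖ ^ 2 * w x ∂m := by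
  set A : ℕ → ℝ := fun i => ∫ x, ‖v i x‖ ^ 2 * w x ∂m
  have hnear : ∀ i ∈ s, ∑ j ∈ s, (∫ x, v i x * starRingEnd ℂ (v j x) * (w x : ℂ) ∂m).re ≤
      ∑ j ∈ s with ¬ Separated N i j, (A i + A j) / 2 := fun i hi => by
    rw [Finset.sum_filter]
    refine Finset.sum_le_sum fun j hj => ?_
    split_ifs with hij
    · exact (congrArg Complex.re (horth i hi j hj hij)).le
    · exact re_integral_mul_conj_mul_le m (hv i) (hv j) hw hw0
  rw [integral_norm_sum_sq_mul m s hv hw]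
  refine (Finset.sum_le_sum hnear).trans ?_
  have hrow := sum_sum_filter_half_add_le s (fun i j => ¬ Separated N i j)
    (fun i j hij hji => hij hji.symm)
    (fun i _ => (card_filter_not_separated_le s N i).trans (Nat.sub_le _ _))
    (fun i _ => integral_nonneg fun x => mul_nonneg (sq_nonneg _) (hw0 x) : ∀ i ∈ s, 0 ≤ A i)
  exact_mod_cast hrow

theorem sq_integral_mul_le {u v : X → ℝ} (hu : BddContinuous u) (hv : BddContinuous v)
    (hu0 : ∀ x, 0 ≤ u x) (hv0 : ∀ x, 0 ≤ v x) :
    (∫ x, u x * v x ∂m) ^ 2 ≤ (∫ x, u x ^ 2 ∂m) * ∫ x, v x ^ 2 ∂m := by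
  have hholder := integral_mul_le_Lp_mul_Lq_of_nonneg (μ := m) Real.HolderConjugate.two_two
    (.of_forall hu0) (.of_forall hv0) (hu.memLp _) (hv.memLp _)
  simp only [Real.rpow_two, ← Real.sqrt_eq_rpow] at hholder
  have hu2 : 0 ≤ ∫ x, u x ^ 2 ∂m := integral_nonneg fun x => sq_nonneg _
  have hv2 : 0 ≤ ∫ x, v x ^ 2 ∂m := integral_nonneg fun x => sq_nonneg _
  rw [← Real.sqrt_mul hu2] at hholder
  exact (Real.le_sqrt (integral_nonneg fun x => mul_nonneg (hu0 x) (hv0 x))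
    (mul_nonneg hu2 hv2)).1 hholder

theorem sq_integral_norm_sq_mul_norm_pow_four_le {f g : X → ℂ} (hf : BddContinuous f)
    (hg : BddContinuous g) :
    (∫ x, ‖f x‖ ^ 2 * ‖g x‖ ^ 4 ∂m) ^ 2 ≤
      (∫ x, ‖g x‖ ^ 2 * ‖f x‖ ^ 4 ∂m) * ∫ x, ‖g x‖ ^ 6 ∂m := by
  have hCS := sq_integral_mul_le m (u := fun x => ‖g x‖ * ‖f x‖ ^ 2) (v := fun x => ‖g x‖ ^ 3)
    (by fun_prop) (by fun_prop) (fun x => by positivity) (fun x => by positivity)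
  convert hCS using 2
  all_goals
    refine integral_congr_ae (.of_forall fun x => ?_)
    ring

theorem integral_norm_sq_mul_norm_pow_four_le {f g : X → ℂ} (hf : BddContinuous f)
    (hg : BddContinuous g) {U a b : ℝ} (hU : 0 ≤ U) (ha : 0 ≤ a) (hb : 0 ≤ b)
    (hfa : ∫ x, ‖f x‖ ^ 6 ∂m ≤ U * a ^ 3) (hgb : ∫ x, ‖g x‖ ^ 6 ∂m ≤ U * b ^ 3) :
    ∫ x, ‖f x‖ ^ 2 * ‖g x‖ ^ 4 ∂m ≤ U * (a * b ^ 2) := by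
  have hconj : (3 : ℝ).HolderConjugate (3 / 2) :=
    Real.holderConjugate_iff.2 ⟨by norm_num, by norm_num⟩
  have hholder := integral_mul_le_Lp_mul_Lq_of_nonneg (μ := m) hconj
    (f := fun x => ‖f x‖ ^ 2) (g := fun x => ‖g x‖ ^ 4)
    (.of_forall fun _ => by positivity) (.of_forall fun _ => by positivity)
    (BddContinuous.memLp (by fun_prop) _) (BddContinuous.memLp (by fun_prop) _)
  have hf6 : ∀ x, (‖f x‖ ^ 2) ^ (3 : ℝ) = ‖f x‖ ^ 6 := fun x => by
    rw [← Real.rpow_natCast, ← Real.rpow_mul (norm_nonneg _), ← Real.rpow_natCast]; norm_num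
  have hg6 : ∀ x, (‖g x‖ ^ 4) ^ (3 / 2 : ℝ) = ‖g x‖ ^ 6 := fun x => by
    rw [← Real.rpow_natCast, ← Real.rpow_mul (norm_nonneg _), ← Real.rpow_natCast]; norm_num
  have hcube : ∀ {y : ℝ}, 0 ≤ y → (y ^ 3) ^ (1 / 3 : ℝ) = y := fun hy => by
    rw [← Real.rpow_natCast, ← Real.rpow_mul hy]; norm_num
  simp only [hf6, hg6, one_div_div] at hholder
  calc ∫ x, ‖f x‖ ^ 2 * ‖g x‖ ^ 4 ∂m
      ≤ (U * a ^ 3) ^ (1 / 3 : ℝ) * (U * b ^ 3) ^ (2 / 3 : ℝ) := hholder.trans (by gcongr)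
    _ = U ^ (1 / 3 : ℝ) * U ^ (2 / 3 : ℝ) * (a * b ^ 2) := by
        rw [Real.mul_rpow hU (by positivity), Real.mul_rpow hU (by positivity), hcube ha,
          show (2 / 3 : ℝ) = 1 / 3 * 2 by norm_num, Real.rpow_mul (by positivity : 0 ≤ b ^ 3),
          hcube hb, Real.rpow_two]
        ring
    _ = U * (a * b ^ 2) := by
        rw [← Real.rpow_add_of_nonneg hU (by norm_num) (by norm_num)]
        norm_num

end WeightedOrthogonality

section Blocks

variable {M : Type*} [AddCommMonoid M]

/-- The sum of `a p` over the indices `p < P` in the `q`-th block of length `K ^ L`: the level-`L`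
node `q` of the `K`-adic tree over `range P`. -/
def blockSum (K P : ℕ) (a : ℕ → M) (L q : ℕ) : M :=
  ∑ p ∈ Finset.range P with p / K ^ L = q, a p

theorem blockSum_add (K P : ℕ) (a : ℕ → M) (e j q : ℕ) :
    blockSum K P a (e + j) q =
      ∑ q' ∈ Finset.range P with q' / K ^ j = q, blockSum K P a e q' := by
  unfold blockSum
  rw [← Finset.sum_fiberwise_of_maps_to (g := fun p => p / K ^ e)
    (t := {q' ∈ Finset.range P | q' / K ^ j = q})]
  · refine Finset.sum_congr rfl fun q' hq' => Finset.sum_congr ?_ fun _ _ => rfl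
    rw [Finset.mem_filter] at hq'
    ext p
    simp only [Finset.mem_filter, pow_add, ← Nat.div_div_eq_div_mul]
    grind
  · intro p hp
    simp only [Finset.mem_filter, Finset.mem_range] at hp ⊢
    exact ⟨(Nat.div_le_self _ _).trans_lt hp.1, by rw [Nat.div_div_eq_div_mul, ← pow_add, hp.2]⟩

theorem blockSum_apply_add {X : Type*} (K P : ℕ) (G : ℕ → X → M) (e j q : ℕ) (x : X) :
    blockSum K P G (e + j) q x =
      ∑ q' ∈ Finset.range P with q' / K ^ j = q, blockSum K P G e q' x := by
  rw [blockSum_add, Finset.sum_apply]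

theorem card_filter_div_eq_le (s : Finset ℕ) {n : ℕ} (hn : 0 < n) (q : ℕ) :
    (s.filter fun p => p / n = q).card ≤ n := by
  have hsub : (s.filter fun p => p / n = q) ⊆ Finset.Ico (q * n) (q * n + n) := fun p hp => by
    rw [Finset.mem_filter, Nat.div_eq_iff hn] at hp
    rw [Finset.mem_Ico]
    omega
  simpa only [Nat.card_Ico, Nat.add_sub_cancel_left] using Finset.card_le_card hsub

theorem blockSum_nonneg (K P : ℕ) {Q : ℕ → ℝ} (hQ : ∀ p, 0 ≤ Q p) (L q : ℕ) :
    0 ≤ blockSum K P Q L q := Finset.sum_nonneg fun p _ => hQ p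

@[fun_prop]
theorem BddContinuous.blockSum {X : Type*} [TopologicalSpace X] (K P : ℕ) {G : ℕ → X → ℂ}
    (hG : ∀ p, BddContinuous (G p)) (L q : ℕ) : BddContinuous (blockSum K P G L q) := by
  simpa only [_root_.blockSum, Finset.sum_fn] using BddContinuous.sum _ hG

end Blocks

section PowerSums

variable {ι : Type*} (s : Finset ι)

theorem sum_pow_succ_le_pow_succ_sum {a : ι → ℝ} (ha : ∀ i ∈ s, 0 ≤ a i) (n : ℕ) :
    ∑ i ∈ s, a i ^ (n + 1) ≤ (∑ i ∈ s, a i) ^ (n + 1) :=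
  calc ∑ i ∈ s, a i ^ (n + 1) ≤ ∑ i ∈ s, (∑ i ∈ s, a i) ^ n * a i :=
        Finset.sum_le_sum fun i hi => by
          rw [pow_succ]
          gcongr
          exacts [ha i hi, ha i hi, Finset.single_le_sum ha hi]
    _ = (∑ i ∈ s, a i) ^ (n + 1) := by rw [← Finset.mul_sum, pow_succ]

theorem norm_sum_pow_succ_le (z : ι → ℂ) (n : ℕ) :
    ‖∑ i ∈ s, z i‖ ^ (n + 1) ≤ (s.card : ℝ) ^ n * ∑ i ∈ s, ‖z i‖ ^ (n + 1) :=
  (pow_le_pow_left₀ (norm_nonneg _) (norm_sum_le _ _) _).trans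
    (pow_sum_le_card_mul_sum_pow (fun _ _ => norm_nonneg _) n)

end PowerSums

section BroadNarrow

variable {s : Finset ℕ} {K : ℕ} {a : ℕ → ℝ} {k : ℕ}

theorem sum_le_four_mul_of_separated_small (hs : s.card ≤ K) (ha : ∀ i, 0 ≤ a i)
    (hmax : ∀ i ∈ s, a i ≤ a k) (hsmall : ∀ i ∈ s, Separated 2 k i → K * a i ≤ a k) :
    ∑ i ∈ s, a i ≤ 4 * a k := by
  rcases s.eq_empty_or_nonempty with rfl | hne
  · simpa only [Finset.sum_empty] using mul_nonneg zero_le_four (ha k)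
  have hK : (0 : ℝ) < K := Nat.cast_pos.2 (hne.card_pos.trans_le hs)
  have hfar : ∑ i ∈ s with Separated 2 k i, a i ≤ a k :=
    calc ∑ i ∈ s with Separated 2 k i, a i
        ≤ (s.filter (Separated 2 k)).card • (a k / K) :=
          Finset.sum_le_card_nsmul _ _ _ fun i hi => by
            rw [Finset.mem_filter] at hi
            rw [le_div_iff₀ hK, mul_comm]
            exact hsmall i hi.1 hi.2
      _ ≤ K * (a k / K) := by
          rw [nsmul_eq_mul]
          gcongr
          · exact div_nonneg (ha k) hK.le
          · exact (Finset.card_filter_le _ _).trans hs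
      _ = a k := by field_simp
  have hnear : ∑ i ∈ s with ¬ Separated 2 k i, a i ≤ 3 * a k :=
    calc ∑ i ∈ s with ¬ Separated 2 k i, a i
        ≤ (s.filter fun i => ¬ Separated 2 k i).card • a k :=
          Finset.sum_le_card_nsmul _ _ _ fun i hi => hmax i (Finset.mem_of_mem_filter i hi)
      _ ≤ 3 * a k := by
          rw [nsmul_eq_mul]
          exact mul_le_mul_of_nonneg_right
            (mod_cast card_filter_not_separated_le s 2 k) (ha k)
  rw [← Finset.sum_filter_add_sum_filter_not s (Separated 2 k)]
  linarith

theorem sum_pow_six_le_of_separated_large (hs : s.card ≤ K) (ha : ∀ i, 0 ≤ a i)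
    (hmax : ∀ i ∈ s, a i ≤ a k) {j : ℕ} (hlarge : a k ≤ K * a j) :
    (∑ i ∈ s, a i) ^ 6 ≤ (K : ℝ) ^ 8 * (a j ^ 2 * a k ^ 4) := by
  have hsum : ∑ i ∈ s, a i ≤ K * a k := by
    refine (Finset.sum_le_card_nsmul s a (a k) hmax).trans ?_
    rw [nsmul_eq_mul]
    exact mul_le_mul_of_nonneg_right (Nat.cast_le.2 hs) (ha k)
  calc (∑ i ∈ s, a i) ^ 6 ≤ (K * a k) ^ 6 :=
        pow_le_pow_left₀ (Finset.sum_nonneg fun i _ => ha i) hsum 6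
    _ = K ^ 6 * a k ^ 4 * a k ^ 2 := by ring
    _ ≤ K ^ 6 * a k ^ 4 * (K * a j) ^ 2 := by
        gcongr
        exact ha k
    _ = K ^ 8 * (a j ^ 2 * a k ^ 4) := by ring

/-- The broad-narrow dichotomy: either two separated terms are within a factor `K` of the maximum,
or the neighbours of the maximum carry most of the sum. -/
theorem sum_pow_six_le_narrow_add_broad (hs : s.card ≤ K) (ha : ∀ i, 0 ≤ a i) :
    (∑ i ∈ s, a i) ^ 6 ≤ 4 ^ 6 * ∑ i ∈ s, a i ^ 6 +
      (K : ℝ) ^ 8 * ∑ i ∈ s, ∑ j ∈ s with Separated 2 i j, a i ^ 2 * a j ^ 4 := by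
  rcases s.eq_empty_or_nonempty with rfl | hne
  · simp
  obtain ⟨k, hk, hmax⟩ := Finset.exists_max_image s a hne
  have hpair : ∀ i j, 0 ≤ a i ^ 2 * a j ^ 4 := fun i j =>
    mul_nonneg (sq_nonneg _) (pow_nonneg (ha j) _)
  have hrow : ∀ i, 0 ≤ ∑ j ∈ s with Separated 2 i j, a i ^ 2 * a j ^ 4 := fun i =>
    Finset.sum_nonneg fun j _ => hpair i j
  by_cases hbroad : ∃ j ∈ s, Separated 2 j k ∧ a k ≤ K * a j
  · obtain ⟨j, hj, hjk, hlarge⟩ := hbroad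
    have hterm : a j ^ 2 * a k ^ 4 ≤
        ∑ i ∈ s, ∑ j ∈ s with Separated 2 i j, a i ^ 2 * a j ^ 4 :=
      (Finset.single_le_sum (f := fun k => a j ^ 2 * a k ^ 4) (fun i _ => hpair j i)
        (Finset.mem_filter.2 ⟨hk, hjk⟩)).trans (Finset.single_le_sum (fun i _ => hrow i) hj)
    refine (sum_pow_six_le_of_separated_large hs ha hmax hlarge).trans ?_
    refine (mul_le_mul_of_nonneg_left hterm (by positivity)).trans (le_add_of_nonneg_left ?_)
    exact mul_nonneg (by norm_num) (Finset.sum_nonneg fun i _ => pow_nonneg (ha i) _)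
  · push Not at hbroad
    have hsum := sum_le_four_mul_of_separated_small hs ha hmax fun i hi hki =>
      (hbroad i hi hki.symm).le
    calc (∑ i ∈ s, a i) ^ 6 ≤ (4 * a k) ^ 6 :=
          pow_le_pow_left₀ (Finset.sum_nonneg fun i _ => ha i) hsum 6
      _ = 4 ^ 6 * a k ^ 6 := by ring
      _ ≤ 4 ^ 6 * ∑ i ∈ s, a i ^ 6 := mul_le_mul_of_nonneg_left
          (Finset.single_le_sum (f := fun i => a i ^ 6) (fun i _ => pow_nonneg (ha i) _) hk)
          (by norm_num)
      _ ≤ _ := le_add_of_nonneg_right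
          (mul_nonneg (by positivity) (Finset.sum_nonneg fun i _ => hrow i))

end BroadNarrow

section DecouplingBound

variable {X : Type*} [MeasurableSpace X] (m : Measure X)

/-- In the `K`-adic tree over `ℕ`, the node `i`, `a` generations below some common level, and the
node `j`, `b` generations below it, have the same ancestor at that level, but their ancestors one
generation further down are not neighbours. -/
def TransversalNodes (K a i b j : ℕ) : Prop :=
  i / K ^ a = j / K ^ b ∧ Separated 2 (i / K ^ (a - 1)) (j / K ^ (b - 1))

theorem TransversalNodes.symm {K a i b j : ℕ} (h : TransversalNodes K a i b j) :
    TransversalNodes K b j a i :=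
  ⟨h.1.symm, h.2.symm⟩

/-- The orthogonality needed for decoupling: inside a block of level `L ≤ T`, products of two far
apart blocks of level `L - 2 * b` are orthogonal to the fourth power of a transversal block of
level `L - b`. -/
def TransversalOrthogonality (K P T C d : ℕ) (G : ℕ → X → ℂ) : Prop :=
  ∀ L ≤ T, ∀ b, 1 ≤ b → b ≤ d → 2 * b ≤ L → ∀ i j j' : ℕ, TransversalNodes K (2 * b) j b i →
    j / K ^ (2 * b - 1) = j' / K ^ (2 * b - 1) → Separated (C * K) j j' →
    ∫ x, blockSum K P G (L - 2 * b) j x * starRingEnd ℂ (blockSum K P G (L - 2 * b) j' x) *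
      ((‖blockSum K P G (L - b) i x‖ ^ 4 : ℝ) : ℂ) ∂m = 0

/-- The `ℓ²` decoupling inequality in `L⁶` with constant `D` for the blocks of level `L`, relative
to bounds `Q p` for the squared `L⁶` norms of the pieces. -/
def DecouplingBound (K P : ℕ) (G : ℕ → X → ℂ) (Q : ℕ → ℝ) (L : ℕ) (D : ℝ) : Prop :=
  ∀ q, ∫ x, ‖blockSum K P G L q x‖ ^ 6 ∂m ≤ D * blockSum K P Q L q ^ 3

variable {m}

theorem DecouplingBound.mono {K P L : ℕ} {G : ℕ → X → ℂ} {Q : ℕ → ℝ} (hQ : ∀ p, 0 ≤ Q p)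
    {D D' : ℝ} (h : DecouplingBound m K P G Q L D) (hD : D ≤ D') :
    DecouplingBound m K P G Q L D' := fun q =>
  (h q).trans (mul_le_mul_of_nonneg_right hD (pow_nonneg (blockSum_nonneg K P hQ L q) 3))

end DecouplingBound

section Decoupling

variable {X : Type*} [TopologicalSpace X] [SecondCountableTopology X] [MeasurableSpace X]
  [BorelSpace X] {m : Measure X} [IsFiniteMeasure m]
  {K P T C d n L : ℕ} {G : ℕ → X → ℂ} {Q : ℕ → ℝ} {B z : ℝ}

theorem bilinear_le_of_descendants_le (hG : ∀ p, BddContinuous (G p))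
    (horth : TransversalOrthogonality m K P T C d G) {a b i j : ℕ} {A : ℝ} (hL : L ≤ T)
    (hb : 1 ≤ b) (hbd : b ≤ d) (hbL : 2 * b ≤ L) (ha : 1 ≤ a) (hab : a ≤ 2 * b)
    (hij : TransversalNodes K a i b j)
    (hchild : ∀ i', TransversalNodes K (2 * b) i' b j →
      ∫ x, ‖blockSum K P G (L - 2 * b) i' x‖ ^ 2 * ‖blockSum K P G (L - b) j x‖ ^ 4 ∂m ≤
        A * (blockSum K P Q (L - 2 * b) i' * blockSum K P Q (L - b) j ^ 2)) :
    ∫ x, ‖blockSum K P G (L - a) i x‖ ^ 2 * ‖blockSum K P G (L - b) j x‖ ^ 4 ∂m ≤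
      2 * C * K * A * (blockSum K P Q (L - a) i * blockSum K P Q (L - b) j ^ 2) := by
  obtain ⟨k, hk⟩ : ∃ k, 2 * b = k + a := ⟨2 * b - a, by omega⟩
  have hLa : L - a = L - 2 * b + k := by omega
  set J : Finset ℕ := {i' ∈ Finset.range P | i' / K ^ k = i}
  have hanc : ∀ i' ∈ J, ∀ c, i' / K ^ (k + c) = i / K ^ c := fun i' hi' c => by
    rw [pow_add, ← Nat.div_div_eq_div_mul, (Finset.mem_filter.1 hi').2]
  have htop : 2 * b - 1 = k + (a - 1) := by omega
  have htrans : ∀ i' ∈ J, TransversalNodes K (2 * b) i' b j := fun i' hi' => by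
    rwa [TransversalNodes, htop, hk, hanc i' hi', hanc i' hi']
  calc ∫ x, ‖blockSum K P G (L - a) i x‖ ^ 2 * ‖blockSum K P G (L - b) j x‖ ^ 4 ∂m
      ≤ 2 * (C * K : ℕ) * ∑ i' ∈ J, ∫ x, ‖blockSum K P G (L - 2 * b) i' x‖ ^ 2 *
          ‖blockSum K P G (L - b) j x‖ ^ 4 ∂m := by
        simp only [hLa, blockSum_apply_add]
        refine integral_norm_sum_sq_mul_le_of_separated m J (by fun_prop)
          (w := fun x => ‖blockSum K P G (L - b) j x‖ ^ 4) (by fun_prop)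
          (fun x => by positivity) (C * K) fun i' hi' i'' hi'' hfar =>
            horth L hL b hb hbd hbL j i' i'' (htrans i' hi') ?_ hfar
        rw [htop, hanc i' hi', hanc i'' hi'']
    _ ≤ 2 * (C * K : ℕ) * ∑ i' ∈ J,
          A * (blockSum K P Q (L - 2 * b) i' * blockSum K P Q (L - b) j ^ 2) := by
        gcongr with i' hi'
        exact hchild i' (htrans i' hi')
    _ = 2 * C * K * A * (blockSum K P Q (L - a) i * blockSum K P Q (L - b) j ^ 2) := by
        rw [hLa, blockSum_add, ← Finset.mul_sum, ← Finset.sum_mul]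
        push_cast
        ring

theorem bilinear_le_of_swap_le (hG : ∀ p, BddContinuous (G p)) (hQ : ∀ p, 0 ≤ Q p)
    {e f i j : ℕ} {A D : ℝ} (hA : 0 ≤ A) (hf : DecouplingBound m K P G Q f D)
    (hswap : ∫ x, ‖blockSum K P G f j x‖ ^ 2 * ‖blockSum K P G e i x‖ ^ 4 ∂m ≤
      A ^ 2 / D * (blockSum K P Q f j * blockSum K P Q e i ^ 2)) (hD : 0 < D) :
    ∫ x, ‖blockSum K P G e i x‖ ^ 2 * ‖blockSum K P G f j x‖ ^ 4 ∂m ≤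
      A * (blockSum K P Q e i * blockSum K P Q f j ^ 2) := by
  have hS := fun l q => blockSum_nonneg K P hQ l q
  refine le_of_sq_le_sq ?_ (mul_nonneg hA (mul_nonneg (hS _ _) (pow_nonneg (hS _ _) 2)))
  calc (∫ x, ‖blockSum K P G e i x‖ ^ 2 * ‖blockSum K P G f j x‖ ^ 4 ∂m) ^ 2
      ≤ (∫ x, ‖blockSum K P G f j x‖ ^ 2 * ‖blockSum K P G e i x‖ ^ 4 ∂m) *
          ∫ x, ‖blockSum K P G f j x‖ ^ 6 ∂m :=
        sq_integral_norm_sq_mul_norm_pow_four_le m (by fun_prop) (by fun_prop)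
    _ ≤ A ^ 2 / D * (blockSum K P Q f j * blockSum K P Q e i ^ 2) *
          (D * blockSum K P Q f j ^ 3) :=
        mul_le_mul hswap (hf j) (integral_nonneg fun x => by positivity)
          (mul_nonneg (by positivity) (mul_nonneg (hS _ _) (pow_nonneg (hS _ _) 2)))
    _ = (A * (blockSum K P Q e i * blockSum K P Q f j ^ 2)) ^ 2 := by
        field_simp

/-- Each step doubles the depth of the finer block: orthogonality passes to its descendants, and
Cauchy–Schwarz exchanges the roles of the two blocks at the cost of a square root, while gaining
`z ^ b` from the decoupling bound at the lower level. -/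
theorem bilinear_decoupling (hG : ∀ p, BddContinuous (G p)) (hK : 1 ≤ K) (hC : 1 ≤ C)
    (horth : TransversalOrthogonality m K P T C d G) (hQ : ∀ p, 0 ≤ Q p) (hB : 0 < B)
    (hz : 1 ≤ z) (hL : L ≤ T) (ih : ∀ l < L, DecouplingBound m K P G Q l (B * z ^ (2 * l)))
    (N a b i j : ℕ) (hb : 1 ≤ b) (hbL : b * 2 ^ N ≤ L) (hbd : b * 2 ^ N ≤ d) (ha : 1 ≤ a)
    (hab : a ≤ 2 * b) (hij : TransversalNodes K a i b j) :
    ∫ x, ‖blockSum K P G (L - a) i x‖ ^ 2 * ‖blockSum K P G (L - b) j x‖ ^ 4 ∂m ≤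
      (2 * C * K) ^ 2 * B * z ^ (2 * L) / z ^ (b * N) *
        (blockSum K P Q (L - a) i * blockSum K P Q (L - b) j ^ 2) := by
  have hS := fun l q => blockSum_nonneg K P hQ l q
  have : 0 < z := by linarith
  have hCK : (1 : ℝ) ≤ 2 * C * K := by
    exact_mod_cast Nat.mul_pos (Nat.mul_pos two_pos hC) hK
  induction N generalizing a b i j with
  | zero =>
    have hlower : ∀ l < L, DecouplingBound m K P G Q l ((2 * C * K) ^ 2 * B * z ^ (2 * L)) :=
      fun l hl => (ih l hl).mono hQ <| mul_le_mul
        (le_mul_of_one_le_left hB.le (one_le_pow₀ hCK)) (pow_le_pow_right₀ hz (by omega))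
        (by positivity) (by positivity)
    rw [mul_zero, pow_zero, div_one]
    exact integral_norm_sq_mul_norm_pow_four_le m (by fun_prop) (by fun_prop) (by positivity)
      (hS _ _) (hS _ _) (hlower _ (by omega) i) (hlower _ (by omega) j)
  | succ N IH =>
    have hbN : b * 2 ≤ b * 2 ^ (N + 1) := Nat.mul_le_mul_left b (by
      rw [pow_succ]; have := Nat.one_le_two_pow (n := N); omega)
    have hdouble : 2 * b * 2 ^ N = b * 2 ^ (N + 1) := by ring
    have hbL2 : z ^ (2 * L) = z ^ (2 * (L - b)) * z ^ (2 * b) := by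
      rw [← pow_add]; congr 1; omega
    refine (bilinear_le_of_descendants_le hG horth
      (A := (2 * C * K) * B * z ^ (2 * L) / z ^ (b * (N + 1))) hL hb (by omega) (by omega) ha hab
      hij fun i' hi' => ?_).trans_eq (by ring)
    refine bilinear_le_of_swap_le hG hQ (by positivity) (ih (L - b) (by omega)) ?_ (by positivity)
    convert IH b (2 * b) j i' (by omega) (by omega) (by omega) hb (by omega) hi'.symm using 2
    rw [hbL2, mul_add, pow_add, mul_one, mul_comm 2 b, pow_mul z b 2,
      show b * 2 * N = b * N * 2 by ring, pow_mul z (b * N) 2]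
    field_simp

theorem decouplingBound_of_small_level (hG : ∀ p, BddContinuous (G p)) (hK : 1 ≤ K)
    (hQ : ∀ p, 0 ≤ Q p) (hGQ : ∀ p, ∫ x, ‖G p x‖ ^ 6 ∂m ≤ Q p ^ 3) (L : ℕ) :
    DecouplingBound m K P G Q L ((K : ℝ) ^ (5 * L)) := fun q => by
  set J : Finset ℕ := {p ∈ Finset.range P | p / K ^ L = q}
  have hcard : (J.card : ℝ) ^ 5 ≤ (K : ℝ) ^ (5 * L) := by
    rw [mul_comm, pow_mul]
    gcongr
    exact_mod_cast card_filter_div_eq_le _ (pow_pos hK L) q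
  calc ∫ x, ‖blockSum K P G L q x‖ ^ 6 ∂m
      ≤ ∫ x, (J.card : ℝ) ^ 5 * ∑ p ∈ J, ‖G p x‖ ^ 6 ∂m := by
        refine integral_mono (BddContinuous.integrable (by fun_prop))
          (BddContinuous.integrable (by fun_prop)) fun x => ?_
        simpa only [blockSum, Finset.sum_apply] using norm_sum_pow_succ_le J (fun p => G p x) 5
    _ = (J.card : ℝ) ^ 5 * ∑ p ∈ J, ∫ x, ‖G p x‖ ^ 6 ∂m := by
        rw [integral_const_mul,
          integral_finsetSum _ fun p _ => BddContinuous.integrable (by fun_prop)]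
    _ ≤ (K : ℝ) ^ (5 * L) * blockSum K P Q L q ^ 3 :=
        mul_le_mul hcard ((Finset.sum_le_sum fun p _ => hGQ p).trans
          (sum_pow_succ_le_pow_succ_sum _ (fun p _ => hQ p) 2))
          (Finset.sum_nonneg fun p _ => integral_nonneg fun x => by positivity) (by positivity)

theorem integral_norm_blockSum_succ_le (hG : ∀ p, BddContinuous (G p)) (hK : 1 ≤ K) (l q : ℕ) :
    ∫ x, ‖blockSum K P G (l + 1) q x‖ ^ 6 ∂m ≤
      4 ^ 6 * ∑ i ∈ Finset.range P with i / K ^ 1 = q, ∫ x, ‖blockSum K P G l i x‖ ^ 6 ∂m +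
      (K : ℝ) ^ 8 * ∑ i ∈ Finset.range P with i / K ^ 1 = q,
        ∑ j ∈ {j ∈ Finset.range P | j / K ^ 1 = q} with Separated 2 i j,
          ∫ x, ‖blockSum K P G l i x‖ ^ 2 * ‖blockSum K P G l j x‖ ^ 4 ∂m := by
  set J : Finset ℕ := {i ∈ Finset.range P | i / K ^ 1 = q}
  have hcard : J.card ≤ K :=
    (card_filter_div_eq_le _ (pow_pos hK 1) q).trans_eq (pow_one K)
  calc ∫ x, ‖blockSum K P G (l + 1) q x‖ ^ 6 ∂m
      ≤ ∫ x, (4 ^ 6 * ∑ i ∈ J, ‖blockSum K P G l i x‖ ^ 6 + (K : ℝ) ^ 8 *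
          ∑ i ∈ J, ∑ j ∈ J with Separated 2 i j,
            ‖blockSum K P G l i x‖ ^ 2 * ‖blockSum K P G l j x‖ ^ 4) ∂m := by
        refine integral_mono (BddContinuous.integrable (by fun_prop))
          (BddContinuous.integrable (by fun_prop)) fun x => ?_
        simp only [blockSum_apply_add]
        exact (pow_le_pow_left₀ (norm_nonneg _) (norm_sum_le _ _) 6).trans
          (sum_pow_six_le_narrow_add_broad hcard fun i => norm_nonneg _)
    _ = _ := by
        rw [integral_add (BddContinuous.integrable (by fun_prop))
          (BddContinuous.integrable (by fun_prop)), integral_const_mul, integral_const_mul,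
          integral_finsetSum _ fun i _ => BddContinuous.integrable (by fun_prop),
          integral_finsetSum _ fun i _ => BddContinuous.integrable (by fun_prop)]
        congr! 3 with i
        exact integral_finsetSum _ fun j _ => BddContinuous.integrable (by fun_prop)

theorem DecouplingBound.succ (hG : ∀ p, BddContinuous (G p)) (hK : 1 ≤ K) (hQ : ∀ p, 0 ≤ Q p)
    {l : ℕ} {D A : ℝ} (hD : 0 ≤ D) (hA : 0 ≤ A) (hl : DecouplingBound m K P G Q l D)
    (hbil : ∀ i j, i / K = j / K → Separated 2 i j →
      ∫ x, ‖blockSum K P G l i x‖ ^ 2 * ‖blockSum K P G l j x‖ ^ 4 ∂m ≤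
        A * (blockSum K P Q l i * blockSum K P Q l j ^ 2)) :
    DecouplingBound m K P G Q (l + 1) (4 ^ 6 * D + (K : ℝ) ^ 8 * A) := fun q => by
  have hS := fun i => blockSum_nonneg K P hQ l i
  refine (integral_norm_blockSum_succ_le hG hK l q).trans ?_
  rw [blockSum_add, add_mul, mul_assoc, mul_assoc]
  simp only [pow_one]
  set J : Finset ℕ := {i ∈ Finset.range P | i / K = q}
  have hJ : ∀ {i}, i ∈ J → i / K = q := fun hi => (Finset.mem_filter.1 hi).2
  gcongr
  · calc ∑ i ∈ J, ∫ x, ‖blockSum K P G l i x‖ ^ 6 ∂m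
        ≤ ∑ i ∈ J, D * blockSum K P Q l i ^ 3 := Finset.sum_le_sum fun i _ => hl i
      _ ≤ D * (∑ i ∈ J, blockSum K P Q l i) ^ 3 := by
          rw [← Finset.mul_sum]
          gcongr
          exact sum_pow_succ_le_pow_succ_sum _ (fun i _ => hS i) 2
  · calc ∑ i ∈ J, ∑ j ∈ J with Separated 2 i j,
          ∫ x, ‖blockSum K P G l i x‖ ^ 2 * ‖blockSum K P G l j x‖ ^ 4 ∂m
        ≤ ∑ i ∈ J, ∑ j ∈ J with Separated 2 i j,
            A * (blockSum K P Q l i * blockSum K P Q l j ^ 2) :=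
          Finset.sum_le_sum fun i hi => Finset.sum_le_sum fun j hj => by
            rw [Finset.mem_filter] at hj
            exact hbil i j ((hJ hi).trans (hJ hj.1).symm) hj.2
      _ ≤ ∑ i ∈ J, ∑ j ∈ J, A * (blockSum K P Q l i * blockSum K P Q l j ^ 2) :=
          Finset.sum_le_sum fun i _ => Finset.sum_le_sum_of_subset_of_nonneg
            (Finset.filter_subset _ _) fun j _ _ =>
              mul_nonneg hA (mul_nonneg (hS i) (pow_nonneg (hS j) 2))
      _ = A * ((∑ i ∈ J, blockSum K P Q l i) * ∑ j ∈ J, blockSum K P Q l j ^ 2) := by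
          rw [Finset.sum_mul_sum, Finset.mul_sum]
          simp only [Finset.mul_sum]
      _ ≤ A * (∑ i ∈ J, blockSum K P Q l i) ^ 3 := by
          rw [pow_succ' _ 2]
          gcongr
          · exact Finset.sum_nonneg fun i _ => hS i
          · exact sum_pow_succ_le_pow_succ_sum _ (fun i _ => hS i) 1

theorem decouplingBound_of_transversalOrthogonality (hG : ∀ p, BddContinuous (G p)) (hK : 1 ≤ K)
    (hC : 1 ≤ C) (horth : TransversalOrthogonality m K P T C (2 ^ n) G) (hQ : ∀ p, 0 ≤ Q p)
    (hGQ : ∀ p, ∫ x, ‖G p x‖ ^ 6 ∂m ≤ Q p ^ 3) (hz : 1 ≤ z)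
    (hsmall : 4 ^ 6 / z ^ 2 + (K : ℝ) ^ 8 * (2 * C * K) ^ 2 / z ^ n ≤ 1) (hL : L ≤ T) :
    DecouplingBound m K P G Q L ((K : ℝ) ^ (5 * 2 ^ n) * z ^ (2 * L)) := by
  have : 0 < z := by linarith
  have hK1 : (1 : ℝ) ≤ K := Nat.one_le_cast.2 hK
  induction L using Nat.strong_induction_on with
  | _ L ih =>
  rcases lt_or_ge L (2 ^ n) with hLn | hLn
  · refine (decouplingBound_of_small_level hG hK hQ hGQ L).mono hQ ?_
    exact (pow_le_pow_right₀ hK1 (by omega)).trans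
      (le_mul_of_one_le_right (by positivity) (one_le_pow₀ hz))
  obtain ⟨l, rfl⟩ : ∃ l, L = l + 1 :=
    ⟨L - 1, by have := Nat.one_le_two_pow (n := n); omega⟩
  set B : ℝ := (K : ℝ) ^ (5 * 2 ^ n)
  have hlower : ∀ k < l + 1, DecouplingBound m K P G Q k (B * z ^ (2 * k)) :=
    fun k hk => ih k hk (by omega)
  have hstep := (hlower l l.lt_succ_self).succ hG hK hQ
    (A := (2 * C * K) ^ 2 * B * z ^ (2 * (l + 1)) / z ^ n) (by positivity) (by positivity)
    fun i j hij hsep => by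
      have hnodes : TransversalNodes K 1 i 1 j := by
        simpa only [TransversalNodes, pow_one, Nat.sub_self, pow_zero, Nat.div_one] using
          ⟨hij, hsep⟩
      simpa only [Nat.add_sub_cancel, one_mul] using bilinear_decoupling hG hK hC horth hQ
        (by positivity) hz hL hlower n 1 1 i j le_rfl (by omega) (by omega) le_rfl (by omega)
        hnodes
  refine hstep.mono hQ ?_
  calc 4 ^ 6 * (B * z ^ (2 * l)) +
        (K : ℝ) ^ 8 * ((2 * C * K) ^ 2 * B * z ^ (2 * (l + 1)) / z ^ n)
      = (4 ^ 6 / z ^ 2 + (K : ℝ) ^ 8 * (2 * C * K) ^ 2 / z ^ n) *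
          (B * z ^ (2 * (l + 1))) := by
        rw [show 2 * (l + 1) = 2 * l + 2 by ring, pow_add]
        field_simp
    _ ≤ B * z ^ (2 * (l + 1)) := mul_le_of_le_one_left (by positivity) hsmall

end Decoupling

section Geometry

variable {V : Type*} [NormedAddCommGroup V] [InnerProductSpace ℝ V]

theorem exists_le_abs_inner_near_diagonal {X : Type*} [PseudoMetricSpace X] {s : Set X}
    (hs : IsCompact s) {e g : X → V} (he : ContinuousOn e s) (hg : ContinuousOn g s)
    (hne : ∀ x ∈ s, ⟪e x, g x⟫ ≠ 0) :
    ∃ c > 0, ∃ h > 0, ∀ x ∈ s, ∀ y ∈ s, dist y x ≤ h → c ≤ |⟪e x, g y⟫| := by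
  rcases s.eq_empty_or_nonempty with rfl | hnon
  · exact ⟨1, one_pos, 1, one_pos, fun x hx => hx.elim⟩
  obtain ⟨x₀, hx₀, hmin⟩ := hs.exists_isMinOn hnon (he.inner (𝕜 := ℝ) hg).abs
  have hpos : 0 < |⟪e x₀, g x₀⟫| := abs_pos.2 (hne x₀ hx₀)
  have huc := (hs.prod hs).uniformContinuousOn_of_continuous
    ((he.comp continuousOn_fst fun _ hp => hp.1).inner (𝕜 := ℝ)
      (hg.comp continuousOn_snd fun _ hp => hp.2))
  obtain ⟨h, hh, H⟩ :=
    Metric.uniformContinuousOn_iff_le.1 huc (|⟪e x₀, g x₀⟫| / 2) (half_pos hpos)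
  refine ⟨|⟪e x₀, g x₀⟫| / 2, half_pos hpos, h, hh, fun x hx y hy hd => ?_⟩
  have hclose : |⟪e x, g y⟫ - ⟪e x, g x⟫| ≤ |⟪e x₀, g x₀⟫| / 2 :=
    H (x, y) ⟨hx, hy⟩ (x, x) ⟨hx, hx⟩ (by simpa [Prod.dist_eq] using hd)
  have hdiag : |⟪e x₀, g x₀⟫| ≤ |⟪e x, g x⟫| := hmin hx
  rw [abs_sub_comm] at hclose
  linarith [abs_sub_abs_le_abs_sub ⟪e x, g x⟫ ⟪e x, g y⟫]

theorem exists_pos_norm_smul_le_one {X : Type*} [TopologicalSpace X] {s : Set X}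
    (hs : IsCompact s) {f : X → V} (hf : ContinuousOn f s) :
    ∃ r > (0 : ℝ), ∀ x ∈ s, ‖r • f x‖ ≤ 1 := by
  obtain ⟨M, hM⟩ := hs.exists_bound_of_continuousOn hf
  have hpos : 0 < max 1 M := one_pos.trans_le (le_max_left _ _)
  refine ⟨(max 1 M)⁻¹, inv_pos.2 hpos, fun x hx => ?_⟩
  rw [norm_smul, norm_inv, Real.norm_of_nonneg hpos.le, inv_mul_le_iff₀ hpos, mul_one]
  exact (hM x hx).trans (le_max_right _ _)

theorem exists_sub_eq_deriv_mul {φ φ' : ℝ → ℝ} (hφ : ∀ t, HasDerivAt φ (φ' t) t) (s t : ℝ) :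
    ∃ ζ ∈ uIcc s t, φ s - φ t = φ' ζ * (s - t) := by
  wlog hst : s ≤ t generalizing s t
  · obtain ⟨ζ, hζ, h⟩ := this t s (le_of_not_ge hst)
    exact ⟨ζ, uIcc_comm t s ▸ hζ, by linarith⟩
  rcases hst.eq_or_lt with rfl | hlt
  · exact ⟨s, left_mem_uIcc, by simp⟩
  obtain ⟨ζ, hζ, h⟩ := exists_hasDerivAt_eq_slope φ φ' hlt
    (fun x _ => (hφ x).continuousAt.continuousWithinAt) fun x _ => hφ x
  refine ⟨ζ, Icc_subset_uIcc ⟨hζ.1.le, hζ.2.le⟩, ?_⟩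
  rw [eq_div_iff (sub_pos.2 hlt).ne'] at h
  linarith

theorem mul_le_abs_sub_of_le_abs_deriv {φ φ' : ℝ → ℝ} (hφ : ∀ t, HasDerivAt φ (φ' t) t)
    {c s t : ℝ} (h : ∀ ζ ∈ uIcc s t, c ≤ |φ' ζ|) : c * |s - t| ≤ |φ s - φ t| := by
  obtain ⟨ζ, hζ, hmean⟩ := exists_sub_eq_deriv_mul hφ s t
  rw [hmean, abs_mul]
  exact mul_le_mul_of_nonneg_right (h ζ hζ) (abs_nonneg _)

theorem abs_sub_le_mul_of_abs_deriv_le {φ φ' : ℝ → ℝ} (hφ : ∀ t, HasDerivAt φ (φ' t) t)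
    {C s t : ℝ} (h : ∀ ζ ∈ uIcc s t, |φ' ζ| ≤ C) : |φ s - φ t| ≤ C * |s - t| := by
  obtain ⟨ζ, hζ, hmean⟩ := exists_sub_eq_deriv_mul hφ s t
  rw [hmean, abs_mul]
  exact mul_le_mul_of_nonneg_right (h ζ hζ) (abs_nonneg _)

theorem abs_sub_le_of_mem_uIcc {s t u h z : ℝ} (hs : |s - u| ≤ h) (ht : |t - u| ≤ h)
    (hz : z ∈ uIcc s t) : |z - u| ≤ h := by
  rw [← Real.dist_eq, ← mem_closedBall] at *
  rw [Real.closedBall_eq_Icc] at *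
  exact uIcc_subset_Icc hs ht hz

/-- Quantitative nondegeneracy of the cone over the curve `γ` along `I`: at each `θ`, the vector
`e θ` is normal to the cone, so that it sees the curvature of `γ` to second order, and `f θ` is
orthogonal to the ruling `γ θ` but sees `γ` to first order.  All bounds hold for parameters at
distance at most `h`. -/
structure ConeFrame (γ : ℝ → V) (I : Set ℝ) where
  e : ℝ → V
  f : ℝ → V
  c : ℝ
  C : ℝ
  h : ℝ
  c_pos : 0 < c
  C_pos : 0 < C
  h_pos : 0 < h
  norm_e : ∀ θ ∈ I, ‖e θ‖ ≤ 1
  norm_f : ∀ θ ∈ I, ‖f θ‖ ≤ 1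
  inner_f_self : ∀ θ ∈ I, ⟪f θ, γ θ⟫ = 0
  le_inner_f : ∀ θ' ∈ I, ∀ θ ∈ I, |θ - θ'| ≤ h → c * |θ - θ'| ≤ |⟪f θ', γ θ⟫|
  inner_e_le : ∀ θ' ∈ I, ∀ θ ∈ I, |θ - θ'| ≤ h → |⟪e θ', γ θ⟫| ≤ C * (θ - θ') ^ 2
  le_inner_e : ∀ θ' ∈ I, ∀ θ₁ ∈ I, ∀ θ₂ ∈ I, |θ₁ - θ'| ≤ h → |θ₂ - θ'| ≤ h →
    ∀ s, (∀ θ ∈ uIcc θ₁ θ₂, s ≤ |θ - θ'|) →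
      c * s * |θ₁ - θ₂| ≤ |⟪e θ', γ θ₁⟫ - ⟪e θ', γ θ₂⟫|

section Fields

variable {γ γ' γ'' e f : ℝ → V} {I : Set ℝ} [I.OrdConnected]

theorem abs_inner_le_mul_sq (hγ : ∀ t, HasDerivAt γ (γ' t) t)
    (hγ' : ∀ t, HasDerivAt γ' (γ'' t) t) {M : ℝ} (hM : ∀ θ ∈ I, ‖γ'' θ‖ ≤ M) {v : V}
    (hv : ‖v‖ ≤ 1) {θ' θ : ℝ} (hθ' : θ' ∈ I) (hθ : θ ∈ I) (h₀ : ⟪v, γ θ'⟫ = 0)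
    (h₁ : ⟪v, γ' θ'⟫ = 0) : |⟪v, γ θ⟫| ≤ M * (θ - θ') ^ 2 := by
  have hM0 : 0 ≤ M := (norm_nonneg _).trans (hM θ hθ)
  have hfirst : ∀ ζ ∈ uIcc θ θ', |⟪v, γ' ζ⟫| ≤ M * |θ - θ'| := fun ζ hζ => by
    have hsub := Set.OrdConnected.uIcc_subset ‹_› (Set.OrdConnected.uIcc_subset ‹_› hθ hθ' hζ) hθ'
    have := abs_sub_le_mul_of_abs_deriv_le (C := M) (s := ζ) (t := θ')
      (fun t => (hasDerivAt_const t v).inner ℝ (hγ' t)) fun ξ hξ => by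
        simp only [inner_zero_left, add_zero]
        exact (abs_real_inner_le_norm _ _).trans ((mul_le_of_le_one_left (norm_nonneg _) hv).trans
          (hM ξ (hsub hξ)))
    rw [h₁, sub_zero] at this
    exact this.trans (mul_le_mul_of_nonneg_left
      (abs_sub_le_of_mem_uIcc le_rfl (by simp) hζ) hM0)
  have := abs_sub_le_mul_of_abs_deriv_le (fun t => (hasDerivAt_const t v).inner ℝ (hγ t))
    (s := θ) (t := θ') (by simpa only [inner_zero_left, add_zero] using hfirst)
  rwa [h₀, sub_zero, mul_assoc, ← sq, sq_abs] at this

theorem mul_abs_sub_le_abs_inner_sub {h : ℝ} (hγ : ∀ t, HasDerivAt γ (γ' t) t) {v : V} {c : ℝ}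
    {θ' : ℝ} (hv : ∀ θ ∈ I, |θ - θ'| ≤ h → c ≤ |⟪v, γ' θ⟫|) {θ₁ θ₂ : ℝ} (hθ₁ : θ₁ ∈ I)
    (hθ₂ : θ₂ ∈ I) (hd₁ : |θ₁ - θ'| ≤ h) (hd₂ : |θ₂ - θ'| ≤ h) :
    c * |θ₁ - θ₂| ≤ |⟪v, γ θ₁⟫ - ⟪v, γ θ₂⟫| := by
  refine mul_le_abs_sub_of_le_abs_deriv (fun t => (hasDerivAt_const t v).inner ℝ (hγ t))
    fun ζ hζ => ?_
  simp only [inner_zero_left, add_zero]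
  exact hv ζ (Set.OrdConnected.uIcc_subset ‹_› hθ₁ hθ₂ hζ) (abs_sub_le_of_mem_uIcc hd₁ hd₂ hζ)

theorem nonempty_coneFrame_of_fields (hI : IsCompact I) (hγ : ∀ t, HasDerivAt γ (γ' t) t)
    (hγ' : ∀ t, HasDerivAt γ' (γ'' t) t) (hγ'' : ContinuousOn γ'' I) (he : ContinuousOn e I)
    (hf : ContinuousOn f I) (he1 : ∀ θ ∈ I, ‖e θ‖ ≤ 1) (hf1 : ∀ θ ∈ I, ‖f θ‖ ≤ 1)
    (heγ : ∀ θ ∈ I, ⟪e θ, γ θ⟫ = 0) (heγ' : ∀ θ ∈ I, ⟪e θ, γ' θ⟫ = 0)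
    (heγ'' : ∀ θ ∈ I, ⟪e θ, γ'' θ⟫ ≠ 0) (hfγ : ∀ θ ∈ I, ⟪f θ, γ θ⟫ = 0)
    (hfγ' : ∀ θ ∈ I, ⟪f θ, γ' θ⟫ ≠ 0) : Nonempty (ConeFrame γ I) := by
  have hγ'c : ContinuousOn γ' I := fun t _ => (hγ' t).continuousAt.continuousWithinAt
  obtain ⟨c₁, hc₁, h₁, hh₁, H₁⟩ := exists_le_abs_inner_near_diagonal hI he hγ'' heγ''
  obtain ⟨c₂, hc₂, h₂, hh₂, H₂⟩ := exists_le_abs_inner_near_diagonal hI hf hγ'c hfγ'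
  obtain ⟨M, hM⟩ := hI.exists_bound_of_continuousOn hγ''
  have hcurv : ∀ θ' ∈ I, ∀ θ ∈ I, |θ - θ'| ≤ h₁ → c₁ * |θ - θ'| ≤ |⟪e θ', γ' θ⟫| :=
    fun θ' hθ' θ hθ hd => by
      simpa [heγ' θ' hθ'] using
        mul_abs_sub_le_abs_inner_sub hγ' (H₁ θ' hθ') hθ hθ' hd (by simpa using hh₁.le)
  refine ⟨⟨e, f, min c₁ c₂, max 1 M, min h₁ h₂, by positivity, by positivity, by positivity,
    he1, hf1, hfγ, fun θ' hθ' θ hθ hd => ?_, fun θ' hθ' θ hθ _ => ?_,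
    fun θ' hθ' θ₁ hθ₁ θ₂ hθ₂ hd₁ hd₂ s hs => ?_⟩⟩
  · simpa [hfγ θ' hθ'] using mul_abs_sub_le_abs_inner_sub hγ
      (fun ζ hζ hd => (min_le_right c₁ c₂).trans (H₂ θ' hθ' ζ hζ (hd.trans (min_le_right h₁ h₂))))
      hθ hθ' hd (by simpa using ⟨hh₁.le, hh₂.le⟩)
  · exact abs_inner_le_mul_sq hγ hγ' (fun ζ hζ => (hM ζ hζ).trans (le_max_right _ _))
      (he1 θ' hθ') hθ' hθ (heγ θ' hθ') (heγ' θ' hθ')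
  · refine mul_le_abs_sub_of_le_abs_deriv (fun t => (hasDerivAt_const t (e θ')).inner ℝ (hγ t))
      fun ζ hζ => ?_
    simp only [inner_zero_left, add_zero]
    have hζI := Set.OrdConnected.uIcc_subset ‹_› hθ₁ hθ₂ hζ
    have hζd := (abs_sub_le_of_mem_uIcc hd₁ hd₂ hζ).trans (min_le_left h₁ h₂)
    calc min c₁ c₂ * s ≤ min c₁ c₂ * |ζ - θ'| :=
          mul_le_mul_of_nonneg_left (hs ζ hζ) (by positivity)
      _ ≤ c₁ * |ζ - θ'| := mul_le_mul_of_nonneg_right (min_le_left _ _) (abs_nonneg _)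
      _ ≤ |⟪e θ', γ' ζ⟫| := hcurv θ' hθ' ζ hζI hζd

end Fields

open scoped Matrix

/-- The cross product on `E3`, transported from Mathlib's cross product on `Fin 3 → ℝ`. -/
def cross (u v : E3) : E3 := WithLp.toLp 2 (u.ofLp ⨯₃ v.ofLp)

theorem continuous_cross {X : Type*} [TopologicalSpace X] {u v : X → E3} (hu : Continuous u)
    (hv : Continuous v) : Continuous fun x => cross (u x) (v x) := by
  refine (PiLp.continuous_toLp 2 _).comp ?_
  simp only [cross_apply]
  fun_prop

theorem inner_cross (u v w : E3) : ⟪cross u v, w⟫ = w.ofLp ⬝ᵥ u.ofLp ⨯₃ v.ofLp := by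
  simp [cross, EuclideanSpace.inner_eq_star_dotProduct]

theorem inner_cross_left (u v : E3) : ⟪cross u v, u⟫ = 0 := by
  rw [inner_cross, dot_self_cross]

theorem inner_cross_right (u v : E3) : ⟪cross u v, v⟫ = 0 := by
  rw [inner_cross, dot_cross_self]

theorem inner_cross_ne_zero {u v w : E3} (h : LinearIndependent ℝ ![u, v, w]) :
    ⟪cross u v, w⟫ ≠ 0 := by
  rw [inner_cross, triple_product_permutation, triple_product_eq_det]
  have hrows := h.map' (WithLp.linearEquiv 2 ℝ (Fin 3 → ℝ)).toLinearMap (LinearEquiv.ker _)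
  have hlist : ![u.ofLp, v.ofLp, w.ofLp] = fun i => (![u, v, w] i).ofLp := by
    ext i; fin_cases i <;> rfl
  rw [hlist]
  exact ((Matrix.isUnit_iff_isUnit_det _).1
    (Matrix.linearIndependent_rows_iff_isUnit.1 hrows)).ne_zero

theorem nonempty_coneFrame {γ : ℝ → E3} (hγ : ContDiff ℝ 2 γ) {I : Set ℝ} [I.OrdConnected]
    (hI : IsCompact I)
    (hnd : ∀ θ ∈ I, LinearIndependent ℝ ![γ θ, deriv γ θ, deriv (deriv γ) θ]) :
    Nonempty (ConeFrame γ I) := by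
  have hγ1 : ContDiff ℝ 1 (deriv γ) := (contDiff_succ_iff_deriv (n := 1).1 hγ).2.2
  have hc2 : Continuous (deriv (deriv γ)) := hγ1.continuous_deriv le_rfl
  have he := continuous_cross hγ.continuous hγ1.continuous
  have hf := continuous_cross hγ.continuous hc2
  obtain ⟨r, hr, her⟩ := exists_pos_norm_smul_le_one hI he.continuousOn
  obtain ⟨s, hs, hfs⟩ := exists_pos_norm_smul_le_one hI hf.continuousOn
  have hswap : ∀ θ ∈ I, LinearIndependent ℝ ![γ θ, deriv (deriv γ) θ, deriv γ θ] := fun θ hθ => by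
    convert (hnd θ hθ).comp _ (Equiv.swap (1 : Fin 3) 2).injective using 1
    ext i : 1; fin_cases i <;> rfl
  refine nonempty_coneFrame_of_fields hI
    (fun t => (hγ.differentiable (by norm_num) t).hasDerivAt)
    (fun t => (hγ1.differentiable (by norm_num) t).hasDerivAt) hc2.continuousOn
    (he.const_smul r).continuousOn (hf.const_smul s).continuousOn her hfs
    (fun θ _ => ?_) (fun θ _ => ?_) (fun θ hθ => ?_) (fun θ _ => ?_) fun θ hθ => ?_
  all_goals rw [Pi.smul_apply, real_inner_smul_left]
  · rw [inner_cross_left, mul_zero]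
  · rw [inner_cross_right, mul_zero]
  · exact mul_ne_zero hr.ne' (inner_cross_ne_zero (hnd θ hθ))
  · rw [inner_cross_left, mul_zero]
  · exact mul_ne_zero hs.ne' (inner_cross_ne_zero (hswap θ hθ))

end Geometry

section Spectrum

open scoped Pointwise

variable {V : Type*} [NormedAddCommGroup V] [InnerProductSpace ℝ V]

/-- The character with frequency `ξ`, without the factor `2π` in the exponent, as in `charFun`. -/
def chr (ξ x : V) : ℂ := Complex.exp (⟪x, ξ⟫ * Complex.I)

theorem norm_chr (ξ x : V) : ‖chr ξ x‖ = 1 := Complex.norm_exp_ofReal_mul_I _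

theorem bddContinuous_chr (ξ : V) : BddContinuous (chr ξ) :=
  ⟨by unfold chr; fun_prop, 1, fun x => (norm_chr ξ x).le⟩

theorem chr_add (ξ η : V) : chr (ξ + η) = chr ξ * chr η := by
  ext x
  simp only [chr, Pi.mul_apply, ← Complex.exp_add, inner_add_right, Complex.ofReal_add, add_mul]

theorem conj_chr (ξ x : V) : starRingEnd ℂ (chr ξ x) = chr (-ξ) x := by
  simp [chr, ← Complex.exp_conj]

/-- The trigonometric polynomials with frequencies in `S`. -/
def HasSpectrum (S : Set V) (f : V → ℂ) : Prop := f ∈ Submodule.span ℂ (chr '' S)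

namespace HasSpectrum

variable {S T : Set V} {f g : V → ℂ}

theorem chr {ξ : V} (h : ξ ∈ S) : HasSpectrum S (chr ξ) :=
  Submodule.subset_span (mem_image_of_mem _ h)

theorem mono (h : HasSpectrum S f) (hST : S ⊆ T) : HasSpectrum T f :=
  Submodule.span_mono (image_mono hST) h

theorem sum {ι : Type*} {F : ι → V → ℂ} (s : Finset ι) (h : ∀ i ∈ s, HasSpectrum S (F i)) :
    HasSpectrum S (fun x => ∑ i ∈ s, F i x) := by
  simpa only [HasSpectrum, Finset.sum_fn] using Submodule.sum_mem _ h

theorem const_mul (c : ℂ) (h : HasSpectrum S f) : HasSpectrum S (fun x => c * f x) :=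
  Submodule.smul_mem _ c h

theorem mul (hf : HasSpectrum S f) (hg : HasSpectrum T g) :
    HasSpectrum (S + T) (fun x => f x * g x) := by
  have h := Submodule.mul_mem_mul hf hg
  rw [Submodule.span_mul_span] at h
  refine Submodule.span_mono ?_ h
  rintro _ ⟨_, ⟨ξ, hξ, rfl⟩, _, ⟨η, hη, rfl⟩, rfl⟩
  exact ⟨ξ + η, add_mem_add hξ hη, chr_add ξ η⟩

theorem conj (hf : HasSpectrum S f) : HasSpectrum (-S) (fun x => starRingEnd ℂ (f x)) := by
  induction hf using Submodule.span_induction with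
  | mem f h =>
    obtain ⟨ξ, hξ, rfl⟩ := h
    simp only [conj_chr]
    exact HasSpectrum.chr (by simpa using hξ)
  | zero =>
    simp only [Pi.zero_apply, map_zero]
    exact Submodule.zero_mem _
  | add f g _ _ hf hg =>
    simp only [Pi.add_apply, map_add]
    exact Submodule.add_mem _ hf hg
  | smul c f _ hf =>
    simp only [Pi.smul_apply, smul_eq_mul, map_mul]
    exact const_mul _ hf

theorem norm_pow_four (hf : HasSpectrum S f) :
    HasSpectrum (S + -S + (S + -S)) (fun x => ((‖f x‖ ^ 4 : ℝ) : ℂ)) := by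
  refine (congrArg (HasSpectrum _) (funext fun x => ?_)).mp ((hf.mul hf.conj).mul (hf.mul hf.conj))
  rw [Complex.mul_conj, Complex.normSq_eq_norm_sq]
  push_cast
  ring

theorem bddContinuous (hf : HasSpectrum S f) : BddContinuous f := by
  induction hf using Submodule.span_induction with
  | mem f h =>
    obtain ⟨ξ, -, rfl⟩ := h
    exact bddContinuous_chr ξ
  | zero => exact BddContinuous.const 0
  | add f g _ _ hf hg => exact hf.add hg
  | smul c f _ hf => exact (BddContinuous.const c).mul hf

end HasSpectrum

/-- Measures whose Fourier transform vanishes outside the open unit ball. -/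
def BandLimited [MeasurableSpace V] (m : Measure V) : Prop := ∀ ξ : V, 1 ≤ ‖ξ‖ → charFun m ξ = 0

theorem BandLimited.integral_eq_zero [SecondCountableTopology V] [MeasurableSpace V]
    [BorelSpace V] {m : Measure V} [IsFiniteMeasure m] (hm : BandLimited m) {S : Set V}
    (hS : ∀ ξ ∈ S, 1 ≤ ‖ξ‖) {f : V → ℂ} (hf : HasSpectrum S f) : ∫ x, f x ∂m = 0 := by
  induction hf using Submodule.span_induction with
  | mem f h =>
    obtain ⟨ξ, hξ, rfl⟩ := h
    exact hm ξ (hS ξ hξ)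
  | zero => simp
  | add f g hf hg hf' hg' =>
    simp only [Pi.add_apply]
    rw [integral_add (HasSpectrum.bddContinuous hf).integrable
      (HasSpectrum.bddContinuous hg).integrable, hf', hg', add_zero]
  | smul c f _ hf => simp only [Pi.smul_apply, integral_smul, hf, smul_zero]

end Spectrum

section Cell

/-- The `q`-th cell of length `σ` to the right of `θ₀`. -/
abbrev cell (θ₀ σ : ℝ) (q : ℕ) : Set ℝ := Ico (θ₀ + q * σ) (θ₀ + (q + 1) * σ)

variable {θ₀ σ ρ x y : ℝ} {K a b l q u v i j n L : ℕ}

theorem cell_subset_cell_div (hσ : 0 ≤ σ) (hK : 0 < K) :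
    cell θ₀ σ q ⊆ cell θ₀ (σ * K) (q / K) := by
  have hle : ((q / K : ℕ) : ℝ) * K ≤ q := mod_cast Nat.div_mul_le_self q K
  have hlt : (q : ℝ) + 1 ≤ ((q / K : ℕ) + 1) * K :=
    mod_cast (mul_comm K (q / K + 1)) ▸ Nat.lt_mul_div_succ q hK
  exact Ico_subset_Ico (by nlinarith) (by nlinarith)

theorem mem_cell_div_pow (hρ : 0 ≤ ρ) (hK : 0 < K) {k : ℕ} (hl : l + k = L)
    (hx : x ∈ cell θ₀ (ρ * K ^ l) q) : x ∈ cell θ₀ (ρ * K ^ L) (q / K ^ k) := by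
  have := cell_subset_cell_div (by positivity) (pow_pos hK k) hx
  rwa [Nat.cast_pow, mul_assoc, ← pow_add, hl] at this

theorem le_sub_of_mem_cell (hσ : 0 ≤ σ) (hx : x ∈ cell θ₀ σ u) (hy : y ∈ cell θ₀ σ v)
    (h : u + n ≤ v) : ((n : ℝ) - 1) * σ ≤ y - x := by
  have h' : (u : ℝ) + n ≤ v := by exact_mod_cast h
  nlinarith [hx.2, hy.1]

theorem le_abs_sub_of_mem_cell (hσ : 0 ≤ σ) (hx : x ∈ cell θ₀ σ u) (hy : y ∈ cell θ₀ σ v)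
    (h : Separated n u v) : ((n : ℝ) - 1) * σ ≤ |x - y| := by
  rcases h with h | h
  · rw [abs_sub_comm]; exact (le_sub_of_mem_cell hσ hx hy h).trans (le_abs_self _)
  · exact (le_sub_of_mem_cell hσ hy hx h).trans (le_abs_self _)

theorem abs_sub_le_of_mem_cell (hx : x ∈ cell θ₀ σ u) (hy : y ∈ cell θ₀ σ u) :
    |x - y| ≤ σ := by
  rw [abs_le]
  constructor <;> nlinarith [hx.1, hx.2, hy.1, hy.2]

theorem TransversalNodes.abs_sub_le (h : TransversalNodes K a i b j) (hρ : 0 ≤ ρ) (hK : 0 < K)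
    (ha : a ≤ L) (hb : b ≤ L) (hx : x ∈ cell θ₀ (ρ * K ^ (L - a)) i)
    (hy : y ∈ cell θ₀ (ρ * K ^ (L - b)) j) : |x - y| ≤ ρ * K ^ L := by
  have hx' := mem_cell_div_pow hρ hK (Nat.sub_add_cancel ha) hx
  rw [h.1] at hx'
  exact abs_sub_le_of_mem_cell hx' (mem_cell_div_pow hρ hK (Nat.sub_add_cancel hb) hy)

theorem TransversalNodes.le_abs_sub (h : TransversalNodes K a i b j) (hρ : 0 ≤ ρ) (hK : 0 < K)
    (hb : 1 ≤ b) (hbL : b ≤ L) (hx : x ∈ cell θ₀ (ρ * K ^ (L - 1)) (i / K ^ (a - 1)))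
    (hy : y ∈ cell θ₀ (ρ * K ^ (L - b)) j) : ρ * K ^ (L - 1) ≤ |x - y| := by
  have := le_abs_sub_of_mem_cell (by positivity) hx
    (mem_cell_div_pow (k := b - 1) (L := L - 1) hρ hK (by omega) hy) h.2
  norm_num at this
  linarith

theorem TransversalNodes.congr_left {i' : ℕ} (h : TransversalNodes K a i b j) (ha : 1 ≤ a)
    (hi : i / K ^ (a - 1) = i' / K ^ (a - 1)) : TransversalNodes K a i' b j := by
  refine ⟨?_, hi ▸ h.2⟩
  rw [← h.1, ← Nat.sub_add_cancel ha, pow_succ, ← Nat.div_div_eq_div_mul,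
    ← Nat.div_div_eq_div_mul, hi]

end Cell

section Cone

open scoped Pointwise

variable {V : Type*} [NormedAddCommGroup V] [InnerProductSpace ℝ V]

/-- The part of the cone over `γ` above `J` with heights between `r` and `(1 + κ) * r`. -/
def coneArc (γ : ℝ → V) (J : Set ℝ) (r κ : ℝ) : Set V :=
  {ξ | ∃ n ∈ Icc r ((1 + κ) * r), ∃ θ ∈ J, ξ = n • γ θ}

variable {γ : ℝ → V} {I J J' : Set ℝ} {r κ θ' S : ℝ}

theorem coneArc_mono (h : J ⊆ J') (r κ : ℝ) : coneArc γ J r κ ⊆ coneArc γ J' r κ := by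
  rintro _ ⟨n, hn, θ, hθ, rfl⟩
  exact ⟨n, hn, θ, h hθ, rfl⟩

theorem one_le_main_sub_errors {K N L b : ℕ} (hbL : 2 * b ≤ L) (hb : 1 ≤ b) (hK : (1 : ℝ) ≤ K)
    {ρ c C D : ℝ} (hρ : 0 ≤ ρ) (hr : 0 ≤ r) (hrρ : 1 ≤ r * ρ ^ 2) (hκ : κ * K ^ (2 * b) ≤ 1)
    (hN : 1 + 9 * C ≤ c * (N - 1)) (hc : 0 ≤ c) (hC : 0 ≤ C)
    (hD : (((N * K : ℕ) : ℝ) - 1) * (ρ * K ^ (L - 2 * b)) ≤ D) :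
    1 ≤ r * (c * (ρ * K ^ (L - 1)) * D) - κ * r * (C * (ρ * K ^ L) ^ 2) -
      8 * C * (r * (ρ * K ^ (L - b)) ^ 2) := by
  -- In terms of `S`, the main term is at least `r c (N - 1) S²`, each error is a multiple of
  -- `r C S²`, and `r S² ≥ 1`.
  set S : ℝ := ρ * K ^ (L - b) with hS
  have hSℓ : (ρ * K ^ L) ^ 2 = K ^ (2 * b) * S ^ 2 := by
    obtain ⟨l, rfl⟩ := Nat.exists_eq_add_of_le hbL
    rw [hS, show 2 * b + l - b = b + l by omega]
    ring
  have hSs : (ρ * K ^ (L - 1)) * (K * (ρ * K ^ (L - 2 * b))) = S ^ 2 := by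
    obtain ⟨l, rfl⟩ := Nat.exists_eq_add_of_le hbL
    obtain ⟨b, rfl⟩ := Nat.exists_eq_add_of_le' hb
    rw [hS, show 2 * (b + 1) + l - 1 = 2 * b + 1 + l by omega, Nat.add_sub_cancel_left,
      show 2 * (b + 1) + l - (b + 1) = b + 1 + l by omega]
    ring
  have hrS : 1 ≤ r * S ^ 2 := hrρ.trans (mul_le_mul_of_nonneg_left
    (pow_le_pow_left₀ hρ (le_mul_of_one_le_right hρ (one_le_pow₀ hK)) 2) hr)
  have hmain : r * S ^ 2 * (c * (N - 1)) ≤ r * (c * (ρ * K ^ (L - 1)) * D) := by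
    have hD' : ((N : ℝ) - 1) * (K * (ρ * K ^ (L - 2 * b))) ≤ D := by
      refine le_trans ?_ hD
      rw [← mul_assoc]
      refine mul_le_mul_of_nonneg_right ?_ (by positivity)
      push_cast
      linarith
    calc r * S ^ 2 * (c * (N - 1))
        = r * (c * (ρ * K ^ (L - 1)) * (((N : ℝ) - 1) * (K * (ρ * K ^ (L - 2 * b))))) := by
          rw [← hSs]; ring
      _ ≤ r * (c * (ρ * K ^ (L - 1)) * D) := by gcongr
  have herr : κ * r * (C * (ρ * K ^ L) ^ 2) ≤ r * S ^ 2 * C := by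
    rw [hSℓ]
    calc κ * r * (C * (K ^ (2 * b) * S ^ 2)) = κ * K ^ (2 * b) * (r * S ^ 2 * C) := by ring
      _ ≤ r * S ^ 2 * C := mul_le_of_le_one_left (by positivity) hκ
  nlinarith [mul_le_mul_of_nonneg_left hN (by positivity : 0 ≤ r * S ^ 2)]

namespace ConeFrame

theorem abs_inner_e_le_of_mem_coneArc (H : ConeFrame γ I) (hr : 0 ≤ r) (hκ : κ ≤ 1)
    (hθ' : θ' ∈ I) (hS : S ≤ H.h) {ξ : V} (hξ : ξ ∈ coneArc γ (I ∩ closedBall θ' S) r κ) :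
    |⟪H.e θ', ξ⟫| ≤ 2 * H.C * (r * S ^ 2) := by
  obtain ⟨n, hn, θ, ⟨hθ, hd⟩, rfl⟩ := hξ
  rw [mem_closedBall, Real.dist_eq] at hd
  have hsq : (θ - θ') ^ 2 ≤ S ^ 2 := sq_le_sq' (abs_le.1 hd).1 (abs_le.1 hd).2
  rw [real_inner_smul_right, abs_mul, abs_of_nonneg (hr.trans hn.1)]
  calc n * |⟪H.e θ', γ θ⟫| ≤ (2 * r) * (H.C * S ^ 2) :=
        mul_le_mul (by nlinarith [hn.2])
          ((H.inner_e_le θ' hθ' θ hθ (hd.trans hS)).trans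
            (mul_le_mul_of_nonneg_left hsq H.C_pos.le)) (abs_nonneg _) (by linarith)
    _ = 2 * H.C * (r * S ^ 2) := by ring

theorem le_abs_inner_e_sub (H : ConeFrame γ I) (hr : 0 ≤ r) {θ₁ θ₂ s ℓ n₁ n₂ : ℝ}
    (hθ' : θ' ∈ I) (hθ₁ : θ₁ ∈ I) (hθ₂ : θ₂ ∈ I) (hd₁ : |θ₁ - θ'| ≤ ℓ) (hd₂ : |θ₂ - θ'| ≤ ℓ)
    (hℓ : ℓ ≤ H.h) (hs0 : 0 ≤ s) (hs : ∀ θ ∈ uIcc θ₁ θ₂, s ≤ |θ - θ'|)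
    (hn₁ : n₁ ∈ Icc r ((1 + κ) * r)) (hn₂ : n₂ ∈ Icc r ((1 + κ) * r)) :
    r * (H.c * s * |θ₁ - θ₂|) - κ * r * (H.C * ℓ ^ 2) ≤
      |⟪H.e θ', n₁ • γ θ₁ + -(n₂ • γ θ₂)⟫| := by
  have hc := H.c_pos
  have hfst : r * (H.c * s * |θ₁ - θ₂|) ≤ |n₁ * (⟪H.e θ', γ θ₁⟫ - ⟪H.e θ', γ θ₂⟫)| := by
    rw [abs_mul, abs_of_nonneg (hr.trans hn₁.1)]
    exact mul_le_mul hn₁.1 (H.le_inner_e θ' hθ' θ₁ hθ₁ θ₂ hθ₂ (hd₁.trans hℓ) (hd₂.trans hℓ) s hs)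
      (by positivity) (hr.trans hn₁.1)
  have hsq : (θ₂ - θ') ^ 2 ≤ ℓ ^ 2 := sq_le_sq' (abs_le.1 hd₂).1 (abs_le.1 hd₂).2
  have hsnd : |(n₁ - n₂) * ⟪H.e θ', γ θ₂⟫| ≤ κ * r * (H.C * ℓ ^ 2) := by
    have hn : |n₁ - n₂| ≤ κ * r := by
      rw [abs_le]; constructor <;> nlinarith [hn₁.1, hn₁.2, hn₂.1, hn₂.2]
    rw [abs_mul]
    exact mul_le_mul hn ((H.inner_e_le θ' hθ' θ₂ hθ₂ (hd₂.trans hℓ)).trans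
      (mul_le_mul_of_nonneg_left hsq H.C_pos.le)) (abs_nonneg _) ((abs_nonneg _).trans hn)
  have hdecomp : ⟪H.e θ', n₁ • γ θ₁ + -(n₂ • γ θ₂)⟫ =
      n₁ * (⟪H.e θ', γ θ₁⟫ - ⟪H.e θ', γ θ₂⟫) - -((n₁ - n₂) * ⟪H.e θ', γ θ₂⟫) := by
    rw [inner_add_right, inner_neg_right, real_inner_smul_right, real_inner_smul_right]
    ring
  rw [hdecomp]
  rw [← abs_neg] at hsnd
  linarith [abs_sub_abs_le_abs_sub (n₁ * (⟪H.e θ', γ θ₁⟫ - ⟪H.e θ', γ θ₂⟫))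
    (-((n₁ - n₂) * ⟪H.e θ', γ θ₂⟫))]

theorem le_norm_add (H : ConeFrame γ I) (hr : 0 ≤ r) (hκ : κ ≤ 1) (hθ' : θ' ∈ I)
    (hS : S ≤ H.h) {A : Set V} (hA : A ⊆ coneArc γ (I ∩ closedBall θ' S) r κ) {ξ η : V}
    (hη : η ∈ A + -A + (A + -A)) :
    |⟪H.e θ', ξ⟫| - 8 * H.C * (r * S ^ 2) ≤ ‖ξ + η‖ := by
  have hA' : ∀ ζ ∈ A, |⟪H.e θ', ζ⟫| ≤ 2 * H.C * (r * S ^ 2) := fun ζ hζ =>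
    H.abs_inner_e_le_of_mem_coneArc hr hκ hθ' hS (hA hζ)
  obtain ⟨_, ⟨ζ₁, hζ₁, ζ₂, hζ₂, rfl⟩, _, ⟨ζ₃, hζ₃, ζ₄, hζ₄, rfl⟩, rfl⟩ := hη
  have hsum : |⟪H.e θ', ζ₁ + ζ₂ + (ζ₃ + ζ₄)⟫| ≤ 8 * H.C * (r * S ^ 2) := by
    have h₂ := hA' _ hζ₂
    have h₄ := hA' _ hζ₄
    rw [inner_neg_right, abs_neg] at h₂ h₄
    simp only [inner_add_right]
    linarith [hA' ζ₁ hζ₁, hA' ζ₃ hζ₃, abs_add_le (⟪H.e θ', ζ₁⟫ + ⟪H.e θ', ζ₂⟫)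
      (⟪H.e θ', ζ₃⟫ + ⟪H.e θ', ζ₄⟫), abs_add_le ⟪H.e θ', ζ₁⟫ ⟪H.e θ', ζ₂⟫,
      abs_add_le ⟪H.e θ', ζ₃⟫ ⟪H.e θ', ζ₄⟫]
  have hnorm : ∀ v : V, |⟪H.e θ', v⟫| ≤ ‖v‖ := fun v => (abs_real_inner_le_norm _ _).trans
    (mul_le_of_le_one_left (norm_nonneg _) (H.norm_e θ' hθ'))
  refine le_trans ?_ (hnorm _)
  rw [inner_add_right]
  have := abs_sub_abs_le_abs_sub ⟪H.e θ', ξ⟫ (-⟪H.e θ', ζ₁ + ζ₂ + (ζ₃ + ζ₄)⟫)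
  rw [abs_neg, sub_neg_eq_add] at this
  linarith

theorem one_le_norm_of_transversalNodes (H : ConeFrame γ I) {K N d L b i j j' : ℕ} (hK : 0 < K)
    (hb : 1 ≤ b) (hbd : b ≤ d) (hbL : 2 * b ≤ L) {θ₀ ρ : ℝ} (hρ : 0 < ρ)
    (hlen : ρ * K ^ L ≤ H.h) (hr : 0 ≤ r) (hrρ : 1 ≤ r * ρ ^ 2) (hκ : κ * K ^ (2 * d) ≤ 1)
    (hκ0 : 0 ≤ κ) (hN : 1 + 9 * H.C ≤ H.c * (N - 1)) (hji : TransversalNodes K (2 * b) j b i)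
    (hjj' : j / K ^ (2 * b - 1) = j' / K ^ (2 * b - 1)) (hsep : Separated (N * K) j j') {ξ η : V}
    (hξ : ξ ∈ coneArc γ (I ∩ cell θ₀ (ρ * K ^ (L - 2 * b)) j) r κ +
      -coneArc γ (I ∩ cell θ₀ (ρ * K ^ (L - 2 * b)) j') r κ) {A : Set V}
    (hA : A = coneArc γ (I ∩ cell θ₀ (ρ * K ^ (L - b)) i) r κ) (hη : η ∈ A + -A + (A + -A)) :
    1 ≤ ‖ξ + η‖ := by
  have hK1 : (1 : ℝ) ≤ K := mod_cast hK
  have hκ2b : κ * K ^ (2 * b) ≤ 1 := (mul_le_mul_of_nonneg_left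
    (pow_le_pow_right₀ hK1 (by omega)) hκ0).trans hκ
  have hκ1 : κ ≤ 1 := (le_mul_of_one_le_right hκ0 (one_le_pow₀ hK1)).trans hκ
  have hS : ρ * K ^ (L - b) ≤ H.h :=
    (mul_le_mul_of_nonneg_left (pow_le_pow_right₀ hK1 (Nat.sub_le L b)) hρ.le).trans hlen
  obtain ⟨_, ⟨n₁, hn₁, θ₁, ⟨hI₁, hθ₁⟩, rfl⟩, _, hneg, rfl⟩ := hξ
  obtain ⟨n₂, hn₂, θ₂, ⟨hI₂, hθ₂⟩, h₂⟩ := hneg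
  obtain rfl := neg_eq_iff_eq_neg.1 h₂
  obtain ⟨_, ⟨ζ, hζ, -⟩, -⟩ := id hη
  obtain ⟨-, -, θ', ⟨hI', hθ'⟩, -⟩ := hA ▸ hζ
  have hj'i := hji.congr_left (by omega) hjj'
  have hsd : ∀ θ ∈ uIcc θ₁ θ₂, ρ * K ^ (L - 1) ≤ |θ - θ'| := fun θ hθ =>
    hji.le_abs_sub hρ.le hK hb (by omega) (ordConnected_Ico.uIcc_subset
      (mem_cell_div_pow (L := L - 1) hρ.le hK (by omega) hθ₁)
      (hjj' ▸ mem_cell_div_pow (L := L - 1) hρ.le hK (by omega) hθ₂) hθ) hθ'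
  have hmain := H.le_abs_inner_e_sub hr hI' hI₁ hI₂
    (hji.abs_sub_le hρ.le hK hbL (by omega) hθ₁ hθ')
    (hj'i.abs_sub_le hρ.le hK hbL (by omega) hθ₂ hθ') hlen (by positivity) hsd hn₁ hn₂
  have herr := H.le_norm_add hr hκ1 hI' hS
    (hA.trans_subset (coneArc_mono (inter_subset_inter_right I fun θ hθ =>
      abs_sub_le_of_mem_cell hθ hθ') r κ)) (ξ := n₁ • γ θ₁ + -(n₂ • γ θ₂)) hη
  have hgap := le_abs_sub_of_mem_cell (by positivity) hθ₁ hθ₂ hsep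
  refine le_trans ?_ ((sub_le_sub_right hmain _).trans herr)
  exact one_le_main_sub_errors hbL hb hK1 hρ.le hr hrρ hκ2b hN H.c_pos.le H.C_pos.le hgap

theorem transversalOrthogonality [SecondCountableTopology V] [MeasurableSpace V] [BorelSpace V]
    (H : ConeFrame γ I) {m : Measure V} [IsFiniteMeasure m] (hm : BandLimited m)
    {K P T N d : ℕ} (hK : 0 < K) {θ₀ ρ : ℝ} (hρ : 0 < ρ) (hlen : ρ * K ^ T ≤ H.h) (hr : 0 ≤ r)
    (hrρ : T = 0 ∨ 1 ≤ r * ρ ^ 2) (hκ0 : 0 ≤ κ) (hκ : κ * K ^ (2 * d) ≤ 1)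
    (hN : 1 + 9 * H.C ≤ H.c * (N - 1)) {G : ℕ → V → ℂ}
    (hG : ∀ p, HasSpectrum (coneArc γ (I ∩ cell θ₀ ρ p) r κ) (G p)) :
    TransversalOrthogonality m K P T N d G := by
  intro L hL b hb hbd hbL i j j' hji hjj' hsep
  have hspec : ∀ l q,
      HasSpectrum (coneArc γ (I ∩ cell θ₀ (ρ * K ^ l) q) r κ) (blockSum K P G l q) := fun l q => by
    have hsum := HasSpectrum.sum {p ∈ Finset.range P | p / K ^ l = q} fun p hp =>
      (hG p).mono (coneArc_mono (inter_subset_inter_right I fun θ hθ =>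
        (Finset.mem_filter.1 hp).2 ▸ mem_cell_div_pow (l := 0) hρ.le hK (zero_add l)
          (by simpa using hθ)) r κ)
    convert hsum using 1
    ext x
    simp [blockSum]
  refine hm.integral_eq_zero ?_
    (((hspec (L - 2 * b) j).mul (hspec (L - 2 * b) j').conj).mul (hspec (L - b) i).norm_pow_four)
  rintro _ ⟨ξ, hξ, η, hη, rfl⟩
  refine H.one_le_norm_of_transversalNodes hK hb hbd hbL hρ (le_trans ?_ hlen) hr
    (hrρ.resolve_left (by omega)) hκ hκ0 hN hji hjj' hsep hξ rfl hη
  exact mul_le_mul_of_nonneg_left (pow_le_pow_right₀ (mod_cast hK) hL) hρ.le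

end ConeFrame

end Cone

section Weights

variable {ι : Type*} {s t : Finset ι} {θ w : ι → ℝ} {σ σ' Λ β : ℝ}

/-- Nonnegative weights at the points `θ k` giving mass at most `Λ * ρ ^ β` to the intervals of
length `ρ ≥ σ`: the condition `c_β(λ) ≤ Λ`, discretized at scale `σ`. -/
structure IsFrostmanWeight (s : Finset ι) (θ w : ι → ℝ) (σ Λ β : ℝ) : Prop where
  nonneg : ∀ k ∈ s, 0 ≤ w k
  sum_le : ∀ x ρ, σ ≤ ρ → ∑ k ∈ s with θ k ∈ Ico x (x + ρ), w k ≤ Λ * ρ ^ β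

namespace IsFrostmanWeight

theorem mono (h : IsFrostmanWeight s θ w σ Λ β) (hts : t ⊆ s) (hσ : σ ≤ σ') :
    IsFrostmanWeight t θ w σ' Λ β where
  nonneg k hk := h.nonneg k (hts hk)
  sum_le x ρ hρ := (Finset.sum_le_sum_of_subset_of_nonneg (Finset.filter_subset_filter _ hts)
    fun k hk _ => h.nonneg k (Finset.mem_filter.1 hk).1).trans (h.sum_le x ρ (hσ.trans hρ))

theorem sum_nonneg (h : IsFrostmanWeight s θ w σ Λ β) : 0 ≤ ∑ k ∈ s, w k :=
  Finset.sum_nonneg h.nonneg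

theorem const_nonneg (h : IsFrostmanWeight s θ w σ Λ β) : 0 ≤ Λ := by
  have hρ : 0 < max σ 1 ^ β := Real.rpow_pos_of_pos (by positivity) β
  refine nonneg_of_mul_nonneg_left (le_trans ?_ (h.sum_le 0 (max σ 1) (le_max_left σ 1))) hρ
  exact (h.mono (Finset.filter_subset _ s) le_rfl).sum_nonneg

theorem sum_cell_le (h : IsFrostmanWeight s θ w σ Λ β) {θ₀ ρ ρ' : ℝ} (hρ : ρ ≤ ρ') (hσ : σ ≤ ρ')
    (q : ℕ) : ∑ k ∈ s with θ k ∈ cell θ₀ ρ q, w k ≤ Λ * ρ' ^ β := by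
  refine le_trans (Finset.sum_le_sum_of_subset_of_nonneg (Finset.monotone_filter_right s ?_)
    fun k hk _ => h.nonneg k (Finset.mem_filter.1 hk).1) (h.sum_le (θ₀ + q * ρ) ρ' hσ)
  exact fun k _ hk => ⟨hk.1, hk.2.trans_le (by linarith)⟩

end IsFrostmanWeight

theorem mem_cell_iff_floor_eq {θ₀ x : ℝ} {q : ℕ} (hσ : 0 < σ) (hx : θ₀ ≤ x) :
    x ∈ cell θ₀ σ q ↔ ⌊(x - θ₀) / σ⌋₊ = q := by
  rw [Nat.floor_eq_iff (div_nonneg (sub_nonneg.2 hx) hσ.le), le_div_iff₀ hσ, div_lt_iff₀ hσ,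
    le_sub_iff_add_le', sub_lt_iff_lt_add']
  rfl

theorem sum_range_sum_cell {M : Type*} [AddCommMonoid M] {θ₀ : ℝ} {P : ℕ} (hσ : 0 < σ)
    (hθ : ∀ k ∈ s, θ k ∈ Ico θ₀ (θ₀ + P * σ)) (g : ι → M) :
    ∑ q ∈ Finset.range P, ∑ k ∈ s with θ k ∈ cell θ₀ σ q, g k = ∑ k ∈ s, g k := by
  have hcell : ∀ q, {k ∈ s | θ k ∈ cell θ₀ σ q} = {k ∈ s | ⌊(θ k - θ₀) / σ⌋₊ = q} := fun q =>
    Finset.filter_congr fun k hk => mem_cell_iff_floor_eq hσ (hθ k hk).1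
  simp only [hcell]
  refine Finset.sum_fiberwise_of_maps_to (fun k hk => ?_) g
  rw [Finset.mem_range, Nat.floor_lt (div_nonneg (sub_nonneg.2 (hθ k hk).1) hσ.le),
    div_lt_iff₀ hσ, sub_lt_iff_lt_add']
  exact (hθ k hk).2

end Weights

section WeightedSum

variable {X ι : Type*} {s : Finset ι} {w : ι → ℝ} {F : ι → X → ℂ} {A B : ℝ}

theorem norm_weighted_sum_le (hw : ∀ k ∈ s, 0 ≤ w k) (x : X) :
    ‖∑ k ∈ s, (w k : ℂ) * F k x‖ ≤ ∑ k ∈ s, w k * ‖F k x‖ :=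
  norm_sum_le_of_le s fun k hk => by rw [norm_mul, Complex.norm_of_nonneg (hw k hk)]

theorem norm_weighted_sum_le_mul_sum (hw : ∀ k ∈ s, 0 ≤ w k) {x : X} (hB : ∀ k ∈ s, ‖F k x‖ ≤ B) :
    ‖∑ k ∈ s, (w k : ℂ) * F k x‖ ≤ B * ∑ k ∈ s, w k := by
  refine (norm_weighted_sum_le hw x).trans ?_
  rw [mul_comm, Finset.sum_mul]
  exact Finset.sum_le_sum fun k hk => mul_le_mul_of_nonneg_left (hB k hk) (hw k hk)

variable [TopologicalSpace X] [SecondCountableTopology X] [MeasurableSpace X] [BorelSpace X]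
  {m : Measure X} [IsFiniteMeasure m]

theorem integral_norm_weighted_sum_sq_le (hw : ∀ k ∈ s, 0 ≤ w k) (hF : ∀ k, BddContinuous (F k))
    (hA : ∀ k ∈ s, ∫ x, ‖F k x‖ ^ 2 ∂m ≤ A) :
    ∫ x, ‖∑ k ∈ s, (w k : ℂ) * F k x‖ ^ 2 ∂m ≤ A * (∑ k ∈ s, w k) ^ 2 := by
  have hpt : ∀ x, ‖∑ k ∈ s, (w k : ℂ) * F k x‖ ^ 2 ≤
      (∑ k ∈ s, w k) * ∑ k ∈ s, w k * ‖F k x‖ ^ 2 := fun x =>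
    (pow_le_pow_left₀ (norm_nonneg _) (norm_weighted_sum_le hw x) 2).trans
      (Finset.sum_sq_le_sum_mul_sum_of_sq_le_mul s hw
        (fun k hk => mul_nonneg (hw k hk) (sq_nonneg _)) fun k _ => (by ring_nf; rfl))
  calc ∫ x, ‖∑ k ∈ s, (w k : ℂ) * F k x‖ ^ 2 ∂m
      ≤ ∫ x, (∑ k ∈ s, w k) * ∑ k ∈ s, w k * ‖F k x‖ ^ 2 ∂m :=
        integral_mono (BddContinuous.integrable (by fun_prop))
          (BddContinuous.integrable (by fun_prop)) hpt
    _ = (∑ k ∈ s, w k) * ∑ k ∈ s, w k * ∫ x, ‖F k x‖ ^ 2 ∂m := by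
        rw [integral_const_mul, integral_finsetSum _ fun k _ =>
          BddContinuous.integrable (by fun_prop)]
        simp only [integral_const_mul]
    _ ≤ (∑ k ∈ s, w k) * ∑ k ∈ s, w k * A := by
        gcongr with k hk
        · exact Finset.sum_nonneg hw
        · exact hw k hk
        · exact hA k hk
    _ = A * (∑ k ∈ s, w k) ^ 2 := by rw [← Finset.sum_mul]; ring

theorem integral_norm_pow_six_le {G : X → ℂ} (hG : BddContinuous G) {M J : ℝ}
    (hM : ∀ x, ‖G x‖ ≤ M) (hJ : ∫ x, ‖G x‖ ^ 2 ∂m ≤ J) :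
    ∫ x, ‖G x‖ ^ 6 ∂m ≤ M ^ 4 * J := by
  calc ∫ x, ‖G x‖ ^ 6 ∂m
      ≤ ∫ x, M ^ 4 * ‖G x‖ ^ 2 ∂m :=
        integral_mono (BddContinuous.integrable (by fun_prop))
          (BddContinuous.integrable (by fun_prop)) fun x => by
            dsimp only
            rw [show ‖G x‖ ^ 6 = ‖G x‖ ^ 4 * ‖G x‖ ^ 2 by ring]
            gcongr
            exact hM x
    _ ≤ M ^ 4 * J := by
        rw [integral_const_mul]
        gcongr

end WeightedSum

section ConeEstimate

open scoped Pointwise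

variable {V : Type*} [NormedAddCommGroup V] [InnerProductSpace ℝ V] {γ : ℝ → V} {I : Set ℝ}
  {ι : Type*} {s : Finset ι} {θ w : ι → ℝ} {F : ι → V → ℂ} {r κ θ₀ Λ β A B W : ℝ} {N : ℕ}

theorem HasSpectrum.weighted_sum {J : Set ℝ} (hJ : ∀ k ∈ s, θ k ∈ J)
    (hF : ∀ k, HasSpectrum (coneArc γ {θ k} r κ) (F k)) :
    HasSpectrum (coneArc γ J r κ) (fun x => ∑ k ∈ s, (w k : ℂ) * F k x) :=
  HasSpectrum.sum s fun k hk =>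
    ((hF k).mono (coneArc_mono (singleton_subset_iff.2 (hJ k hk)) r κ)).const_mul _

theorem ConeFrame.one_le_norm_of_separated (H : ConeFrame γ I) (hN : 1 ≤ H.c * (N - 1))
    (hr : 0 < r) {i j : ℕ} (hij : Separated N i j) {ξ : V}
    (hξ : ξ ∈ coneArc γ (I ∩ Ico θ₀ (θ₀ + H.h) ∩ cell θ₀ (1 / r) i) r κ +
      -coneArc γ (I ∩ Ico θ₀ (θ₀ + H.h) ∩ cell θ₀ (1 / r) j) r κ) : 1 ≤ ‖ξ‖ := by
  obtain ⟨_, ⟨n₁, hn₁, θ₁, ⟨⟨hI₁, hh₁⟩, hθ₁⟩, rfl⟩, _, hneg, rfl⟩ := hξ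
  obtain ⟨n₂, _, θ₂, ⟨⟨hI₂, hh₂⟩, hθ₂⟩, h₂⟩ := hneg
  obtain rfl := neg_eq_iff_eq_neg.1 h₂
  have hc := H.c_pos
  have hn₁0 : 0 ≤ n₁ := hr.le.trans hn₁.1
  have hdist : |θ₁ - θ₂| ≤ H.h := by
    rw [abs_le]
    constructor <;> linarith [hh₁.1, hh₁.2, hh₂.1, hh₂.2]
  have hgap : (N - 1) * (1 / r) ≤ |θ₁ - θ₂| := le_abs_sub_of_mem_cell (by positivity) hθ₁ hθ₂ hij
  have hinner : ⟪H.f θ₂, n₁ • γ θ₁ + -(n₂ • γ θ₂)⟫ = n₁ * ⟪H.f θ₂, γ θ₁⟫ := by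
    rw [inner_add_right, inner_neg_right, real_inner_smul_right, real_inner_smul_right,
      H.inner_f_self _ hI₂, mul_zero, neg_zero, add_zero]
  calc 1 ≤ H.c * (N - 1) := hN
    _ = r * (H.c * ((N - 1) * (1 / r))) := by field_simp
    _ ≤ r * (H.c * |θ₁ - θ₂|) := by gcongr
    _ ≤ n₁ * (H.c * |θ₁ - θ₂|) := by gcongr; exact hn₁.1
    _ ≤ n₁ * |⟪H.f θ₂, γ θ₁⟫| := by gcongr; exact H.le_inner_f θ₂ hI₂ θ₁ hI₁ hdist
    _ = |⟪H.f θ₂, n₁ • γ θ₁ + -(n₂ • γ θ₂)⟫| := by rw [hinner, abs_mul, abs_of_nonneg hn₁0]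
    _ ≤ ‖H.f θ₂‖ * ‖n₁ • γ θ₁ + -(n₂ • γ θ₂)‖ := abs_real_inner_le_norm _ _
    _ ≤ ‖n₁ • γ θ₁ + -(n₂ • γ θ₂)‖ := mul_le_of_le_one_left (norm_nonneg _) (H.norm_f _ hI₂)

theorem exists_scale {K : ℕ} (hK : 2 ≤ K) {h r : ℝ} (hh : 0 < h) (hr : 1 ≤ r) :
    ∃ T : ℕ, h / K ^ T ≤ K / √r ∧
      (T = 0 ∨ 1 ≤ r * (h / K ^ T) ^ 2) ∧ (K : ℝ) ^ T ≤ max 1 h * r := by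
  classical
  have hK1 : (1 : ℝ) < K := by exact_mod_cast hK
  have hsr : 1 ≤ √r := Real.one_le_sqrt.2 hr
  have hsr0 : 0 < √r := by linarith
  have hle : h ≤ max 1 h := le_max_right 1 h
  have hex : ∃ T : ℕ, h * √r ≤ K ^ (T + 1) := by
    obtain ⟨T, hT⟩ := pow_unbounded_of_one_lt (h * √r) hK1
    exact ⟨T, hT.le.trans (pow_le_pow_right₀ hK1.le T.le_succ)⟩
  refine ⟨Nat.find hex, ?_, ?_⟩
  · rw [div_le_div_iff₀ (by positivity) hsr0, ← pow_succ']
    exact Nat.find_spec hex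
  · rcases hT : Nat.find hex with _ | t
    · exact ⟨Or.inl rfl, by nlinarith [le_max_left 1 h]⟩
    · have hmin : (K : ℝ) ^ (t + 1) ≤ h * √r :=
        (not_le.1 (Nat.find_min hex (m := t) (by omega))).le
      have hroot : 1 ≤ √r * (h / K ^ (t + 1)) := by
        rw [mul_div_assoc', one_le_div (by positivity)]
        linarith
      refine ⟨Or.inr ?_, ?_⟩
      · rw [← Real.sq_sqrt (zero_le_one.trans hr), ← mul_pow]
        exact one_le_pow₀ hroot
      · calc (K : ℝ) ^ (t + 1) ≤ h * √r := hmin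
          _ ≤ max 1 h * r := by
            gcongr
            exact (Real.sqrt_le_left (by positivity)).2 (by nlinarith)

theorem exists_decoupling_parameters {η : ℝ} (hη : 0 < η) (N : ℕ) :
    ∃ K : ℕ, 2 ≤ K ∧ ∃ n : ℕ, 4 ^ 6 / ((K : ℝ) ^ (η / 2)) ^ 2 +
      (K : ℝ) ^ 8 * (2 * N * K) ^ 2 / ((K : ℝ) ^ (η / 2)) ^ n ≤ 1 := by
  obtain ⟨K, hKη, hK⟩ := (((tendsto_rpow_atTop (half_pos hη)).comp
    tendsto_natCast_atTop_atTop).eventually_ge_atTop (2 * 4 ^ 6 : ℝ)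
    |>.and (Filter.eventually_ge_atTop 2)).exists
  dsimp only [Function.comp_apply] at hKη
  have hz : 1 < (K : ℝ) ^ (η / 2) := by linarith
  obtain ⟨n, hn⟩ := pow_unbounded_of_one_lt (2 * ((K : ℝ) ^ 8 * (2 * N * K) ^ 2)) hz
  refine ⟨K, hK, n, ?_⟩
  have hnarrow : 4 ^ 6 / ((K : ℝ) ^ (η / 2)) ^ 2 ≤ 1 / 2 := by
    rw [div_le_iff₀ (by positivity)]
    nlinarith
  have hbroad : (K : ℝ) ^ 8 * (2 * N * K) ^ 2 / ((K : ℝ) ^ (η / 2)) ^ n ≤ 1 / 2 := by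
    rw [div_le_iff₀ (by positivity)]
    linarith
  linarith

theorem ConeFrame.exists_separation (H : ConeFrame γ I) :
    ∃ N : ℕ, 1 ≤ N ∧ 1 + 9 * H.C ≤ H.c * (N - 1) := by
  obtain ⟨N, hN⟩ := exists_nat_ge ((1 + 9 * H.C) / H.c)
  refine ⟨N + 1, by omega, ?_⟩
  rw [div_le_iff₀' H.c_pos] at hN
  simpa using hN

theorem blockSum_top {M : Type*} [AddCommMonoid M] (K T : ℕ) (a : ℕ → M) :
    blockSum K (K ^ T) a T 0 = ∑ p ∈ Finset.range (K ^ T), a p := by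
  rw [blockSum, Finset.filter_true_of_mem fun p hp => Nat.div_eq_of_lt (Finset.mem_range.1 hp)]

theorem rpow_inv_mul_rpow_div_sqrt_sq_le {K : ℝ} (hK : 1 ≤ K) (hr : 0 < r) (hβ : β ≤ 1) :
    (1 / r) ^ β * ((K / √r) ^ β) ^ 2 ≤ K ^ 2 * r ^ (-(2 * β)) := by
  have hK0 : 0 < K := by linarith
  calc (1 / r) ^ β * ((K / √r) ^ β) ^ 2
      = K ^ (2 * β) * r ^ (-(2 * β)) := by
        rw [Real.rpow_pow_comm (by positivity), div_pow, Real.sq_sqrt hr.le,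
          ← Real.mul_rpow (by positivity) (by positivity), Real.rpow_neg hr.le,
          Real.rpow_mul hK0.le, Real.rpow_mul hr.le, ← Real.inv_rpow (by positivity),
          ← Real.mul_rpow (by positivity) (by positivity), Real.rpow_two, Real.rpow_two]
        congr 1
        field_simp
    _ ≤ K ^ 2 * r ^ (-(2 * β)) := by
        rw [← Real.rpow_two]
        gcongr
        linarith

variable [SecondCountableTopology V] [MeasurableSpace V] [BorelSpace V] {m : Measure V}
  [IsFiniteMeasure m]

theorem ConeFrame.integral_norm_weighted_sum_sq_le (H : ConeFrame γ I) (hm : BandLimited m)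
    (hN : 1 ≤ H.c * (N - 1)) (hr : 0 < r) (hθ : ∀ k ∈ s, θ k ∈ I ∩ Ico θ₀ (θ₀ + H.h))
    (hw : IsFrostmanWeight s θ w (1 / r) Λ β)
    (hF : ∀ k, HasSpectrum (coneArc γ {θ k} r κ) (F k))
    (hA : ∀ k ∈ s, ∫ x, ‖F k x‖ ^ 2 ∂m ≤ A) (hA0 : 0 ≤ A) :
    ∫ x, ‖∑ k ∈ s, (w k : ℂ) * F k x‖ ^ 2 ∂m ≤
      2 * N * (Λ * (1 / r) ^ β * A * ∑ k ∈ s, w k) := by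
  have hr' : 0 < 1 / r := by positivity
  set v : ℕ → V → ℂ := fun q x => ∑ k ∈ s with θ k ∈ cell θ₀ (1 / r) q, (w k : ℂ) * F k x
  have hFc : ∀ k, BddContinuous (F k) := fun k => (hF k).bddContinuous
  have hspec : ∀ q, HasSpectrum (coneArc γ (I ∩ Ico θ₀ (θ₀ + H.h) ∩ cell θ₀ (1 / r) q) r κ) (v q) :=
    fun q => HasSpectrum.weighted_sum (fun k hk => ⟨hθ k (Finset.mem_filter.1 hk).1,
      (Finset.mem_filter.1 hk).2⟩) hF
  have hcover : ∀ k ∈ s, θ k ∈ Ico θ₀ (θ₀ + ⌈H.h * r⌉₊ * (1 / r)) := fun k hk => by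
    refine ⟨(hθ k hk).2.1, (hθ k hk).2.2.trans_le ?_⟩
    rw [mul_one_div, add_le_add_iff_left, le_div_iff₀ hr]
    exact Nat.le_ceil _
  have horth := integral_norm_sum_sq_mul_le_of_separated m (Finset.range ⌈H.h * r⌉₊) (v := v)
    (fun q => (hspec q).bddContinuous) (BddContinuous.const 1) (fun _ => zero_le_one) N
    fun i _ j _ hij => by
      simp only [Complex.ofReal_one, mul_one]
      exact hm.integral_eq_zero (fun ξ hξ => H.one_le_norm_of_separated hN hr hij hξ)
        ((hspec i).mul (hspec j).conj)
  simp only [mul_one, v, sum_range_sum_cell hr' hcover] at horth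
  have hcell : ∀ q, ∫ x, ‖v q x‖ ^ 2 ∂m ≤
      Λ * (1 / r) ^ β * A * ∑ k ∈ s with θ k ∈ cell θ₀ (1 / r) q, w k := fun q => by
    have hs := Finset.filter_subset (fun k => θ k ∈ cell θ₀ (1 / r) q) s
    have hwq := (hw.mono hs le_rfl)
    refine (_root_.integral_norm_weighted_sum_sq_le hwq.nonneg hFc fun k hk =>
      hA k (hs hk)).trans ?_
    nlinarith [mul_le_mul_of_nonneg_right (hw.sum_cell_le (θ₀ := θ₀) le_rfl le_rfl q)
      (mul_nonneg hA0 hwq.sum_nonneg)]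
  refine horth.trans (mul_le_mul_of_nonneg_left ?_ (by positivity))
  refine (Finset.sum_le_sum fun q _ => hcell q).trans_eq ?_
  rw [← Finset.mul_sum, sum_range_sum_cell hr' hcover]

theorem ConeFrame.integral_norm_weighted_sum_pow_six_le (H : ConeFrame γ I) (hm : BandLimited m)
    (hN : 1 ≤ H.c * (N - 1)) (hr : 0 < r) (hθ : ∀ k ∈ s, θ k ∈ I ∩ Ico θ₀ (θ₀ + H.h))
    (hw : IsFrostmanWeight s θ w (1 / r) Λ β) (hW : ∑ k ∈ s, w k ≤ W)
    (hF : ∀ k, HasSpectrum (coneArc γ {θ k} r κ) (F k))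
    (hA : ∀ k ∈ s, ∫ x, ‖F k x‖ ^ 2 ∂m ≤ A) (hA0 : 0 ≤ A) (hB : ∀ k ∈ s, ∀ x, ‖F k x‖ ≤ B) :
    ∫ x, ‖∑ k ∈ s, (w k : ℂ) * F k x‖ ^ 6 ∂m ≤
      2 * N * (Λ * (1 / r) ^ β * A) * B ^ 4 * W ^ 2 * (∑ k ∈ s, w k) ^ 3 := by
  have hw0 := hw.sum_nonneg
  have hΛ := hw.const_nonneg
  have hFc : ∀ k, BddContinuous (F k) := fun k => (hF k).bddContinuous
  calc ∫ x, ‖∑ k ∈ s, (w k : ℂ) * F k x‖ ^ 6 ∂m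
      ≤ (B * ∑ k ∈ s, w k) ^ 4 * (2 * N * (Λ * (1 / r) ^ β * A * ∑ k ∈ s, w k)) :=
        integral_norm_pow_six_le (by fun_prop)
          (fun x => norm_weighted_sum_le_mul_sum hw.nonneg fun k hk => hB k hk x)
          (H.integral_norm_weighted_sum_sq_le hm hN hr hθ hw hF hA hA0)
    _ = 2 * N * (Λ * (1 / r) ^ β * A) * B ^ 4 * (∑ k ∈ s, w k) ^ 2 * (∑ k ∈ s, w k) ^ 3 := by
        ring
    _ ≤ _ := by gcongr

theorem ConeFrame.exists_l2_decoupling (H : ConeFrame γ I) {η : ℝ} (hη : 0 < η) :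
    ∃ κ ∈ Ioc (0 : ℝ) 1, ∃ K ≥ (1 : ℝ), ∃ C > 0, ∀ (m : Measure V) [IsFiniteMeasure m],
      BandLimited m → ∀ r ≥ 1, ∃ ρ > 0, ρ ≤ K / √r ∧ ∃ P : ℕ, P * ρ = H.h ∧
      ∀ (θ₀ : ℝ) (G : ℕ → V → ℂ) (Q : ℕ → ℝ),
        (∀ p, HasSpectrum (coneArc γ (I ∩ cell θ₀ ρ p) r κ) (G p)) → (∀ p, 0 ≤ Q p) →
        (∀ p, ∫ x, ‖G p x‖ ^ 6 ∂m ≤ Q p ^ 3) →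
        ∫ x, ‖∑ p ∈ Finset.range P, G p x‖ ^ 6 ∂m ≤
          C * r ^ η * (∑ p ∈ Finset.range P, Q p) ^ 3 := by
  obtain ⟨N, hN1, hN⟩ := H.exists_separation
  obtain ⟨K, hK2, n, hsmall⟩ := exists_decoupling_parameters hη N
  have hK0 : 0 < K := by omega
  have hK1 : (1 : ℝ) ≤ K := Nat.one_le_cast.2 hK0
  have hh := H.h_pos
  refine ⟨1 / K ^ (2 * 2 ^ n), ⟨by positivity, ?_⟩, K, hK1, K ^ (5 * 2 ^ n) * max 1 H.h ^ η,
    by positivity, fun m _ hm r hr => ?_⟩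
  · exact div_le_one_of_le₀ (one_le_pow₀ hK1) (by positivity)
  obtain ⟨T, hρ, hT, hKT⟩ := exists_scale hK2 hh hr
  have hr0 : 0 ≤ r := zero_le_one.trans hr
  refine ⟨H.h / K ^ T, by positivity, hρ, K ^ T, by push_cast; field_simp,
    fun θ₀ G Q hG hQ hGQ => ?_⟩
  have horth := H.transversalOrthogonality hm (P := K ^ T) (T := T) (N := N) (d := 2 ^ n) hK0
    (by positivity) (div_mul_cancel₀ _ (by positivity)).le hr0 hT (by positivity)
    (div_mul_cancel₀ _ (by positivity)).le hN hG
  have hdec := decouplingBound_of_transversalOrthogonality (fun p => (hG p).bddContinuous)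
    hK0 hN1 horth hQ hGQ (Real.one_le_rpow hK1 (by positivity)) hsmall le_rfl 0
  have hloss : ((K : ℝ) ^ (η / 2)) ^ (2 * T) ≤ max 1 H.h ^ η * r ^ η := by
    rw [← Real.mul_rpow (by positivity) hr0, ← Real.rpow_mul_natCast (by positivity)]
    refine le_trans (le_of_eq ?_) (Real.rpow_le_rpow (by positivity) hKT hη.le)
    rw [← Real.rpow_natCast_mul (by positivity)]
    push_cast
    ring_nf
  simp only [blockSum_top, Finset.sum_apply] at hdec
  refine hdec.trans (mul_le_mul_of_nonneg_right ?_ (pow_nonneg (Finset.sum_nonneg fun p _ =>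
    hQ p) 3))
  rw [mul_assoc]
  gcongr

theorem ConeFrame.exists_integral_norm_weighted_sum_pow_six_le (H : ConeFrame γ I) {η : ℝ}
    (hη : 0 < η) (hβ : β ≤ 1) :
    ∃ κ ∈ Ioc (0 : ℝ) 1, ∃ C > 0, ∀ (m : Measure V) [IsFiniteMeasure m], BandLimited m →
      ∀ (s : Finset ι) (θ w : ι → ℝ) (F : ι → V → ℂ) (r θ₀ Λ A B : ℝ), 1 ≤ r →
      (∀ k ∈ s, θ k ∈ I ∩ Ico θ₀ (θ₀ + H.h)) → IsFrostmanWeight s θ w (1 / r) Λ β →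
      (∀ k, HasSpectrum (coneArc γ {θ k} r κ) (F k)) →
      0 ≤ A → (∀ k ∈ s, ∫ x, ‖F k x‖ ^ 2 ∂m ≤ A) → (∀ k ∈ s, ∀ x, ‖F k x‖ ≤ B) →
      ∫ x, ‖∑ k ∈ s, (w k : ℂ) * F k x‖ ^ 6 ∂m ≤
        C * r ^ η * (Λ ^ 3 * r ^ (-(2 * β)) * A * B ^ 4 * (∑ k ∈ s, w k) ^ 3) := by
  obtain ⟨N, hN1, hN⟩ := H.exists_separation
  obtain ⟨κ, hκ, K, hK1, C, hC, hdec⟩ := H.exists_l2_decoupling hη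
  refine ⟨κ, hκ, C * (2 * N * K ^ 2), by positivity,
    fun m _ hm s θ w F r θ₀ Λ A B hr hθ hw hF hA0 hA hB => ?_⟩
  obtain ⟨ρ, hρ0, hρ, P, hP, hdec⟩ := hdec m hm r hr
  have hr0 : 0 < r := by linarith
  have hΛ := hw.const_nonneg
  have hscale : 1 / r ≤ K / √r :=
    div_le_div₀ (by linarith) hK1 (Real.sqrt_pos.2 hr0)
      ((Real.sqrt_le_left hr0.le).2 (by nlinarith))
  set W : ℝ := Λ * (K / √r) ^ β
  obtain ⟨d, hd0, hd⟩ : ∃ d ≥ 0, d ^ 3 = 2 * N * (Λ * (1 / r) ^ β * A) * B ^ 4 * W ^ 2 :=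
    ⟨_, Real.rpow_nonneg (by positivity) _, Real.rpow_inv_natCast_pow (by positivity) three_ne_zero⟩
  have hsub : ∀ p, {k ∈ s | θ k ∈ cell θ₀ ρ p} ⊆ s := fun p => Finset.filter_subset _ s
  have hG := hdec θ₀ (fun p x => ∑ k ∈ s with θ k ∈ cell θ₀ ρ p, (w k : ℂ) * F k x)
    (fun p => d * ∑ k ∈ s with θ k ∈ cell θ₀ ρ p, w k)
    (fun p => HasSpectrum.weighted_sum (fun k hk => ⟨(hθ k (hsub p hk)).1,
      (Finset.mem_filter.1 hk).2⟩) hF)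
    (fun p => mul_nonneg hd0 (hw.mono (hsub p) le_rfl).sum_nonneg) fun p => by
      rw [mul_pow, hd]
      exact H.integral_norm_weighted_sum_pow_six_le hm (by linarith [H.C_pos]) hr0
        (fun k hk => hθ k (hsub p hk)) (hw.mono (hsub p) le_rfl) (hw.sum_cell_le hρ hscale p) hF
        (fun k hk => hA k (hsub p hk)) hA0 fun k hk => hB k (hsub p hk)
  simp only [← Finset.mul_sum, sum_range_sum_cell hρ0 (hP ▸ fun k hk => (hθ k hk).2), mul_pow d,
    hd] at hG
  refine hG.trans ?_
  calc C * r ^ η * (2 * N * (Λ * (1 / r) ^ β * A) * B ^ 4 * W ^ 2 * (∑ k ∈ s, w k) ^ 3)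
      = C * r ^ η * (2 * N * Λ ^ 3 * A * B ^ 4 * (∑ k ∈ s, w k) ^ 3) *
        ((1 / r) ^ β * ((K / √r) ^ β) ^ 2) := by ring
    _ ≤ C * r ^ η * (2 * N * Λ ^ 3 * A * B ^ 4 * (∑ k ∈ s, w k) ^ 3) *
        (K ^ 2 * r ^ (-(2 * β))) := by
      have := hw.sum_nonneg
      gcongr ?_ * ?_
      exact rpow_inv_mul_rpow_div_sqrt_sq_le hK1 hr0 hβ
    _ = _ := by ring

end ConeEstimate

theorem lintegral_pow_succ_le {X : Type*} [MeasurableSpace X] (μ : Measure X) {f : X → ℝ≥0∞}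
    (hf : AEMeasurable f μ) (n : ℕ) :
    (∫⁻ x, f x ∂μ) ^ (n + 1) ≤ μ univ ^ n * ∫⁻ x, f x ^ (n + 1) ∂μ := by
  have h := eLpNorm_le_eLpNorm_mul_rpow_measure_univ (p := 1) (q := (n + 1 : ℕ))
    (by exact_mod_cast n.succ_pos) hf.aestronglyMeasurable
  rw [eLpNorm_one_eq_lintegral_enorm, eLpNorm_eq_lintegral_rpow_enorm_toReal (by simp) (by simp)]
    at h
  have hpow := pow_le_pow_left' h (n + 1)
  have hone : 1 / ((n + 1 : ℕ) : ℝ) * (n + 1 : ℕ) = 1 := by field_simp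
  have hn : (1 / 1 - 1 / ((n + 1 : ℕ) : ℝ)) * (n + 1 : ℕ) = n := by
    push_cast
    field_simp
    ring
  simp only [enorm_eq_self, ENNReal.toReal_one, ENNReal.toReal_natCast, ENNReal.rpow_natCast,
    mul_pow, ← ENNReal.rpow_mul_natCast, hone, hn, ENNReal.rpow_one] at hpow
  rwa [mul_comm]

section Decay

open scoped SchwartzMap
open Module (finrank)

variable {V : Type*} [NormedAddCommGroup V] [NormedSpace ℝ V]

/-- The weight `(1 + ‖x‖) ^ (-(dim V + 1))`, which is integrable on `V`. -/
def decay (x : V) : ℝ≥0∞ := ENNReal.ofReal ((1 + ‖x‖) ^ (finrank ℝ V + 1))⁻¹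

theorem decay_ne_top (x : V) : decay x ≠ ∞ := ENNReal.ofReal_ne_top

theorem decay_le_one (x : V) : decay x ≤ 1 := by
  rw [decay, ENNReal.ofReal_le_one]
  exact inv_le_one_of_one_le₀ (one_le_pow₀ (by simp))

theorem decay_le_mul {t : ℝ} (ht : 0 < t) {x y : V} (h : 1 + ‖y‖ ≤ t * (1 + ‖x‖)) :
    decay x ≤ ENNReal.ofReal (t ^ (finrank ℝ V + 1)) * decay y := by
  rw [decay, decay, ← ENNReal.ofReal_mul (by positivity)]
  refine ENNReal.ofReal_le_ofReal ?_
  rw [← div_eq_mul_inv, inv_le_comm₀ (by positivity) (by positivity), inv_div,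
    div_le_iff₀' (by positivity), ← mul_pow]
  gcongr

theorem decay_le_mul_decay_add {x : V} {N : ℝ} (hx : ‖x‖ ≤ N) (y : V) :
    decay (x + y) ≤ ENNReal.ofReal ((1 + N) ^ (finrank ℝ V + 1)) * decay y := by
  have hN := (norm_nonneg x).trans hx
  have htri : ‖y‖ ≤ ‖x + y‖ + ‖x‖ := by simpa using norm_sub_le (x + y) x
  exact decay_le_mul (by positivity) (by nlinarith [norm_nonneg (x + y)])

theorem exists_enorm_le_mul_decay_sq (Φ : 𝓢(V, ℂ)) :
    ∃ C : ℝ≥0∞, C ≠ ∞ ∧ ∀ y, ‖Φ y‖ₑ ≤ C * decay y ^ 2 := by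
  set k := (finrank ℝ V + 1) * 2
  refine ⟨ENNReal.ofReal (2 ^ k * (Finset.Iic (k, 0)).sup
    (fun m => SchwartzMap.seminorm ℂ m.1 m.2) Φ), ENNReal.ofReal_ne_top, fun y => ?_⟩
  have h := SchwartzMap.one_add_le_sup_seminorm_apply (𝕜 := ℂ) (m := (k, 0)) le_rfl le_rfl Φ y
  rw [norm_iteratedFDeriv_zero] at h
  rw [decay, ← ENNReal.ofReal_pow (by positivity), ← ENNReal.ofReal_mul (by positivity),
    ← ofReal_norm, inv_pow, ← pow_mul, ← div_eq_mul_inv]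
  exact ENNReal.ofReal_le_ofReal ((le_div_iff₀' (by positivity)).2 h)

theorem decay_smul_sub_le_tsum {r : ℝ} (hr : 0 < r) (u x : V) :
    decay (r • (x - u)) ≤ ∑' j : ℕ, (ball u (2 ^ (j + 1) / r)).indicator
      (fun _ => ENNReal.ofReal (((2 : ℝ) ^ j) ^ (finrank ℝ V + 1))⁻¹) x := by
  obtain ⟨j, hj, hj'⟩ := exists_nat_pow_near (x := 1 + ‖r • (x - u)‖) (y := 2) (by simp) one_lt_two
  refine le_trans ?_ (ENNReal.le_tsum j)
  rw [indicator_of_mem]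
  · refine ENNReal.ofReal_le_ofReal ?_
    gcongr
  · rw [norm_smul, Real.norm_of_nonneg hr.le] at hj'
    rw [mem_ball, dist_eq_norm, lt_div_iff₀ hr]
    linarith

variable [MeasurableSpace V] [BorelSpace V]

theorem measurable_decay : Measurable (decay : V → ℝ≥0∞) := by
  unfold decay
  fun_prop

theorem measure_ball_le {X : Type*} [PseudoMetricSpace X] [MeasurableSpace X] (μ : Measure X)
    (α : ℝ) (x : X) {r : ℝ} (hr : 0 < r) :
    μ (ball x r) ≤ frostmanConst μ α * ENNReal.ofReal (r ^ α) := by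
  rw [← ENNReal.div_le_iff (by simpa using Real.rpow_pos_of_pos hr α) ENNReal.ofReal_ne_top]
  exact le_iSup_of_le x (le_iSup₂_of_le r hr le_rfl)

theorem two_pow_succ_div_rpow_le {α r : ℝ} {d : ℕ} (hα : α ≤ d) (hr : 0 < r) (j : ℕ) :
    (((2 : ℝ) ^ j) ^ (d + 1))⁻¹ * (2 ^ (j + 1) / r) ^ α ≤ 2 ^ d * r ^ (-α) * 2⁻¹ ^ j := by
  have hpow : ((2 : ℝ) ^ (j + 1)) ^ α ≤ (2 ^ (j + 1)) ^ d := by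
    rw [← Real.rpow_natCast _ d]
    exact Real.rpow_le_rpow_of_exponent_le (one_le_pow₀ one_le_two) hα
  calc _ = (((2 : ℝ) ^ j) ^ (d + 1))⁻¹ * ((2 ^ (j + 1)) ^ α * r ^ (-α)) := by
        rw [Real.div_rpow (by positivity) hr.le, Real.rpow_neg hr.le, div_eq_mul_inv]
    _ ≤ (((2 : ℝ) ^ j) ^ (d + 1))⁻¹ * ((2 ^ (j + 1)) ^ d * r ^ (-α)) := by gcongr
    _ = _ := by
        rw [inv_pow, pow_succ 2 j, mul_pow, pow_succ _ d]
        field_simp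

theorem lintegral_decay_smul_sub_le {α r : ℝ} (hα : α ≤ finrank ℝ V) (hr : 0 < r)
    (μ : Measure V) (u : V) : ∫⁻ x, decay (r • (x - u)) ∂μ ≤
      2 ^ (finrank ℝ V + 1) * frostmanConst μ α * ENNReal.ofReal (r ^ (-α)) := by
  set d := finrank ℝ V
  set c : ℕ → ℝ≥0∞ := fun j => ENNReal.ofReal (((2 : ℝ) ^ j) ^ (d + 1))⁻¹
  have hshell : ∀ j : ℕ, ∫⁻ x, (ball u (2 ^ (j + 1) / r)).indicator (fun _ => c j) x ∂μ ≤
      2 ^ d * frostmanConst μ α * ENNReal.ofReal (r ^ (-α)) * 2⁻¹ ^ j := by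
    intro j
    have htwo : ENNReal.ofReal (2 ^ d * r ^ (-α) * 2⁻¹ ^ j) =
        2 ^ d * ENNReal.ofReal (r ^ (-α)) * 2⁻¹ ^ j := by
      rw [ENNReal.ofReal_mul (by positivity), ENNReal.ofReal_mul (by positivity),
        ENNReal.ofReal_pow (by positivity), ENNReal.ofReal_pow (by positivity),
        ENNReal.ofReal_inv_of_pos two_pos, ENNReal.ofReal_ofNat]
    calc _ = c j * μ (ball u (2 ^ (j + 1) / r)) := lintegral_indicator_const measurableSet_ball _
      _ ≤ c j * (frostmanConst μ α * ENNReal.ofReal ((2 ^ (j + 1) / r) ^ α)) := by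
          gcongr
          exact measure_ball_le μ α u (by positivity)
      _ = frostmanConst μ α *
            ENNReal.ofReal ((((2 : ℝ) ^ j) ^ (d + 1))⁻¹ * (2 ^ (j + 1) / r) ^ α) := by
          rw [ENNReal.ofReal_mul (by positivity), mul_left_comm]
      _ ≤ frostmanConst μ α * ENNReal.ofReal (2 ^ d * r ^ (-α) * 2⁻¹ ^ j) := by
          gcongr _ * ENNReal.ofReal ?_
          exact two_pow_succ_div_rpow_le hα hr j
      _ = _ := by rw [htwo]; ring
  calc _ ≤ ∫⁻ x, ∑' j : ℕ, (ball u (2 ^ (j + 1) / r)).indicator (fun _ => c j) x ∂μ :=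
        lintegral_mono (decay_smul_sub_le_tsum hr u)
    _ = ∑' j : ℕ, ∫⁻ x, (ball u (2 ^ (j + 1) / r)).indicator (fun _ => c j) x ∂μ :=
        lintegral_tsum fun j => (measurable_const.indicator measurableSet_ball).aemeasurable
    _ ≤ ∑' j : ℕ, 2 ^ d * frostmanConst μ α * ENNReal.ofReal (r ^ (-α)) * 2⁻¹ ^ j :=
        ENNReal.tsum_le_tsum hshell
    _ = _ := by
        rw [ENNReal.tsum_mul_left, ENNReal.tsum_geometric, ENNReal.one_sub_inv_two, inv_inv]
        ring

theorem lintegral_decay_smul_sub_sq_le {α r : ℝ} (hα : α ≤ finrank ℝ V) (hr : 1 ≤ r)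
    {μ : Measure V} (hμ : μ (closedBall 0 1)ᶜ = 0) (u : V) :
    ∫⁻ x, decay (r • (x - u)) ^ 2 ∂μ ≤
      4 ^ (finrank ℝ V + 1) * frostmanConst μ α * ENNReal.ofReal (r ^ (-α)) * decay u := by
  have hr0 : 0 < r := by linarith
  have hdecay : ∀ x ∈ closedBall (0 : V) 1,
      decay (r • (x - u)) ≤ 2 ^ (finrank ℝ V + 1) * decay u := by
    intro x hx
    have hx' : ‖x‖ ≤ 1 := by simpa using hx
    have htri : ‖u‖ ≤ ‖x‖ + ‖x - u‖ := by simpa using norm_sub_le x (x - u)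
    refine (decay_le_mul two_pos (y := u) ?_).trans_eq (by simp [ENNReal.ofReal_pow])
    rw [norm_smul, Real.norm_of_nonneg hr0.le]
    nlinarith [norm_nonneg (x - u)]
  have hsupp : ∀ᵐ x ∂μ, x ∈ closedBall (0 : V) 1 := hμ
  calc _ ≤ ∫⁻ x, 2 ^ (finrank ℝ V + 1) * decay u * decay (r • (x - u)) ∂μ := by
        refine lintegral_mono_ae (hsupp.mono fun x hx => ?_)
        rw [sq]
        gcongr
        exact hdecay x hx
    _ = 2 ^ (finrank ℝ V + 1) * decay u * ∫⁻ x, decay (r • (x - u)) ∂μ :=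
        lintegral_const_mul' _ _ (by finiteness [decay_ne_top u])
    _ ≤ 2 ^ (finrank ℝ V + 1) * decay u *
          (2 ^ (finrank ℝ V + 1) * frostmanConst μ α * ENNReal.ofReal (r ^ (-α))) := by
        gcongr
        exact lintegral_decay_smul_sub_le hα hr0 μ u
    _ = _ := by
        rw [show (4 : ℝ≥0∞) = 2 * 2 by norm_num, mul_pow]
        ring

theorem lintegral_decay_ne_top [FiniteDimensional ℝ V] (μ : Measure V) [μ.IsAddHaarMeasure] :
    ∫⁻ x, decay x ∂μ ≠ ∞ := by
  have h := finite_integral_one_add_norm (μ := μ) (r := (finrank ℝ V + 1 : ℕ))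
    (mod_cast Nat.lt_succ_self _)
  refine ((lintegral_congr fun x => ?_).trans_lt h).ne
  rw [decay, Real.rpow_neg (by positivity), Real.rpow_natCast]

end Decay

section Smoothing

open scoped SchwartzMap FourierTransform
open Module (finrank)

variable {V : Type*} [NormedAddCommGroup V] [InnerProductSpace ℝ V] [FiniteDimensional ℝ V]

theorem exists_schwartz_bump {ρ : ℝ} (hρ : 0 < ρ) :
    ∃ b : 𝓢(V, ℂ), (∀ x, ‖x‖ ≤ ρ → b x = 1) ∧ ∀ x, 2 * ρ ≤ ‖x‖ → b x = 0 := by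
  let g : ContDiffBump (0 : V) := ⟨ρ, 2 * ρ, hρ, by linarith⟩
  have hsupp : HasCompactSupport (fun x => (g x : ℂ)) :=
    g.hasCompactSupport.comp_left (g := ((↑) : ℝ → ℂ)) (by simp)
  have hsmooth : ContDiff ℝ (⊤ : ℕ∞) (fun x => (g x : ℂ)) :=
    Complex.ofRealCLM.contDiff.comp g.contDiff
  refine ⟨hsupp.toSchwartzMap hsmooth, fun x hx => ?_, fun x hx => ?_⟩
  · simp [show g x = 1 from g.one_of_mem_closedBall (by simpa using hx)]
  · simp [show g x = 0 from g.zero_of_le_dist (by simpa using hx)]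

variable [MeasurableSpace V] [BorelSpace V]

theorem fourier_translate (b : 𝓢(V, ℂ)) (ξ x : V) :
    𝓕 (b.compSubConstCLM ℂ (-((2 * Real.pi)⁻¹ • ξ))) x = 𝓕 b x * chr ξ x := by
  have h := congrFun (VectorFourier.fourierIntegral_comp_add_right Real.fourierChar volume
    (innerₗ V) b ((2 * Real.pi)⁻¹ • ξ)) x
  have hb : (b ∘ fun v => v + (2 * Real.pi)⁻¹ • ξ) =
      b.compSubConstCLM ℂ (-((2 * Real.pi)⁻¹ • ξ)) := by
    ext v
    simp
  rw [hb] at h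
  rw [SchwartzMap.fourier_coe, SchwartzMap.fourier_coe]
  refine h.trans ?_
  rw [Circle.smul_def, Real.fourierChar_apply, smul_eq_mul, mul_comm]
  congr 2
  simp only [innerₗ_apply_apply, real_inner_smul_left, real_inner_comm x ξ]
  congr 2
  field_simp

theorem charFun_withDensity_norm_fourier_sq (b : 𝓢(V, ℂ)) (ξ : V) :
    charFun (volume.withDensity fun x => ENNReal.ofReal (‖𝓕 b x‖ ^ 2)) ξ =
      ∫ x, inner ℂ (b x) (b (x + (2 * Real.pi)⁻¹ • ξ)) := by
  have hmeas : Measurable fun x => ENNReal.ofReal (‖𝓕 b x‖ ^ 2) :=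
    ((𝓕 b).continuous.norm.pow 2).measurable.ennreal_ofReal
  set b' := b.compSubConstCLM ℂ (-((2 * Real.pi)⁻¹ • ξ))
  have hinner : ∀ x, (ENNReal.ofReal (‖𝓕 b x‖ ^ 2)).toReal • chr ξ x =
      inner ℂ (𝓕 b x) (𝓕 b' x) := fun x => by
    rw [ENNReal.toReal_ofReal (by positivity), fourier_translate, RCLike.inner_apply,
      mul_right_comm, RCLike.mul_conj]
    simp
  calc _ = ∫ x, (ENNReal.ofReal (‖𝓕 b x‖ ^ 2)).toReal • chr ξ x :=
        integral_withDensity_eq_integral_toReal_smul hmeas (by simp) _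
    _ = ∫ x, inner ℂ (b x) (b' x) := by
        simp_rw [hinner, SchwartzMap.integral_inner_fourier_fourier]
    _ = _ := by simp [b']

/-- The density is `‖𝓕 b‖²` for a bump `b` of small support, whose characteristic function is the
autocorrelation of `b`. -/
theorem exists_bandLimited_ne_zero : ∃ ν : Measure V, IsFiniteMeasure ν ∧ ν ≠ 0 ∧
    BandLimited ν := by
  obtain ⟨b, hb1, hb0⟩ := exists_schwartz_bump (V := V) (ρ := (8 * Real.pi)⁻¹) (by positivity)
  have hsq : ∀ f : 𝓢(V, ℂ), Integrable fun x => ‖f x‖ ^ 2 :=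
    fun f => (f.memLp 2).integrable_norm_pow two_ne_zero
  refine ⟨volume.withDensity fun x => ENNReal.ofReal (‖𝓕 b x‖ ^ 2),
    isFiniteMeasure_withDensity (hsq (𝓕 b)).lintegral_lt_top.ne, fun h0 => ?_, fun ξ hξ => ?_⟩
  · have hzero : ∫ x, inner ℂ (b x) (b x) = 0 := by
      simpa only [h0, charFun_zero_measure, Pi.zero_apply, smul_zero, add_zero] using
        (charFun_withDensity_norm_fourier_sq b 0).symm
    have hnorm : ∫ x, ‖b x‖ ^ 2 = 0 := by
      have hcast := integral_ofReal (𝕜 := ℂ) (μ := volume) (f := fun x => ‖b x‖ ^ 2)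
      simp only [inner_self_eq_norm_sq_to_K] at hzero
      push_cast at hcast
      exact RCLike.ofReal_eq_zero.1 (hcast.symm.trans hzero)
    rw [integral_eq_zero_iff_of_nonneg (fun x => by positivity) (hsq b),
      Continuous.ae_eq_iff_eq volume (by fun_prop) (by fun_prop)] at hnorm
    simpa [hb1 0 (by rw [norm_zero]; positivity)] using congrFun hnorm 0
  · rw [charFun_withDensity_norm_fourier_sq]
    refine integral_eq_zero_of_ae (.of_forall fun x => ?_)
    rcases le_or_gt (2 * (8 * Real.pi)⁻¹) ‖x‖ with hx | hx
    · simp [hb0 x hx]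
    · have htri : ‖(2 * Real.pi)⁻¹ • ξ‖ ≤ ‖x + (2 * Real.pi)⁻¹ • ξ‖ + ‖x‖ := by
        simpa using norm_sub_le (x + (2 * Real.pi)⁻¹ • ξ) x
      rw [norm_smul, Real.norm_of_nonneg (by positivity)] at htri
      have hξ' : (2 * Real.pi)⁻¹ ≤ (2 * Real.pi)⁻¹ * ‖ξ‖ :=
        le_mul_of_one_le_right (by positivity) hξ
      have hpi : (2 * Real.pi)⁻¹ = 4 * (8 * Real.pi)⁻¹ := by field_simp; norm_num
      simp only [hb0 (x + (2 * Real.pi)⁻¹ • ξ) (by linarith), inner_zero_right, Pi.zero_apply]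

theorem exists_reproducing_kernel {ρ : ℝ} (hρ : 0 < ρ) :
    ∃ Φ : 𝓢(V, ℂ), ∀ ξ : V, ‖ξ‖ ≤ ρ → ∫ y, chr (-ξ) y * Φ y = 1 := by
  obtain ⟨b, hb1, -⟩ := exists_schwartz_bump (V := V) hρ
  refine ⟨𝓕⁻ b, fun ξ hξ => ?_⟩
  have hξ' : ‖(2 * Real.pi)⁻¹ • ξ‖ ≤ ρ := by
    rw [norm_smul, Real.norm_of_nonneg (by positivity), inv_mul_le_iff₀ (by positivity)]
    nlinarith [Real.pi_gt_three]
  calc ∫ y, chr (-ξ) y * 𝓕⁻ b y = 𝓕 (𝓕⁻ b) ((2 * Real.pi)⁻¹ • ξ) := by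
        rw [SchwartzMap.fourier_coe, Real.fourier_eq']
        refine integral_congr_ae (.of_forall fun y => ?_)
        simp only [smul_eq_mul, chr, inner_neg_right, real_inner_smul_right]
        congr 4
        field_simp
    _ = 1 := by rw [FourierTransform.fourier_fourierInv_eq, hb1 _ hξ']

theorem eq_integral_of_hasSpectrum {ρ : ℝ} {Φ : 𝓢(V, ℂ)}
    (hΦ : ∀ ξ : V, ‖ξ‖ ≤ ρ → ∫ y, chr (-ξ) y * Φ y = 1) {r : ℝ} (hr : 0 < r)
    {F : V → ℂ} (hF : HasSpectrum {ξ | ‖ξ‖ ≤ ρ * r} F) (x : V) :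
    F x = ∫ y, F (x - r⁻¹ • y) * Φ y := by
  have hint : ∀ G, HasSpectrum {ξ | ‖ξ‖ ≤ ρ * r} G →
      Integrable fun y => G (x - r⁻¹ • y) * Φ y := by
    intro G hG
    obtain ⟨hc, C, hC⟩ := hG.bddContinuous
    exact Φ.integrable.bdd_mul (c := C) (by fun_prop) (.of_forall fun y => hC _)
  induction hF using Submodule.span_induction with
  | mem f h =>
    obtain ⟨ξ, hξ, rfl⟩ := h
    have hsplit : ∀ y, chr ξ (x - r⁻¹ • y) = chr ξ x * chr (-(r⁻¹ • ξ)) y := by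
      intro y
      simp only [chr, inner_sub_left, real_inner_smul_left, inner_neg_right,
        real_inner_smul_right, ← Complex.exp_add]
      push_cast
      ring_nf
    simp_rw [hsplit, mul_assoc]
    rw [integral_const_mul, hΦ _ ?_, mul_one]
    rw [norm_smul, Real.norm_of_nonneg (by positivity), inv_mul_le_iff₀ hr, mul_comm]
    exact hξ
  | zero => simp
  | add f g hf hg ihf ihg =>
    simp only [Pi.add_apply, add_mul]
    rw [integral_add (hint f hf) (hint g hg), ← ihf, ← ihg]
  | smul c f hf ih =>
    simp only [Pi.smul_apply, smul_eq_mul, mul_assoc]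
    rw [integral_const_mul, ← ih]

theorem mul_lintegral_decay_mul_le (ν : Measure V) (N : ℕ) {g : V → ℝ≥0∞} (hg : Measurable g) :
    ν (closedBall 0 N) * ∫⁻ x, decay x * g x ≤ ENNReal.ofReal ((1 + N) ^ (finrank ℝ V + 1)) *
      ∫⁻ x, ∫⁻ y, g (x + y) ∂(volume.withDensity decay) ∂ν := by
  have htranslate : ∀ x ∈ closedBall (0 : V) N, ∫⁻ y, decay y * g y ≤
      ENNReal.ofReal ((1 + N) ^ (finrank ℝ V + 1)) *
        ∫⁻ y, g (x + y) ∂(volume.withDensity decay) := by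
    intro x hx
    rw [lintegral_withDensity_eq_lintegral_mul _ measurable_decay (by fun_prop),
      ← lintegral_const_mul' _ _ ENNReal.ofReal_ne_top, ← lintegral_add_left_eq_self _ x]
    refine lintegral_mono fun y => ?_
    rw [Pi.mul_apply, ← mul_assoc]
    gcongr
    exact decay_le_mul_decay_add (by simpa using hx) y
  rw [← lintegral_const_mul' _ _ ENNReal.ofReal_ne_top, mul_comm, ← setLIntegral_const]
  exact (setLIntegral_mono' measurableSet_closedBall htranslate).trans
    (setLIntegral_le_lintegral _ _)

theorem exists_bandLimited_lintegral_decay_mul_le : ∃ m : Measure V, IsFiniteMeasure m ∧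
    BandLimited m ∧ ∃ c : ℝ≥0∞, c ≠ ∞ ∧ ∀ g : V → ℝ≥0∞, Measurable g →
      ∫⁻ x, decay x * g x ≤ c * ∫⁻ x, g x ∂m := by
  obtain ⟨ν, hν, hν0, hνB⟩ := exists_bandLimited_ne_zero (V := V)
  obtain ⟨N, hN⟩ : ∃ N : ℕ, ν (closedBall 0 N) ≠ 0 := by
    by_contra! h
    apply hν0
    rw [← Measure.measure_univ_eq_zero, ← iUnion_closedBall_nat 0]
    exact measure_iUnion_null h
  have hdecay : IsFiniteMeasure (volume.withDensity (decay : V → ℝ≥0∞)) :=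
    isFiniteMeasure_withDensity (lintegral_decay_ne_top volume)
  refine ⟨ν.conv (volume.withDensity decay), inferInstance,
    fun ξ hξ => by rw [charFun_conv, hνB ξ hξ, zero_mul],
    ENNReal.ofReal ((1 + N) ^ (finrank ℝ V + 1)) * (ν (closedBall 0 N))⁻¹,
    ENNReal.mul_ne_top ENNReal.ofReal_ne_top (ENNReal.inv_ne_top.2 hN), fun g hg => ?_⟩
  rw [Measure.lintegral_conv hg, mul_right_comm, ← div_eq_mul_inv,
    ENNReal.le_div_iff_mul_le (.inl hN) (.inl (measure_ne_top _ _)), mul_comm]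
  exact mul_lintegral_decay_mul_le ν N hg

theorem lintegral_eq_ofReal_mul_lintegral_smul_sub {f : V → ℝ≥0∞} (hf : Measurable f) {r : ℝ}
    (hr : 0 < r) (x : V) :
    ∫⁻ y, f y = ENNReal.ofReal (r ^ finrank ℝ V) * ∫⁻ u, f (r • (x - u)) := by
  rw [lintegral_sub_left_eq_self (fun u => f (r • u)) x,
    ← lintegral_map hf (measurable_const_smul r), Measure.map_addHaar_smul _ hr.ne',
    lintegral_smul_measure, smul_eq_mul, ← mul_assoc, ← ENNReal.ofReal_mul (by positivity),
    abs_of_pos (by positivity), mul_inv_cancel₀ (by positivity), ENNReal.ofReal_one, one_mul]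

/-- The uncertainty principle: a function of frequency at most `ρ * r` is controlled by its
averages at scale `1 / r`. -/
theorem exists_enorm_pow_succ_le_lintegral {ρ : ℝ} (hρ : 0 < ρ) (n : ℕ) :
    ∃ C : ℝ≥0∞, C ≠ ∞ ∧ ∀ r : ℝ, 0 < r → ∀ F : V → ℂ, HasSpectrum {ξ | ‖ξ‖ ≤ ρ * r} F →
      ∀ x, ‖F x‖ₑ ^ (n + 1) ≤ C * (ENNReal.ofReal (r ^ finrank ℝ V) *
        ∫⁻ u, decay (r • (x - u)) ^ 2 * ‖F u‖ₑ ^ (n + 1)) := by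
  obtain ⟨Φ, hΦ⟩ := exists_reproducing_kernel (V := V) hρ
  obtain ⟨C, hC, hΦC⟩ := exists_enorm_le_mul_decay_sq Φ
  have hmeas : Measurable fun y : V => decay y ^ 2 := measurable_decay.pow_const 2
  set v := (volume : Measure V).withDensity fun y => decay y ^ 2 with hv
  have hvfin : v univ ≠ ∞ := by
    rw [hv, withDensity_apply _ MeasurableSet.univ, setLIntegral_univ]
    exact ne_top_of_le_ne_top (lintegral_decay_ne_top volume)
      (lintegral_mono fun x => pow_le_of_le_one zero_le (decay_le_one x) two_ne_zero)
  refine ⟨C ^ (n + 1) * v univ ^ n, by finiteness, fun r hr F hF x => ?_⟩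
  have hFm : Measurable fun y => ‖F (x - r⁻¹ • y)‖ₑ :=
    (hF.bddContinuous.1.comp (by fun_prop)).enorm.measurable
  have hle : ‖F x‖ₑ ≤ C * ∫⁻ y, ‖F (x - r⁻¹ • y)‖ₑ ∂v := by
    rw [hv, lintegral_withDensity_eq_lintegral_mul _ hmeas hFm, ← lintegral_const_mul' _ _ hC,
      eq_integral_of_hasSpectrum hΦ hr hF x]
    refine (enorm_integral_le_lintegral_enorm _).trans (lintegral_mono fun y => ?_)
    rw [enorm_mul, Pi.mul_apply, ← mul_assoc, mul_comm]
    gcongr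
    exact hΦC y
  calc ‖F x‖ₑ ^ (n + 1) ≤ C ^ (n + 1) * (∫⁻ y, ‖F (x - r⁻¹ • y)‖ₑ ∂v) ^ (n + 1) := by
        rw [← mul_pow]
        gcongr
    _ ≤ C ^ (n + 1) * (v univ ^ n * ∫⁻ y, ‖F (x - r⁻¹ • y)‖ₑ ^ (n + 1) ∂v) := by
        gcongr
        exact lintegral_pow_succ_le v hFm.aemeasurable n
    _ = _ := by
        rw [hv, lintegral_withDensity_eq_lintegral_mul _ hmeas (hFm.pow_const _),
          lintegral_eq_ofReal_mul_lintegral_smul_sub (hmeas.mul (hFm.pow_const _)) hr x, mul_assoc]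
        simp [smul_smul, inv_mul_cancel₀ hr.ne']

theorem exists_bandLimited_lintegral_pow_le {ρ : ℝ} (hρ : 0 < ρ) (n : ℕ) :
    ∃ m : Measure V, IsFiniteMeasure m ∧ BandLimited m ∧ ∃ C : ℝ≥0∞, C ≠ ∞ ∧
      ∀ α r : ℝ, α ≤ finrank ℝ V → 1 ≤ r → ∀ (μ : Measure V) [SFinite μ],
      μ (closedBall 0 1)ᶜ = 0 → ∀ F : V → ℂ, HasSpectrum {ξ | ‖ξ‖ ≤ ρ * r} F →
        ∫⁻ x, ‖F x‖ₑ ^ (n + 1) ∂μ ≤ C * frostmanConst μ α *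
          ENNReal.ofReal (r ^ (finrank ℝ V - α)) * ∫⁻ x, ‖F x‖ₑ ^ (n + 1) ∂m := by
  obtain ⟨m, hm, hmB, c, hc, hmc⟩ := exists_bandLimited_lintegral_decay_mul_le (V := V)
  obtain ⟨C, hC, hF⟩ := exists_enorm_pow_succ_le_lintegral (V := V) hρ n
  refine ⟨m, hm, hmB, C * 4 ^ (finrank ℝ V + 1) * c, by finiteness,
    fun α r hα hr μ _ hμ F hFS => ?_⟩
  have hr0 : 0 < r := by linarith
  have hFm : Measurable fun x => ‖F x‖ₑ ^ (n + 1) :=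
    hFS.bddContinuous.1.enorm.measurable.pow_const _
  have hDm : Measurable fun p : V × V => decay (r • (p.1 - p.2)) ^ 2 :=
    (measurable_decay.comp (by fun_prop)).pow_const 2
  set M := 4 ^ (finrank ℝ V + 1) * frostmanConst μ α * ENNReal.ofReal (r ^ (-α))
  have hscale : ENNReal.ofReal (r ^ (finrank ℝ V - α)) =
      ENNReal.ofReal (r ^ finrank ℝ V) * ENNReal.ofReal (r ^ (-α)) := by
    rw [← ENNReal.ofReal_mul (by positivity), sub_eq_add_neg, Real.rpow_add hr0, Real.rpow_natCast]
  calc ∫⁻ x, ‖F x‖ₑ ^ (n + 1) ∂μ ≤ ∫⁻ x, C * (ENNReal.ofReal (r ^ finrank ℝ V) *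
          ∫⁻ u, decay (r • (x - u)) ^ 2 * ‖F u‖ₑ ^ (n + 1)) ∂μ := lintegral_mono (hF r hr0 F hFS)
    _ = C * (ENNReal.ofReal (r ^ finrank ℝ V) *
          ∫⁻ u, (∫⁻ x, decay (r • (x - u)) ^ 2 ∂μ) * ‖F u‖ₑ ^ (n + 1)) := by
        rw [lintegral_const_mul' _ _ hC, lintegral_const_mul' _ _ ENNReal.ofReal_ne_top,
          lintegral_lintegral_swap (hDm.mul (hFm.comp measurable_snd)).aemeasurable]
        exact congrArg (fun I => C * (_ * I))
          (lintegral_congr fun u => lintegral_mul_const' _ _ (by finiteness))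
    _ ≤ C * (ENNReal.ofReal (r ^ finrank ℝ V) * ∫⁻ u, M * (decay u * ‖F u‖ₑ ^ (n + 1))) := by
        gcongr C * (_ * ?_)
        refine lintegral_mono fun u => ?_
        exact (mul_le_mul_left (lintegral_decay_smul_sub_sq_le hα hr hμ u) _).trans_eq
          (mul_assoc _ _ _)
    _ ≤ C * (ENNReal.ofReal (r ^ finrank ℝ V) * (M * (c * ∫⁻ u, ‖F u‖ₑ ^ (n + 1) ∂m))) := by
        rw [lintegral_const_mul M (by exact measurable_decay.mul hFm)]
        gcongr
        exact hmc _ hFm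
    _ = _ := by
        rw [hscale]
        ring

end Smoothing

section Fejer

/-- The Fourier multiplier of the Fejér kernel of order `N`. -/
def fejerWeight (N n : ℕ) : ℝ := 1 - n / N

/-- The part of the Fejér kernel of order `N` with frequencies in `[p, q)`. -/
def fejerPiece (N p q : ℕ) (v : ℝ) : ℂ :=
  ∑ n ∈ Finset.Ico p q, (fejerWeight N n : ℂ) * Circle.exp v ^ n

/-- The Fejér kernel of order `N`, normalised to have integral `2 * π` over a period. -/
def fejerKernel (N : ℕ) (v : ℝ) : ℝ :=
  ‖∑ i ∈ Finset.range N, (Circle.exp v : ℂ) ^ i‖ ^ 2 / N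

/-- The Fourier coefficients, up to a factor `2 * π`, of the convolution of the indicator function
of `E` with the Fejér kernel of order `N`. -/
def fejerCoeff (E : Set ℝ) (N n : ℕ) : ℂ :=
  fejerWeight N n * ∫ u in E, (Circle.exp (-u) : ℂ) ^ n

theorem fejerWeight_mem_Icc {N n : ℕ} (h : n ≤ N) : fejerWeight N n ∈ Icc (0 : ℝ) 1 :=
  ⟨sub_nonneg.2 (div_le_one_of_le₀ (by exact_mod_cast h) (by positivity)),
    sub_le_self _ (by positivity)⟩

theorem norm_fejerWeight_mul {N n : ℕ} (h : n ≤ N) (z : ℂ) :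
    ‖(fejerWeight N n : ℂ) * z‖ = fejerWeight N n * ‖z‖ := by
  rw [norm_mul, Complex.norm_real, Real.norm_of_nonneg (fejerWeight_mem_Icc h).1]

@[fun_prop]
theorem continuous_fejerPiece (N p q : ℕ) : Continuous (fejerPiece N p q) := by
  unfold fejerPiece
  fun_prop

@[fun_prop]
theorem continuous_fejerKernel (N : ℕ) : Continuous (fejerKernel N) := by
  unfold fejerKernel
  fun_prop

theorem fejerKernel_nonneg (N : ℕ) (v : ℝ) : 0 ≤ fejerKernel N v := by
  unfold fejerKernel
  positivity

theorem periodic_fejerPiece (N p q : ℕ) :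
    Function.Periodic (fejerPiece N p q) (2 * Real.pi) := fun v => by
  simp only [fejerPiece, Circle.periodic_exp v]

theorem norm_fejerPiece_le {N p q : ℕ} (hq : q ≤ N) (v : ℝ) : ‖fejerPiece N p q v‖ ≤ N := by
  calc ‖fejerPiece N p q v‖ ≤ ∑ _n ∈ Finset.Ico p q, (1 : ℝ) := by
        refine norm_sum_le_of_le _ fun n hn => ?_
        have hn : n ≤ N := by grind
        rw [norm_fejerWeight_mul hn, norm_pow, Circle.norm_coe, one_pow, mul_one]
        exact (fejerWeight_mem_Icc hn).2
    _ ≤ N := by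
        simp only [Finset.sum_const, Nat.card_Ico, nsmul_eq_mul, mul_one]
        exact_mod_cast (Nat.sub_le _ _).trans hq

-- Summation by parts.
theorem mul_fejerPiece_eq (N : ℕ) {p q : ℕ} (hpq : p ≤ q) (v : ℝ) :
    ((Circle.exp v : ℂ) - 1) * fejerPiece N p q v =
      fejerWeight N q * (Circle.exp v : ℂ) ^ q - fejerWeight N p * (Circle.exp v : ℂ) ^ p +
        (N : ℂ)⁻¹ * ∑ n ∈ Finset.Ico p q, (Circle.exp v : ℂ) ^ (n + 1) := by
  induction q, hpq using Nat.le_induction with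
  | base => simp [fejerPiece]
  | succ q hq ih =>
    rw [fejerPiece, Finset.sum_Ico_succ_top hq, mul_add, ← fejerPiece, ih,
      Finset.sum_Ico_succ_top hq]
    simp only [fejerWeight]
    push_cast
    ring

theorem norm_mul_fejerPiece_le {N p q : ℕ} (hpq : p ≤ q) (hq : q ≤ N) (v : ℝ) :
    ‖(Circle.exp v : ℂ) - 1‖ * ‖fejerPiece N p q v‖ ≤ 2 := by
  have hsum : ‖∑ n ∈ Finset.Ico p q, (Circle.exp v : ℂ) ^ (n + 1)‖ ≤ (q : ℝ) - p :=
    (norm_sum_le_of_le _ (n := fun _ => 1) fun n _ => by simp).trans_eq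
      (by simp [Nat.cast_sub hpq])
  have hp0 : 0 ≤ (p : ℝ) / N := by positivity
  rw [← norm_mul, mul_fejerPiece_eq N hpq]
  calc _ ≤ ‖(fejerWeight N q : ℂ) * (Circle.exp v : ℂ) ^ q‖
          + ‖(fejerWeight N p : ℂ) * (Circle.exp v : ℂ) ^ p‖
          + ‖(N : ℂ)⁻¹ * ∑ n ∈ Finset.Ico p q, (Circle.exp v : ℂ) ^ (n + 1)‖ :=
        (norm_add_le _ _).trans (by gcongr; exact norm_sub_le _ _)
    _ ≤ fejerWeight N q + fejerWeight N p + (N : ℝ)⁻¹ * ((q : ℝ) - p) := by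
        rw [norm_fejerWeight_mul hq, norm_fejerWeight_mul (hpq.trans hq), norm_mul, norm_inv,
          Complex.norm_natCast]
        simp only [norm_pow, Circle.norm_coe, one_pow, mul_one]
        gcongr
    _ = 2 - 2 * (p / N) := by simp only [fejerWeight]; ring
    _ ≤ 2 := by linarith

theorem two_mul_abs_div_pi_le_norm_exp_sub_one {v : ℝ} (hv : |v| ≤ Real.pi) :
    2 * (|v| / Real.pi) ≤ ‖(Circle.exp v : ℂ) - 1‖ := by
  rw [Circle.coe_exp, mul_comm (v : ℂ), Complex.norm_exp_I_mul_ofReal_sub_one, norm_mul,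
    Real.norm_two, Real.norm_eq_abs, Real.abs_sin_eq_sin_abs_of_abs_le_pi
      (by rw [abs_div, abs_two]; linarith [abs_nonneg v]), abs_div, abs_two]
  calc 2 * (|v| / Real.pi) = 2 * (2 / Real.pi * (|v| / 2)) := by ring
    _ ≤ 2 * Real.sin (|v| / 2) := by
        gcongr
        exact Real.mul_le_sin (by positivity) (by linarith)

theorem norm_fejerPiece_le_rpow {N p q : ℕ} (hpq : p ≤ q) (hq : q ≤ N) {η : ℝ} (hη : η ∈ Icc 0 1)
    {v : ℝ} (hv : v ≠ 0) (hvπ : |v| ≤ Real.pi) :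
    ‖fejerPiece N p q v‖ ≤ N ^ η * Real.pi * |v| ^ (η - 1) := by
  have hv0 : 0 < |v| := abs_pos.2 hv
  have hη1 : 0 ≤ 1 - η := sub_nonneg.2 hη.2
  have hdecay : ‖fejerPiece N p q v‖ ≤ Real.pi * |v|⁻¹ := by
    rw [show Real.pi * |v|⁻¹ = 1 / (|v| / Real.pi) by field_simp, le_div_iff₀' (by positivity)]
    nlinarith [norm_nonneg (fejerPiece N p q v), norm_mul_fejerPiece_le hpq hq v,
      two_mul_abs_div_pi_le_norm_exp_sub_one hvπ]
  calc ‖fejerPiece N p q v‖ = ‖fejerPiece N p q v‖ ^ η * ‖fejerPiece N p q v‖ ^ (1 - η) := by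
        rw [← Real.rpow_add' (norm_nonneg _) (by simp), add_sub_cancel, Real.rpow_one]
    _ ≤ N ^ η * (Real.pi * |v|⁻¹) ^ (1 - η) := by
        have := hη.1
        gcongr
        exact norm_fejerPiece_le hq v
    _ ≤ N ^ η * (Real.pi * |v| ^ (η - 1)) := by
        rw [Real.mul_rpow (by positivity) (by positivity), Real.inv_rpow hv0.le,
          ← Real.rpow_neg hv0.le, neg_sub]
        gcongr
        exact Real.rpow_le_self_of_one_le (by linarith [Real.pi_gt_three]) (by linarith [hη.1])
    _ = _ := by ring

theorem integral_le_of_le_rpow {g : ℝ → ℝ} (hg : Continuous g) {A η b : ℝ} (hb : 0 ≤ b)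
    (hη : 0 < η) (hle : ∀ v ∈ Ioo 0 b, g v ≤ A * v ^ (η - 1)) :
    ∫ v in (0)..b, g v ≤ A * (b ^ η / η) := by
  calc ∫ v in (0)..b, g v ≤ ∫ v in (0)..b, A * v ^ (η - 1) :=
        intervalIntegral.integral_mono_on_of_le_Ioo hb (hg.intervalIntegrable _ _)
          ((intervalIntegral.intervalIntegrable_rpow' (by linarith)).const_mul _) hle
    _ = _ := by
        rw [intervalIntegral.integral_const_mul, integral_rpow (.inl (by linarith)),
          sub_add_cancel, Real.zero_rpow hη.ne', sub_zero]

theorem integral_norm_fejerPiece_le {N p q : ℕ} (hpq : p ≤ q) (hq : q ≤ N) {η : ℝ}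
    (hη : η ∈ Ioc 0 1) :
    ∫ v in (-Real.pi)..Real.pi, ‖fejerPiece N p q v‖ ≤ 2 * Real.pi ^ (1 + η) / η * N ^ η := by
  have hint : ∀ a b, IntervalIntegrable (fun v => ‖fejerPiece N p q v‖) volume a b :=
    fun a b => Continuous.intervalIntegrable (by fun_prop) _ _
  have hneg : ∫ v in (-Real.pi)..0, ‖fejerPiece N p q v‖ =
      ∫ v in (0)..Real.pi, ‖fejerPiece N p q (-v)‖ := by
    rw [intervalIntegral.integral_comp_neg (fun v => ‖fejerPiece N p q v‖), neg_zero]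
  have hle : ∀ v ∈ Ioo 0 Real.pi, ∀ u, |u| = v →
      ‖fejerPiece N p q u‖ ≤ N ^ η * Real.pi * v ^ (η - 1) := by
    rintro _ hv u rfl
    exact norm_fejerPiece_le_rpow hpq hq ⟨hη.1.le, hη.2⟩ (abs_pos.1 hv.1) hv.2.le
  rw [← intervalIntegral.integral_add_adjacent_intervals (hint _ 0) (hint 0 _), hneg]
  calc _ ≤ N ^ η * Real.pi * (Real.pi ^ η / η) + N ^ η * Real.pi * (Real.pi ^ η / η) :=
        add_le_add
          (integral_le_of_le_rpow (by fun_prop) Real.pi_pos.le hη.1 fun v hv =>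
            hle v hv _ (by rw [abs_neg, abs_of_pos hv.1]))
          (integral_le_of_le_rpow (by fun_prop) Real.pi_pos.le hη.1 fun v hv =>
            hle v hv _ (abs_of_pos hv.1))
    _ = _ := by
        rw [Real.rpow_add Real.pi_pos, Real.rpow_one]
        ring

theorem sum_natCast_sub_mul_pow_succ {R : Type*} [CommRing R] (z : R) (N : ℕ) :
    ∑ d ∈ Finset.range (N + 1), (((N + 1 : ℕ) : R) - d) * z ^ d =
      ∑ d ∈ Finset.range N, ((N : R) - d) * z ^ d + ∑ i ∈ Finset.range (N + 1), z ^ i := by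
  rw [Finset.sum_range_succ, Finset.sum_range_succ (fun i => z ^ i), ← add_assoc,
    ← Finset.sum_add_distrib]
  congr 1
  · exact Finset.sum_congr rfl fun d _ => by push_cast; ring
  · push_cast; ring

theorem sq_norm_geom_sum {z : ℂ} (hz : ‖z‖ = 1) (N : ℕ) :
    ‖∑ i ∈ Finset.range N, z ^ i‖ ^ 2 =
      2 * (∑ d ∈ Finset.range N, ((N : ℂ) - d) * z ^ d).re - N := by
  induction N with
  | zero => simp
  | succ N ih =>
    have hnorm : ‖z * (∑ i ∈ Finset.range N, z ^ i) + 1‖ ^ 2 =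
        ‖∑ i ∈ Finset.range N, z ^ i‖ ^ 2 + 2 * (z * ∑ i ∈ Finset.range N, z ^ i).re + 1 := by
      rw [Complex.sq_norm, Complex.normSq_add, ← Complex.sq_norm, norm_mul, hz]
      simp only [one_mul, map_one, mul_one]
      ring
    rw [sum_natCast_sub_mul_pow_succ, geom_sum_succ, hnorm, ih, Complex.add_re, Complex.add_re,
      Complex.one_re]
    push_cast
    ring

theorem fejerKernel_eq {N : ℕ} (hN : 1 ≤ N) (v : ℝ) :
    fejerKernel N v = 2 * (fejerPiece N 1 N v).re + 1 := by
  have hN0 : (N : ℝ) ≠ 0 := by positivity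
  have hsum : ∑ d ∈ Finset.range N, ((N : ℂ) - d) * (Circle.exp v : ℂ) ^ d =
      N * (1 + fejerPiece N 1 N v) := by
    rw [Finset.range_eq_Ico, Finset.sum_eq_sum_Ico_succ_bot hN, fejerPiece, mul_add,
      Finset.mul_sum]
    congr 1
    · simp
    · refine Finset.sum_congr rfl fun n _ => ?_
      have : (N : ℂ) ≠ 0 := by exact_mod_cast hN0
      rw [fejerWeight]
      push_cast
      field_simp
  rw [fejerKernel, sq_norm_geom_sum (Circle.norm_coe _), hsum, ← Complex.ofReal_natCast,
    Complex.re_ofReal_mul, Complex.add_re, Complex.one_re]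
  field_simp
  ring

theorem div_four_le_fejerKernel {N : ℕ} (hN : 1 ≤ N) {v : ℝ} (hv : |v| ≤ 1 / N) :
    (N : ℝ) / 4 ≤ fejerKernel N v := by
  have hN0 : (0 : ℝ) < N := by positivity
  have hcos : ∀ i ∈ Finset.range N, (1 / 2 : ℝ) ≤ ((Circle.exp v : ℂ) ^ i).re := by
    intro i hi
    have hiN : (i : ℝ) ≤ N := by exact_mod_cast (Finset.mem_range.1 hi).le
    have hiv : |(i : ℝ) * v| ≤ 1 := by
      rw [abs_mul, Nat.abs_cast]
      exact (mul_le_mul_of_nonneg_right hiN (abs_nonneg v)).trans ((le_div_iff₀' hN0).1 hv)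
    rw [← Circle.coe_pow, ← Circle.exp_natCast_mul, Circle.coe_exp, Complex.exp_ofReal_mul_I_re]
    linarith [Real.one_sub_sq_div_two_le_cos (x := i * v), (sq_le_one_iff_abs_le_one _).2 hiv]
  have hsum : (N : ℝ) / 2 ≤ ‖∑ i ∈ Finset.range N, (Circle.exp v : ℂ) ^ i‖ := by
    refine le_trans ?_ (Complex.re_le_norm _)
    rw [Complex.re_sum]
    calc (N : ℝ) / 2 = ∑ i ∈ Finset.range N, (1 / 2 : ℝ) := by
          rw [Finset.sum_const, Finset.card_range, nsmul_eq_mul, mul_one_div]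
      _ ≤ _ := Finset.sum_le_sum hcos
  rw [fejerKernel, le_div_iff₀ hN0]
  nlinarith

variable {E : Set ℝ}

theorem integrableOn_of_subset_Ioc {F : Type*} [NormedAddCommGroup F] {a b : ℝ} (hE : E ⊆ Ioc a b)
    {g : ℝ → F} (hg : Continuous g) : IntegrableOn g E :=
  hg.integrableOn_Ioc.mono_set hE

theorem sum_fejerCoeff_eq {a b : ℝ} (hE : E ⊆ Ioc a b) (N p q : ℕ) (s : ℝ) :
    ∑ n ∈ Finset.Ico p q, fejerCoeff E N n * (Circle.exp s : ℂ) ^ n =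
      ∫ u in E, fejerPiece N p q (s - u) := by
  simp only [fejerPiece]
  rw [integral_finsetSum _ fun n _ => integrableOn_of_subset_Ioc hE (by fun_prop)]
  refine Finset.sum_congr rfl fun n _ => ?_
  rw [fejerCoeff, integral_const_mul, mul_assoc, ← integral_mul_const]
  congr 2 with u
  rw [sub_eq_add_neg, Circle.exp_add, Circle.coe_mul, mul_pow, mul_comm]

theorem norm_sum_fejerCoeff_le (hE : E ⊆ Ioc (-Real.pi) Real.pi) {N p q : ℕ} (hpq : p ≤ q)
    (hq : q ≤ N) {η : ℝ} (hη : η ∈ Ioc 0 1) (s : ℝ) :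
    ‖∑ n ∈ Finset.Ico p q, fejerCoeff E N n * (Circle.exp s : ℂ) ^ n‖ ≤
      2 * Real.pi ^ (1 + η) / η * N ^ η := by
  have hper : Function.Periodic (fun v => ‖fejerPiece N p q v‖) (2 * Real.pi) :=
    (periodic_fejerPiece N p q).comp norm
  rw [sum_fejerCoeff_eq hE]
  calc ‖∫ u in E, fejerPiece N p q (s - u)‖ ≤ ∫ u in E, ‖fejerPiece N p q (s - u)‖ :=
        norm_integral_le_integral_norm _
    _ ≤ ∫ u in Ioc (-Real.pi) Real.pi, ‖fejerPiece N p q (s - u)‖ :=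
        setIntegral_mono_set (Continuous.integrableOn_Ioc (by fun_prop))
          (.of_forall fun u => norm_nonneg _) hE.eventuallyLE
    _ = ∫ u in (-Real.pi)..Real.pi, ‖fejerPiece N p q (s - u)‖ :=
        (intervalIntegral.integral_of_le (by linarith [Real.pi_pos])).symm
    _ = ∫ u in (s - Real.pi)..(s - Real.pi) + 2 * Real.pi, ‖fejerPiece N p q u‖ := by
        rw [intervalIntegral.integral_comp_sub_left (fun u => ‖fejerPiece N p q u‖)]
        ring_nf
    _ = ∫ u in (-Real.pi)..Real.pi, ‖fejerPiece N p q u‖ := by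
        rw [hper.intervalIntegral_add_eq _ (-Real.pi)]
        ring_nf
    _ ≤ _ := integral_norm_fejerPiece_le hpq hq hη

theorem fourierCoeffOn_indicator_eq (hE : E ⊆ Ioc (-Real.pi) Real.pi) (hEm : MeasurableSet E)
    (n : ℕ) :
    fourierCoeffOn (neg_lt_self Real.pi_pos) (E.indicator 1) n =
      (2 * Real.pi : ℂ)⁻¹ * ∫ u in E, (Circle.exp (-u) : ℂ) ^ n := by
  have hexp : ∀ u : ℝ, fourier (-n) (u : AddCircle (Real.pi - -Real.pi)) •
      E.indicator (1 : ℝ → ℂ) u = E.indicator (fun u => (Circle.exp (-u) : ℂ) ^ n) u := by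
    intro u
    by_cases hu : u ∈ E
    · rw [indicator_of_mem hu, indicator_of_mem hu, Pi.one_apply, smul_eq_mul, mul_one,
        fourier_coe_apply, Circle.coe_exp, ← Complex.exp_nat_mul]
      have : (Real.pi : ℂ) ≠ 0 := by exact_mod_cast Real.pi_ne_zero
      congr 1
      push_cast
      field_simp
      ring
    · simp [hu]
  rw [fourierCoeffOn_eq_integral, intervalIntegral.integral_of_le (by linarith [Real.pi_pos])]
  simp_rw [hexp]
  rw [integral_indicator hEm, Measure.restrict_restrict hEm, inter_eq_left.2 hE,
    Complex.real_smul]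
  congr 1
  push_cast
  ring

theorem hasSum_sq_fourierCoeffOn_indicator (hE : E ⊆ Ioc (-Real.pi) Real.pi)
    (hEm : MeasurableSet E) :
    HasSum (fun n : ℤ => ‖fourierCoeffOn (neg_lt_self Real.pi_pos) (E.indicator (1 : ℝ → ℂ)) n‖ ^ 2)
      ((2 * Real.pi)⁻¹ * volume.real E) := by
  have hsq : ∀ u, ‖E.indicator (1 : ℝ → ℂ) u‖ ^ 2 = E.indicator 1 u := fun u => by
    by_cases hu : u ∈ E <;> simp [hu]
  have hparseval := hasSum_sq_fourierCoeffOn (neg_lt_self Real.pi_pos)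
    ((memLp_const (1 : ℂ)).indicator hEm :
      MemLp (E.indicator 1) 2 (volume.restrict (Ioc (-Real.pi) Real.pi)))
  simp_rw [hsq] at hparseval
  rwa [intervalIntegral.integral_of_le (by linarith [Real.pi_pos]), integral_indicator_one hEm,
    measureReal_restrict_apply hEm, inter_eq_left.2 hE, smul_eq_mul, sub_neg_eq_add,
    ← two_mul] at hparseval

theorem norm_fejerCoeff_le (hE : E ⊆ Ioc (-Real.pi) Real.pi) (hEm : MeasurableSet E) {N n : ℕ}
    (hn : n ≤ N) :
    ‖fejerCoeff E N n‖ ≤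
      2 * Real.pi * ‖fourierCoeffOn (neg_lt_self Real.pi_pos) (E.indicator (1 : ℝ → ℂ)) n‖ := by
  rw [fourierCoeffOn_indicator_eq hE hEm, norm_mul, norm_inv, norm_mul, Complex.norm_real,
    Real.norm_of_nonneg Real.pi_pos.le, Complex.norm_ofNat,
    mul_inv_cancel_left₀ (by positivity), fejerCoeff, norm_fejerWeight_mul hn]
  exact mul_le_of_le_one_left (norm_nonneg _) (fejerWeight_mem_Icc hn).2

theorem sum_sq_norm_fejerCoeff_le (hE : E ⊆ Ioc (-Real.pi) Real.pi) (hEm : MeasurableSet E)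
    (N : ℕ) :
    ∑ n ∈ Finset.range N, ‖fejerCoeff E N n‖ ^ 2 ≤ 2 * Real.pi * volume.real E := by
  set a : ℤ → ℝ := fun n =>
    ‖fourierCoeffOn (neg_lt_self Real.pi_pos) (E.indicator (1 : ℝ → ℂ)) n‖ ^ 2
  calc ∑ n ∈ Finset.range N, ‖fejerCoeff E N n‖ ^ 2
      ≤ ∑ n ∈ Finset.range N, (2 * Real.pi) ^ 2 * a n := by
        refine Finset.sum_le_sum fun n hn => ?_
        rw [← mul_pow]
        gcongr
        exact norm_fejerCoeff_le hE hEm (Finset.mem_range.1 hn).le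
    _ = (2 * Real.pi) ^ 2 * ∑ n ∈ (Finset.range N).map Nat.castEmbedding, a n := by
        rw [Finset.sum_map, Finset.mul_sum]
        rfl
    _ ≤ (2 * Real.pi) ^ 2 * ((2 * Real.pi)⁻¹ * volume.real E) := by
        gcongr
        exact sum_le_hasSum _ (fun _ _ => by positivity)
          (hasSum_sq_fourierCoeffOn_indicator hE hEm)
    _ = 2 * Real.pi * volume.real E := by field_simp

theorem integral_fejerKernel_eq {a b : ℝ} (hE : E ⊆ Ioc a b) {N : ℕ} (hN : 1 ≤ N) (s : ℝ) :
    ∫ u in E, fejerKernel N (s - u) =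
      2 * (∑ n ∈ Finset.Ico 1 N, fejerCoeff E N n * (Circle.exp s : ℂ) ^ n).re +
        volume.real E := by
  have hint : IntegrableOn (fun u => fejerPiece N 1 N (s - u)) E :=
    integrableOn_of_subset_Ioc hE (by fun_prop)
  have hvol : volume.real E = ∫ _ in E, (1 : ℝ) := by
    rw [setIntegral_const, smul_eq_mul, mul_one]
  rw [sum_fejerCoeff_eq hE, ← RCLike.re_eq_complex_re, ← integral_re hint, ← integral_const_mul,
    hvol, ← integral_add (integrableOn_of_subset_Ioc hE (by fun_prop))
      (integrableOn_of_subset_Ioc hE (by fun_prop))]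
  congr 1 with u
  exact fejerKernel_eq hN _

theorem half_le_integral_fejerKernel {a b : ℝ} (hE : E ⊆ Ioc a b) {N : ℕ} (hN : 1 ≤ N) {s : ℝ}
    (hs : Icc (s - 1 / N) (s + 1 / N) ⊆ E) : 1 / 2 ≤ ∫ u in E, fejerKernel N (s - u) := by
  have hN0 : (0 : ℝ) < N := by positivity
  calc (1 / 2 : ℝ) = ∫ u in Icc (s - 1 / N) (s + 1 / N), (N : ℝ) / 4 := by
        rw [setIntegral_const, Real.volume_real_Icc_of_le (by linarith [one_div_pos.2 hN0]),
          smul_eq_mul]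
        field_simp
        ring
    _ ≤ ∫ u in Icc (s - 1 / N) (s + 1 / N), fejerKernel N (s - u) := by
        refine setIntegral_mono_on (by simp) (Continuous.integrableOn_Icc (by fun_prop))
          measurableSet_Icc fun u hu => div_four_le_fejerKernel hN ?_
        rw [abs_le]
        exact ⟨by linarith [hu.2], by linarith [hu.1]⟩
    _ ≤ _ := setIntegral_mono_set (integrableOn_of_subset_Ioc hE (by fun_prop))
        (.of_forall fun u => fejerKernel_nonneg N _) hs.eventuallyLE

end Fejer

section PlaneWaves

open Module (finrank)

variable {V : Type*} [NormedAddCommGroup V] [InnerProductSpace ℝ V]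

/-- The plane wave in direction `ξ` whose profile is the part with frequencies in `[p, q)` of the
convolution of the indicator function of `E` with the Fejér kernel of order `N`. -/
def fejerWave (E : Set ℝ) (N p q : ℕ) (ξ x : V) : ℂ :=
  ∑ n ∈ Finset.Ico p q, fejerCoeff E N n * (Circle.exp ⟪x, ξ⟫ : ℂ) ^ n

theorem chr_natCast_smul (n : ℕ) (ξ x : V) :
    chr ((n : ℝ) • ξ) x = (Circle.exp ⟪x, ξ⟫ : ℂ) ^ n := by
  rw [chr, Circle.coe_exp, ← Complex.exp_nat_mul, real_inner_smul_right]
  push_cast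
  ring_nf

theorem hasSpectrum_fejerWave (E : Set ℝ) (N : ℕ) {p q : ℕ} {ξ : V} {S : Set V}
    (hS : ∀ n ∈ Finset.Ico p q, (n : ℝ) • ξ ∈ S) : HasSpectrum S (fejerWave E N p q ξ) := by
  unfold fejerWave
  simp_rw [← chr_natCast_smul]
  exact HasSpectrum.sum _ fun n hn => (HasSpectrum.chr (hS n hn)).const_mul _

@[fun_prop]
theorem bddContinuous_fejerWave (E : Set ℝ) (N p q : ℕ) (ξ : V) :
    BddContinuous (fejerWave E N p q ξ) :=
  (hasSpectrum_fejerWave E N fun _ _ => mem_univ _).bddContinuous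

theorem sum_range_sum_Ico {M : Type*} [AddCommMonoid M] {u : ℕ → ℕ} (hu : Monotone u) (g : ℕ → M)
    (m : ℕ) : ∑ i ∈ Finset.range m, ∑ n ∈ Finset.Ico (u i) (u (i + 1)), g n =
      ∑ n ∈ Finset.Ico (u 0) (u m), g n := by
  induction m with
  | zero => simp
  | succ m ih =>
    rw [Finset.sum_range_succ, ih, Finset.sum_Ico_consecutive _ (hu m.zero_le) (hu m.le_succ)]

theorem sum_range_fejerWave {u : ℕ → ℕ} (hu : Monotone u) (E : Set ℝ) (N m : ℕ) (ξ x : V) :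
    ∑ i ∈ Finset.range m, fejerWave E N (u i) (u (i + 1)) ξ x = fejerWave E N (u 0) (u m) ξ x :=
  sum_range_sum_Ico hu _ m

variable [MeasurableSpace V] [BorelSpace V]

theorem BandLimited.integral_norm_sq_sum_le [SecondCountableTopology V] {m : Measure V}
    [IsFiniteMeasure m] (hm : BandLimited m) {ξ : V} (hξ : 1 ≤ ‖ξ‖) (s : Finset ℕ) (d : ℕ → ℂ) :
    ∫ x, ‖∑ n ∈ s, d n * chr ((n : ℝ) • ξ) x‖ ^ 2 ∂m ≤ 2 * m.real univ * ∑ n ∈ s, ‖d n‖ ^ 2 := by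
  have hspec : ∀ n : ℕ, HasSpectrum {(n : ℝ) • ξ} fun x => d n * chr ((n : ℝ) • ξ) x :=
    fun n => (HasSpectrum.chr (mem_singleton _)).const_mul _
  have horth : ∀ i ∈ s, ∀ j ∈ s, Separated 1 i j → ∫ x, d i * chr ((i : ℝ) • ξ) x *
      starRingEnd ℂ (d j * chr ((j : ℝ) • ξ) x) * ((1 : ℝ) : ℂ) ∂m = 0 := by
    intro i _ j _ hij
    simp only [Complex.ofReal_one, mul_one]
    refine hm.integral_eq_zero ?_ ((hspec i).mul (hspec j).conj)
    rintro _ ⟨_, rfl, _, hj, rfl⟩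
    have hij' : 1 ≤ |(i : ℝ) - j| := by
      rw [le_abs]
      rcases hij with hij | hij
      · exact .inr (by linarith [(by exact_mod_cast hij : (i : ℝ) + 1 ≤ j)])
      · exact .inl (by linarith [(by exact_mod_cast hij : (j : ℝ) + 1 ≤ i)])
    rw [Set.mem_neg, mem_singleton_iff, neg_eq_iff_eq_neg] at hj
    change 1 ≤ ‖(i : ℝ) • ξ + _‖
    rw [hj, ← sub_eq_add_neg, ← sub_smul, norm_smul, Real.norm_eq_abs]
    exact one_le_mul_of_one_le_of_one_le hij' hξ
  have h := integral_norm_sum_sq_mul_le_of_separated m s (fun n => (hspec n).bddContinuous)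
    (BddContinuous.const (1 : ℝ)) (fun _ => zero_le_one) 1 horth
  simp only [mul_one, norm_mul, norm_chr, Nat.cast_one, integral_const, smul_eq_mul,
    ← Finset.mul_sum] at h
  exact h.trans_eq (by ring)

theorem BandLimited.integral_norm_sq_fejerWave_le [SecondCountableTopology V] {m : Measure V}
    [IsFiniteMeasure m] (hm : BandLimited m) {ξ : V} (hξ : 1 ≤ ‖ξ‖) {E : Set ℝ}
    (hE : E ⊆ Ioc (-Real.pi) Real.pi) (hEm : MeasurableSet E) (p : ℕ) {N q : ℕ} (hq : q ≤ N) :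
    ∫ x, ‖fejerWave E N p q ξ x‖ ^ 2 ∂m ≤ 4 * Real.pi * m.real univ * volume.real E := by
  unfold fejerWave
  simp_rw [← chr_natCast_smul]
  calc _ ≤ 2 * m.real univ * ∑ n ∈ Finset.Ico p q, ‖fejerCoeff E N n‖ ^ 2 :=
        hm.integral_norm_sq_sum_le hξ _ _
    _ ≤ 2 * m.real univ * ∑ n ∈ Finset.range N, ‖fejerCoeff E N n‖ ^ 2 := by
        gcongr
        intro n hn
        grind
    _ ≤ 2 * m.real univ * (2 * Real.pi * volume.real E) := by
        gcongr
        exact sum_sq_norm_fejerCoeff_le hE hEm N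
    _ = _ := by ring

variable {γ : ℝ → V} {I : Set ℝ} {ι : Type*} {β η : ℝ}

theorem ConeFrame.exists_integral_norm_weighted_fejerWave_pow_six_le [SecondCountableTopology V]
    (H : ConeFrame γ I) (hγ : ∀ θ ∈ I, ‖γ θ‖ = 1) (hη : η ∈ Ioc 0 1) (hβ : β ≤ 1) :
    ∃ κ ∈ Ioc (0 : ℝ) 1, ∃ C > 0, ∀ (m : Measure V) [IsFiniteMeasure m], BandLimited m →
      ∀ (s : Finset ι) (θ w : ι → ℝ) (E : ι → Set ℝ) (N p q : ℕ) (r θ₀ Λ A : ℝ), 1 ≤ r →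
      r ≤ p → p ≤ q → q ≤ N → (∀ n < q, (n : ℝ) ≤ (1 + κ) * r) →
      (∀ k ∈ s, θ k ∈ I ∩ Ico θ₀ (θ₀ + H.h)) → IsFrostmanWeight s θ w (1 / r) Λ β →
      (∀ k ∈ s, MeasurableSet (E k) ∧ E k ⊆ Ioc (-Real.pi) Real.pi ∧ volume.real (E k) ≤ A) →
      0 ≤ A →
      ∫ x, ‖∑ k ∈ s, (w k : ℂ) * fejerWave (E k) N p q (γ (θ k)) x‖ ^ 6 ∂m ≤
        C * (N : ℝ) ^ (5 * η) * m.real univ *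
          (r ^ (-(2 * β)) * Λ ^ 3 * A * (∑ k ∈ s, w k) ^ 3) := by
  obtain ⟨κ, hκ, C, hC, hdec⟩ := H.exists_integral_norm_weighted_sum_pow_six_le (ι := ι) hη.1 hβ
  set B : ℝ := 2 * Real.pi ^ (1 + η) / η
  have hB : 0 < B := by have := hη.1; positivity
  refine ⟨κ, hκ, C * (4 * Real.pi) * B ^ 4, by positivity, fun m _ hm s θ w E N p q r θ₀ Λ A hr
    hrp hpq hqN hn hθ hw hE hA => ?_⟩
  have : 0 < r := by linarith
  have hrN : r ≤ N := hrp.trans (by exact_mod_cast hpq.trans hqN)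
  have hspec : ∀ k, HasSpectrum (coneArc γ {θ k} r κ) (fejerWave (E k) N p q (γ (θ k))) :=
    fun k => hasSpectrum_fejerWave _ _ fun n hnpq => ⟨n, ⟨hrp.trans (by
      exact_mod_cast (Finset.mem_Ico.1 hnpq).1), hn n (Finset.mem_Ico.1 hnpq).2⟩, θ k, rfl, rfl⟩
  have hsq : ∀ k ∈ s, ∫ x, ‖fejerWave (E k) N p q (γ (θ k)) x‖ ^ 2 ∂m ≤
      4 * Real.pi * m.real univ * A := fun k hk =>
    (hm.integral_norm_sq_fejerWave_le (hγ _ (hθ k hk).1).ge (hE k hk).2.1 (hE k hk).1 p hqN).trans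
      (by gcongr; exact (hE k hk).2.2)
  have hsup : ∀ k ∈ s, ∀ x, ‖fejerWave (E k) N p q (γ (θ k)) x‖ ≤ B * (N : ℝ) ^ η := fun k hk x =>
    norm_sum_fejerCoeff_le (hE k hk).2.1 hpq hqN hη _
  have hNη : (N : ℝ) ^ η * ((N : ℝ) ^ η) ^ 4 = (N : ℝ) ^ (5 * η) := by
    rw [← pow_succ', ← Real.rpow_mul_natCast (by positivity)]
    push_cast
    ring_nf
  have hΛ := hw.const_nonneg
  have hW := hw.sum_nonneg
  calc _ ≤ C * r ^ η * (Λ ^ 3 * r ^ (-(2 * β)) * (4 * Real.pi * m.real univ * A) *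
          (B * (N : ℝ) ^ η) ^ 4 * (∑ k ∈ s, w k) ^ 3) :=
        hdec m hm s θ w _ r θ₀ Λ _ _ hr hθ hw hspec (by positivity) hsq hsup
    _ ≤ C * (N : ℝ) ^ η * (Λ ^ 3 * r ^ (-(2 * β)) * (4 * Real.pi * m.real univ * A) *
          (B * (N : ℝ) ^ η) ^ 4 * (∑ k ∈ s, w k) ^ 3) := by
        have := hη.1.le
        gcongr
    _ = C * (4 * Real.pi) * B ^ 4 * ((N : ℝ) ^ η * ((N : ℝ) ^ η) ^ 4) * m.real univ *
          (r ^ (-(2 * β)) * Λ ^ 3 * A * (∑ k ∈ s, w k) ^ 3) := by ring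
    _ = _ := by rw [hNη]

theorem exists_bandLimited_pow_integral_norm_le [FiniteDimensional ℝ V] {ρ : ℝ} (hρ : 0 < ρ)
    (n : ℕ) :
    ∃ m : Measure V, IsFiniteMeasure m ∧ BandLimited m ∧ ∃ C ≥ 0, ∀ α r : ℝ, α ≤ finrank ℝ V →
      1 ≤ r → ∀ (μ : Measure V) [IsFiniteMeasure μ], μ (closedBall 0 1)ᶜ = 0 →
      frostmanConst μ α ≤ 1 → ∀ F, HasSpectrum {ξ | ‖ξ‖ ≤ ρ * r} F →
        (∫ x, ‖F x‖ ∂μ) ^ (n + 1) ≤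
          μ.real univ ^ n * (C * r ^ (finrank ℝ V - α) * ∫ x, ‖F x‖ ^ (n + 1) ∂m) := by
  obtain ⟨m, hm, hmB, C, hC, hle⟩ := exists_bandLimited_lintegral_pow_le (V := V) hρ n
  refine ⟨m, hm, hmB, C.toReal, ENNReal.toReal_nonneg, fun α r hα hr μ _ hμ hμα F hF => ?_⟩
  have hFb := hF.bddContinuous
  have hFm : ENNReal.ofReal (∫ x, ‖F x‖ ^ (n + 1) ∂m) = ∫⁻ x, ‖F x‖ₑ ^ (n + 1) ∂m := by
    rw [ofReal_integral_eq_lintegral_ofReal (BddContinuous.integrable (by fun_prop))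
      (.of_forall fun x => by positivity)]
    simp only [ENNReal.ofReal_pow (norm_nonneg _), ofReal_norm]
  rw [← ENNReal.ofReal_le_ofReal_iff (by positivity), ENNReal.ofReal_pow (by positivity),
    ENNReal.ofReal_mul (by positivity), ENNReal.ofReal_mul (by positivity),
    ENNReal.ofReal_mul (by positivity), ENNReal.ofReal_pow (by positivity), hFm, ofReal_measureReal,
    ENNReal.ofReal_toReal hC, ofReal_integral_norm_eq_lintegral_enorm hFb.integrable]
  calc _ ≤ μ univ ^ n * ∫⁻ x, ‖F x‖ₑ ^ (n + 1) ∂μ :=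
        lintegral_pow_succ_le μ hFb.1.enorm.aemeasurable n
    _ ≤ μ univ ^ n * (C * frostmanConst μ α * ENNReal.ofReal (r ^ (finrank ℝ V - α)) *
          ∫⁻ x, ‖F x‖ₑ ^ (n + 1) ∂m) := by
        gcongr
        exact hle α r hα hr μ hμ F hF
    _ ≤ _ := by
        gcongr
        exact mul_le_of_le_one_right' hμα

theorem ConeFrame.exists_pow_six_integral_norm_weighted_fejerWave_le [FiniteDimensional ℝ V]
    (H : ConeFrame γ I) (hγ : ∀ θ ∈ I, ‖γ θ‖ = 1) (hη : η ∈ Ioc 0 1) (hβ : β ∈ Icc 0 1) :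
    ∃ κ ∈ Ioc (0 : ℝ) 1, ∃ C > 0, ∀ (μ : Measure V) [IsFiniteMeasure μ],
      μ (closedBall 0 1)ᶜ = 0 → frostmanConst μ (finrank ℝ V - 2 * β) ≤ 1 →
      ∀ (s : Finset ι) (θ w : ι → ℝ) (E : ι → Set ℝ) (N p q : ℕ) (r θ₀ Λ A : ℝ), 1 ≤ r →
      r ≤ p → p ≤ q → q ≤ N → (∀ n < q, (n : ℝ) ≤ (1 + κ) * r) →
      (∀ k ∈ s, θ k ∈ I ∩ Ico θ₀ (θ₀ + H.h)) → IsFrostmanWeight s θ w (1 / r) Λ β →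
      (∀ k ∈ s, MeasurableSet (E k) ∧ E k ⊆ Ioc (-Real.pi) Real.pi ∧ volume.real (E k) ≤ A) →
      0 ≤ A →
      (∫ x, ‖∑ k ∈ s, (w k : ℂ) * fejerWave (E k) N p q (γ (θ k)) x‖ ∂μ) ^ 6 ≤
        C * (N : ℝ) ^ (5 * η) * (μ.real univ ^ 5 * Λ ^ 3 * A * (∑ k ∈ s, w k) ^ 3) := by
  obtain ⟨κ, hκ, C, hC, hdec⟩ :=
    H.exists_integral_norm_weighted_fejerWave_pow_six_le (ι := ι) hγ hη hβ.2
  obtain ⟨m, hm, hmB, C', hC', htransfer⟩ :=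
    exists_bandLimited_pow_integral_norm_le (V := V) two_pos 5
  refine ⟨κ, hκ, C' * C * m.real univ + 1, by positivity, fun μ _ hμ hμβ s θ w E N p q r θ₀ Λ A hr
    hrp hpq hqN hn hθ hw hE hA => ?_⟩
  have hr0 : 0 < r := by linarith
  have hspec : HasSpectrum {ξ : V | ‖ξ‖ ≤ 2 * r} fun x =>
      ∑ k ∈ s, (w k : ℂ) * fejerWave (E k) N p q (γ (θ k)) x := by
    refine HasSpectrum.sum _ fun k hk => (hasSpectrum_fejerWave _ _ fun n hnpq => ?_).const_mul _
    rw [mem_ofPred_eq, norm_smul, hγ _ (hθ k hk).1, mul_one, Real.norm_natCast]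
    nlinarith [hn n (Finset.mem_Ico.1 hnpq).2, hκ.2]
  have hcancel : r ^ (finrank ℝ V - (finrank ℝ V - 2 * β)) * r ^ (-(2 * β)) = 1 := by
    rw [← Real.rpow_add hr0, sub_sub_cancel, add_neg_cancel, Real.rpow_zero]
  have hΛ := hw.const_nonneg
  have hW := hw.sum_nonneg
  calc _ ≤ μ.real univ ^ 5 * (C' * r ^ (finrank ℝ V - (finrank ℝ V - 2 * β)) *
          ∫ x, ‖∑ k ∈ s, (w k : ℂ) * fejerWave (E k) N p q (γ (θ k)) x‖ ^ 6 ∂m) :=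
        htransfer _ r (by linarith [hβ.1]) hr μ hμ hμβ _ hspec
    _ ≤ μ.real univ ^ 5 * (C' * r ^ (finrank ℝ V - (finrank ℝ V - 2 * β)) *
          (C * (N : ℝ) ^ (5 * η) * m.real univ *
            (r ^ (-(2 * β)) * Λ ^ 3 * A * (∑ k ∈ s, w k) ^ 3))) := by
        gcongr
        exact hdec m hmB s θ w E N p q r θ₀ Λ A hr hrp hpq hqN hn hθ hw hE hA
    _ = C' * C * m.real univ * (N : ℝ) ^ (5 * η) *
          (r ^ (finrank ℝ V - (finrank ℝ V - 2 * β)) * r ^ (-(2 * β))) *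
          (μ.real univ ^ 5 * Λ ^ 3 * A * (∑ k ∈ s, w k) ^ 3) := by ring
    _ ≤ _ := by
        rw [hcancel, mul_one]
        gcongr
        linarith

theorem exists_pow_ge_and_le_rpow {q η : ℝ} (hq : 1 < q) (hη : 0 < η) :
    ∃ C > 0, ∀ R : ℝ, 1 ≤ R → ∃ m : ℕ, R ≤ q ^ m ∧ (m : ℝ) ≤ C * R ^ η := by
  have hlog : 0 < Real.log q := Real.log_pos hq
  refine ⟨1 / (η * Real.log q) + 1, by positivity, fun R hR =>
    ⟨⌈Real.log R / Real.log q⌉₊, ?_, ?_⟩⟩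
  · rw [← Real.log_le_log_iff (by positivity) (by positivity), Real.log_pow, ← div_le_iff₀ hlog]
    exact Nat.le_ceil _
  · calc (⌈Real.log R / Real.log q⌉₊ : ℝ) ≤ Real.log R / Real.log q + 1 :=
          (Nat.ceil_lt_add_one (div_nonneg (Real.log_nonneg hR) hlog.le)).le
      _ ≤ R ^ η / η / Real.log q + R ^ η := by
          gcongr
          · exact Real.log_le_rpow_div (by positivity) hη
          · exact Real.one_le_rpow hR hη.le
      _ = _ := by field_simp

theorem natCeil_rpow_le {R t : ℝ} (hR : 1 ≤ R) (ht : 0 ≤ t) :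
    (⌈R⌉₊ : ℝ) ^ t ≤ 2 ^ t * R ^ t := by
  rw [← Real.mul_rpow zero_le_two (by positivity)]
  gcongr
  linarith [Nat.ceil_lt_add_one (zero_le_one.trans hR)]

theorem ConeFrame.exists_integral_norm_weighted_fejerWave_le_of_mem_block [FiniteDimensional ℝ V]
    (H : ConeFrame γ I) (hγ : ∀ θ ∈ I, ‖γ θ‖ = 1) (hη : η ∈ Ioc 0 1) (hβ : β ∈ Icc 0 1) :
    ∃ κ ∈ Ioc (0 : ℝ) 1, ∃ C > 0, ∀ (μ : Measure V) [IsFiniteMeasure μ],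
      μ (closedBall 0 1)ᶜ = 0 → frostmanConst μ (finrank ℝ V - 2 * β) ≤ 1 →
      ∀ (s : Finset ι) (θ w : ι → ℝ) (E : ι → Set ℝ) (p q : ℕ) (R r θ₀ Λ A : ℝ), r ∈ Icc 1 R →
      r ≤ p → p ≤ q → q ≤ ⌈R⌉₊ → (∀ n < q, (n : ℝ) ≤ (1 + κ) * r) →
      (∀ k ∈ s, θ k ∈ I ∩ Ico θ₀ (θ₀ + H.h)) → IsFrostmanWeight s θ w (1 / R) Λ β →
      (∀ k ∈ s, MeasurableSet (E k) ∧ E k ⊆ Ioc (-Real.pi) Real.pi ∧ volume.real (E k) ≤ A) →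
      0 ≤ A →
      ∫ x, ‖∑ k ∈ s, (w k : ℂ) * fejerWave (E k) ⌈R⌉₊ p q (γ (θ k)) x‖ ∂μ ≤
        C * R ^ η * (μ.real univ ^ 5 * Λ ^ 3 * A * (∑ k ∈ s, w k) ^ 3) ^ (1 / 6 : ℝ) := by
  obtain ⟨κ, hκ, C, hC, hblock⟩ :=
    H.exists_pow_six_integral_norm_weighted_fejerWave_le (ι := ι) hγ hη hβ
  refine ⟨κ, hκ, (C * 2 ^ (5 * η)) ^ (1 / 6 : ℝ), by positivity, fun μ _ hμ hμβ s θ w E p q R r θ₀ Λ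
    A hr hrp hpq hqN hn hθ hw hE hA => ?_⟩
  have hR : 1 ≤ R := hr.1.trans hr.2
  have hr0 : 0 < r := by linarith [hr.1]
  have hη0 : 0 ≤ 5 * η := by linarith [hη.1]
  have hΛ := hw.const_nonneg
  have hW := hw.sum_nonneg
  set X : ℝ := μ.real univ ^ 5 * Λ ^ 3 * A * (∑ k ∈ s, w k) ^ 3
  set J : ℝ := ∫ x, ‖∑ k ∈ s, (w k : ℂ) * fejerWave (E k) ⌈R⌉₊ p q (γ (θ k)) x‖ ∂μ
  have hJ : 0 ≤ J := integral_nonneg fun x => norm_nonneg _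
  have hJ6 : J ^ 6 ≤ C * 2 ^ (5 * η) * R ^ (η * 6) * X := calc
    J ^ 6 ≤ C * (⌈R⌉₊ : ℝ) ^ (5 * η) * X :=
      hblock μ hμ hμβ s θ w E _ p q r θ₀ Λ A hr.1 hrp hpq hqN hn hθ
        (hw.mono subset_rfl (one_div_le_one_div_of_le hr0 hr.2)) hE hA
    _ ≤ C * (2 ^ (5 * η) * R ^ (5 * η)) * X := by
      gcongr
      exact natCeil_rpow_le hR hη0
    _ ≤ C * (2 ^ (5 * η) * R ^ (η * 6)) * X := by
      gcongr C * (_ * ?_) * X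
      exact Real.rpow_le_rpow_of_exponent_le hR (by linarith [hη.1])
    _ = _ := by ring
  calc J = (J ^ 6) ^ (1 / 6 : ℝ) := by
        rw [← Real.rpow_natCast, ← Real.rpow_mul hJ]
        norm_num
    _ ≤ (C * 2 ^ (5 * η) * R ^ (η * 6) * X) ^ (1 / 6 : ℝ) := by gcongr
    _ = _ := by
        rw [Real.mul_rpow (by positivity) (by positivity),
          Real.mul_rpow (by positivity) (by positivity), ← Real.rpow_mul (by positivity),
          mul_assoc η]
        norm_num

theorem integral_norm_weighted_fejerWave_le_sum [SecondCountableTopology V] {u : ℕ → ℕ}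
    (hu : Monotone u) (μ : Measure V) [IsFiniteMeasure μ] (s : Finset ι) (w : ι → ℝ)
    (E : ι → Set ℝ) (ξ : ι → V) (N m : ℕ) :
    ∫ x, ‖∑ k ∈ s, (w k : ℂ) * fejerWave (E k) N (u 0) (u m) (ξ k) x‖ ∂μ ≤
      ∑ i ∈ Finset.range m,
        ∫ x, ‖∑ k ∈ s, (w k : ℂ) * fejerWave (E k) N (u i) (u (i + 1)) (ξ k) x‖ ∂μ := by
  rw [← integral_finsetSum _ fun i _ => BddContinuous.integrable (by fun_prop)]
  refine integral_mono (BddContinuous.integrable (by fun_prop))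
    (BddContinuous.integrable (by fun_prop)) fun x => ?_
  simp_rw [← sum_range_fejerWave hu, Finset.mul_sum]
  rw [Finset.sum_comm]
  exact norm_sum_le _ _

theorem ConeFrame.exists_integral_norm_weighted_fejerWave_le [FiniteDimensional ℝ V]
    (H : ConeFrame γ I) (hγ : ∀ θ ∈ I, ‖γ θ‖ = 1) (hη : η ∈ Ioc 0 1) (hβ : β ∈ Icc 0 1) :
    ∃ C > 0, ∀ (μ : Measure V) [IsFiniteMeasure μ],
      μ (closedBall 0 1)ᶜ = 0 → frostmanConst μ (finrank ℝ V - 2 * β) ≤ 1 →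
      ∀ (s : Finset ι) (θ w : ι → ℝ) (E : ι → Set ℝ) (R θ₀ Λ A : ℝ), 1 ≤ R →
      (∀ k ∈ s, θ k ∈ I ∩ Ico θ₀ (θ₀ + H.h)) → IsFrostmanWeight s θ w (1 / R) Λ β →
      (∀ k ∈ s, MeasurableSet (E k) ∧ E k ⊆ Ioc (-Real.pi) Real.pi ∧ volume.real (E k) ≤ A) →
      0 ≤ A →
      ∫ x, ‖∑ k ∈ s, (w k : ℂ) * fejerWave (E k) ⌈R⌉₊ 1 ⌈R⌉₊ (γ (θ k)) x‖ ∂μ ≤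
        C * R ^ (2 * η) * (μ.real univ ^ 5 * Λ ^ 3 * A * (∑ k ∈ s, w k) ^ 3) ^ (1 / 6 : ℝ) := by
  obtain ⟨κ, hκ, C, hC, hblock⟩ :=
    H.exists_integral_norm_weighted_fejerWave_le_of_mem_block (ι := ι) hγ hη hβ
  have hq : 1 < 1 + κ := by linarith [hκ.1]
  obtain ⟨C', hC', hpow⟩ := exists_pow_ge_and_le_rpow hq hη.1
  refine ⟨C' * C, by positivity, fun μ _ hμ hμβ s θ w E R θ₀ Λ A hR hθ hw hE hA => ?_⟩
  obtain ⟨m, hmR, hm⟩ := hpow R hR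
  have hΛ := hw.const_nonneg
  have hW := hw.sum_nonneg
  set X : ℝ := μ.real univ ^ 5 * Λ ^ 3 * A * (∑ k ∈ s, w k) ^ 3
  set u : ℕ → ℕ := fun i => min ⌈R⌉₊ ⌈(1 + κ) ^ i⌉₊ with hu
  have hmono : Monotone u := fun i j hij =>
    min_le_min le_rfl (Nat.ceil_mono (pow_le_pow_right₀ hq.le hij))
  have hu0 : u 0 = 1 := by simpa [hu] using zero_lt_one.trans_le hR
  have hum : u m = ⌈R⌉₊ := min_eq_left (Nat.ceil_mono hmR)
  have hle (i : ℕ) :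
      ∫ x, ‖∑ k ∈ s, (w k : ℂ) * fejerWave (E k) ⌈R⌉₊ (u i) (u (i + 1)) (γ (θ k)) x‖ ∂μ ≤
        C * R ^ η * X ^ (1 / 6 : ℝ) := by
    rcases le_total R ((1 + κ) ^ i) with hi | hi
    · have hui : u i = ⌈R⌉₊ := min_eq_left (Nat.ceil_mono hi)
      have hui' : u (i + 1) = ⌈R⌉₊ :=
        (min_le_left _ _).antisymm (hui.symm.trans_le (hmono i.le_succ))
      simp only [hui, hui', fejerWave, Finset.Ico_self, Finset.sum_empty, mul_zero,
        Finset.sum_const_zero, norm_zero, integral_zero]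
      positivity
    · refine hblock μ hμ hμβ s θ w E _ _ R ((1 + κ) ^ i) θ₀ Λ A ⟨one_le_pow₀ hq.le, hi⟩ ?_
        (hmono i.le_succ) (min_le_left _ _) (fun n hn => ?_) hθ hw hE hA
      · rw [show u i = ⌈(1 + κ) ^ i⌉₊ from min_eq_right (Nat.ceil_mono hi)]
        exact Nat.le_ceil _
      · rw [← pow_succ']
        exact (Nat.lt_ceil.1 (hn.trans_le (min_le_right _ _))).le
  have hsum := integral_norm_weighted_fejerWave_le_sum hmono μ s w E (fun k => γ (θ k)) ⌈R⌉₊ m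
  rw [hu0, hum] at hsum
  calc _ ≤ _ := hsum
    _ ≤ m * (C * R ^ η * X ^ (1 / 6 : ℝ)) := by
        simpa using Finset.sum_le_card_nsmul (Finset.range m) _ _ fun i _ => hle i
    _ ≤ C' * R ^ η * (C * R ^ η * X ^ (1 / 6 : ℝ)) := by gcongr
    _ = C' * C * (R ^ η * R ^ η) * X ^ (1 / 6 : ℝ) := by ring
    _ = _ := by rw [← Real.rpow_add (by positivity), two_mul]

end PlaneWaves

section FrostmanMass

variable {X : Type*} [PseudoMetricSpace X] [MeasurableSpace X] {μ : Measure X} {α : ℝ}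

theorem measure_univ_le_of_subset_ball {S : Set X} (hμ : μ Sᶜ = 0) {x : X} {r : ℝ} (hr : 0 < r)
    (hS : S ⊆ ball x r) : μ univ ≤ frostmanConst μ α * ENNReal.ofReal (r ^ α) :=
  calc μ univ ≤ μ S + μ Sᶜ := measure_univ_le_add_compl S
    _ ≤ μ (ball x r) := by
        rw [hμ, add_zero]
        exact measure_mono hS
    _ ≤ _ := measure_ball_le μ α x hr

theorem measureReal_univ_le_two_rpow {x : X} (hμ : μ (closedBall x 1)ᶜ = 0)
    (hμα : frostmanConst μ α ≤ 1) : μ.real univ ≤ 2 ^ α := by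
  refine ENNReal.toReal_le_of_le_ofReal (by positivity) ?_
  exact (measure_univ_le_of_subset_ball hμ two_pos (closedBall_subset_ball one_lt_two)).trans
    (mul_le_of_le_one_left' hμα)

theorem isFiniteMeasure_of_frostmanConst_ne_top [Nonempty X] {S : Set X}
    (hS : Bornology.IsBounded S) (hμ : μ Sᶜ = 0) (hα : frostmanConst μ α ≠ ∞) :
    IsFiniteMeasure μ := by
  obtain ⟨r, hr, hSr⟩ := hS.subset_ball_lt 0 (Classical.arbitrary X)
  exact ⟨(measure_univ_le_of_subset_ball hμ hr hSr).trans_lt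
    (ENNReal.mul_lt_top hα.lt_top ENNReal.ofReal_lt_top)⟩

theorem measureReal_ball_le (hα : frostmanConst μ α ≠ ∞) (x : X) {r : ℝ} (hr : 0 < r) :
    μ.real (ball x r) ≤ (frostmanConst μ α).toReal * r ^ α := by
  have h := ENNReal.toReal_mono (ENNReal.mul_ne_top hα ENNReal.ofReal_ne_top)
    (measure_ball_le μ α x hr)
  rwa [ENNReal.toReal_mul, ENNReal.toReal_ofReal (by positivity)] at h

end FrostmanMass

section Slabs

open Module (finrank)

variable {V : Type*} [NormedAddCommGroup V] [InnerProductSpace ℝ V]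

/-- The union of the slabs of half-width `R⁻¹` orthogonal to `ξ` at the heights in `D`. -/
def slabs (ξ : V) (R : ℝ) (D : Finset ℝ) : Set V := {x | ∃ c ∈ D, |⟪x, ξ⟫ - c| ≤ R⁻¹}

theorem measurableSet_slabs [MeasurableSpace V] [OpensMeasurableSpace V] (ξ : V) (R : ℝ)
    (D : Finset ℝ) : MeasurableSet (slabs ξ R D) := by
  have : slabs ξ R D = ⋃ c ∈ D, {x | |⟪x, ξ⟫ - c| ≤ R⁻¹} := by
    ext x
    simp [slabs]
  rw [this]
  exact Finset.measurableSet_biUnion _ fun c _ =>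
    (isClosed_le (by fun_prop) continuous_const).measurableSet

/-- The closed neighbourhood of radius `2 / R` of `D`, cut off to `[-2, 2]` so that it stays within
one period of the Fejér kernel. -/
def fattened (R : ℝ) (D : Finset ℝ) : Set ℝ :=
  (⋃ c ∈ D, Icc (c - 2 / R) (c + 2 / R)) ∩ Icc (-2) 2

theorem measurableSet_fattened (R : ℝ) (D : Finset ℝ) : MeasurableSet (fattened R D) :=
  (Finset.measurableSet_biUnion _ fun _ _ => measurableSet_Icc).inter measurableSet_Icc

theorem fattened_subset_Ioc (R : ℝ) (D : Finset ℝ) :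
    fattened R D ⊆ Ioc (-Real.pi) Real.pi :=
  inter_subset_right.trans fun _ hx =>
    ⟨by linarith [hx.1, Real.pi_gt_three], by linarith [hx.2, Real.pi_gt_three]⟩

theorem volume_fattened_le {R : ℝ} (hR : 0 < R) (D : Finset ℝ) :
    volume.real (fattened R D) ≤ D.card * (4 / R) := by
  have hwidth : 0 < 2 / R := by positivity
  have hfin : volume (⋃ c ∈ D, Icc (c - 2 / R) (c + 2 / R)) ≠ ∞ :=
    (Bornology.isBounded_biUnion_finset D |>.2 fun c _ => isBounded_Icc _ _).measure_lt_top.ne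
  calc _ ≤ volume.real (⋃ c ∈ D, Icc (c - 2 / R) (c + 2 / R)) :=
        measureReal_mono inter_subset_left hfin
    _ ≤ ∑ c ∈ D, volume.real (Icc (c - 2 / R) (c + 2 / R)) := measureReal_biUnion_finset_le _ _
    _ = ∑ c ∈ D, 4 / R := Finset.sum_congr rfl fun c _ => by
        rw [Real.volume_real_Icc_of_le (by linarith)]
        ring
    _ = _ := by rw [Finset.sum_const, nsmul_eq_mul]

theorem volume_fattened_le_of_card_le {R M ε : ℝ} (hR : 0 < R) {D : Finset ℝ}
    (hD : (D.card : ℝ) ≤ R ^ (1 - ε) * M) : volume.real (fattened R D) ≤ 4 * R ^ (-ε) * M :=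
  calc _ ≤ D.card * (4 / R) := volume_fattened_le hR D
    _ ≤ R ^ (1 - ε) * M * (4 / R) := by gcongr
    _ = _ := by
        rw [sub_eq_add_neg, Real.rpow_add hR, Real.rpow_one]
        field_simp

theorem Icc_subset_fattened {R s : ℝ} (hR : 1 ≤ R) {D : Finset ℝ} (hs : |s| ≤ 1)
    (hD : ∃ c ∈ D, |s - c| ≤ R⁻¹) {N : ℕ} (hN : R ≤ N) :
    Icc (s - 1 / N) (s + 1 / N) ⊆ fattened R D := by
  obtain ⟨c, hc, hsc⟩ := hD
  have hNR : 1 / (N : ℝ) ≤ R⁻¹ := by rw [← one_div]; gcongr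
  have hR1 : R⁻¹ ≤ 1 := inv_le_one_of_one_le₀ hR
  rw [abs_le] at hs hsc
  intro u hu
  refine ⟨mem_biUnion hc ?_, ?_, ?_⟩
  · rw [mem_Icc, div_eq_mul_inv]
    constructor <;> linarith [hu.1, hu.2]
  · linarith [hu.1]
  · linarith [hu.2]

theorem indicator_slabs_le {R : ℝ} (hR : 1 ≤ R) {ξ x : V} (hξ : ‖ξ‖ ≤ 1) (hx : ‖x‖ ≤ 1)
    (D : Finset ℝ) :
    (slabs ξ R D).indicator (1 : V → ℝ) x ≤
      4 * (fejerWave (fattened R D) ⌈R⌉₊ 1 ⌈R⌉₊ ξ x).re + 2 * volume.real (fattened R D) := by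
  have hN : 1 ≤ ⌈R⌉₊ := Nat.one_le_ceil_iff.2 (by linarith)
  have hsub := fattened_subset_Ioc R D
  have heq := integral_fejerKernel_eq hsub hN ⟪x, ξ⟫
  rw [fejerWave]
  by_cases hxD : x ∈ slabs ξ R D
  · have hinner : |⟪x, ξ⟫| ≤ 1 :=
      (abs_real_inner_le_norm _ _).trans (mul_le_one₀ hx (norm_nonneg _) hξ)
    have hhalf := half_le_integral_fejerKernel hsub hN
      (Icc_subset_fattened hR hinner hxD (Nat.le_ceil R))
    rw [indicator_of_mem hxD, Pi.one_apply]
    linarith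
  · have hnonneg : 0 ≤ ∫ u in fattened R D, fejerKernel ⌈R⌉₊ (⟪x, ξ⟫ - u) :=
      integral_nonneg fun _ => fejerKernel_nonneg _ _
    rw [indicator_of_notMem hxD]
    linarith

variable {ι : Type*} {s : Finset ι} {w : ι → ℝ} {ξ : ι → V} {R A : ℝ}

theorem sum_mul_indicator_slabs_le (hR : 1 ≤ R) (D : ι → Finset ℝ) (hw : ∀ k ∈ s, 0 ≤ w k)
    (hξ : ∀ k ∈ s, ‖ξ k‖ ≤ 1) (hA : ∀ k ∈ s, volume.real (fattened R (D k)) ≤ A) {x : V}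
    (hx : ‖x‖ ≤ 1) :
    ∑ k ∈ s, w k * (slabs (ξ k) R (D k)).indicator 1 x ≤
      4 * ‖∑ k ∈ s, (w k : ℂ) * fejerWave (fattened R (D k)) ⌈R⌉₊ 1 ⌈R⌉₊ (ξ k) x‖ +
        2 * A * ∑ k ∈ s, w k := by
  set F : ι → ℂ := fun k => fejerWave (fattened R (D k)) ⌈R⌉₊ 1 ⌈R⌉₊ (ξ k) x
  calc _ ≤ ∑ k ∈ s, w k * (4 * (F k).re + 2 * A) := by
        refine Finset.sum_le_sum fun k hk => mul_le_mul_of_nonneg_left ?_ (hw k hk)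
        exact (indicator_slabs_le hR (hξ k hk) hx _).trans (by gcongr; exact hA k hk)
    _ = 4 * (∑ k ∈ s, (w k : ℂ) * F k).re + 2 * A * ∑ k ∈ s, w k := by
        simp_rw [Complex.re_sum, Complex.re_ofReal_mul, Finset.mul_sum, ← Finset.sum_add_distrib]
        exact Finset.sum_congr rfl fun k _ => by ring
    _ ≤ _ := by
        gcongr
        exact Complex.re_le_norm _

variable [MeasurableSpace V] [BorelSpace V]

theorem sum_mul_measureReal_slabs_le [SecondCountableTopology V] {μ : Measure V}
    [IsFiniteMeasure μ] (hμ : μ (closedBall 0 1)ᶜ = 0) (hR : 1 ≤ R) (D : ι → Finset ℝ)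
    (hw : ∀ k ∈ s, 0 ≤ w k) (hξ : ∀ k ∈ s, ‖ξ k‖ ≤ 1)
    (hA : ∀ k ∈ s, volume.real (fattened R (D k)) ≤ A) :
    ∑ k ∈ s, w k * μ.real (slabs (ξ k) R (D k)) ≤
      4 * ∫ x, ‖∑ k ∈ s, (w k : ℂ) * fejerWave (fattened R (D k)) ⌈R⌉₊ 1 ⌈R⌉₊ (ξ k) x‖ ∂μ +
        2 * A * (∑ k ∈ s, w k) * μ.real univ := by
  have hind : ∀ k ∈ s, Integrable (fun x => w k * (slabs (ξ k) R (D k)).indicator 1 x) μ :=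
    fun k _ => ((integrable_const (1 : ℝ)).indicator (measurableSet_slabs _ _ _)).const_mul _
  have hint : Integrable (fun x => 4 * ‖∑ k ∈ s, (w k : ℂ) *
      fejerWave (fattened R (D k)) ⌈R⌉₊ 1 ⌈R⌉₊ (ξ k) x‖) μ :=
    (BddContinuous.integrable (by fun_prop)).const_mul 4
  have hball : ∀ᵐ x ∂μ, x ∈ closedBall (0 : V) 1 := hμ
  calc ∑ k ∈ s, w k * μ.real (slabs (ξ k) R (D k))
      = ∫ x, ∑ k ∈ s, w k * (slabs (ξ k) R (D k)).indicator 1 x ∂μ := by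
        rw [integral_finsetSum _ hind]
        refine Finset.sum_congr rfl fun k _ => ?_
        rw [integral_const_mul, integral_indicator_one (measurableSet_slabs _ _ _)]
    _ ≤ ∫ x, (4 * ‖∑ k ∈ s, (w k : ℂ) * fejerWave (fattened R (D k)) ⌈R⌉₊ 1 ⌈R⌉₊ (ξ k) x‖ +
          2 * A * ∑ k ∈ s, w k) ∂μ := by
        refine integral_mono_ae (integrable_finsetSum _ hind) (hint.add (integrable_const _)) ?_
        filter_upwards [hball] with x hx
        exact sum_mul_indicator_slabs_le hR D hw hξ hA (mem_closedBall_zero_iff.1 hx)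
    _ = _ := by
        rw [integral_add hint (integrable_const _), integral_const_mul, integral_const,
          smul_eq_mul]
        ring

theorem IsFrostmanWeight.sum_le_mul_rpow {θ : ι → ℝ} {σ Λ β θ₀ ρ : ℝ}
    (hw : IsFrostmanWeight s θ w σ Λ β) (hρ : 0 ≤ ρ) (hσ : σ ≤ ρ)
    (hθ : ∀ k ∈ s, θ k ∈ Ico θ₀ (θ₀ + ρ)) :
    ∑ k ∈ s, w k ≤ (ρ ^ β) ^ (1 / 2 : ℝ) * (Λ * ∑ k ∈ s, w k) ^ (1 / 2 : ℝ) := by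
  have hΛ := hw.const_nonneg
  have hW := hw.sum_nonneg
  have hle := hw.sum_le θ₀ ρ hσ
  rw [Finset.filter_true_of_mem hθ] at hle
  rw [← Real.mul_rpow (by positivity) (by positivity), ← Real.sqrt_eq_rpow]
  refine Real.le_sqrt_of_sq_le ?_
  nlinarith

theorem rpow_one_div_six_eq {M Λ W a : ℝ} (hM : 0 ≤ M) (hΛ : 0 ≤ Λ) (hW : 0 ≤ W) (ha : 0 ≤ a) :
    (M ^ 5 * Λ ^ 3 * (a * M) * W ^ 3) ^ (1 / 6 : ℝ) =
      a ^ (1 / 6 : ℝ) * M * (Λ * W) ^ (1 / 2 : ℝ) := by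
  rw [show M ^ 5 * Λ ^ 3 * (a * M) * W ^ 3 = a * M ^ 6 * (Λ * W) ^ 3 by ring,
    Real.mul_rpow (by positivity) (by positivity), Real.mul_rpow ha (by positivity),
    ← Real.rpow_natCast M, ← Real.rpow_natCast (Λ * W), ← Real.rpow_mul hM,
    ← Real.rpow_mul (by positivity)]
  norm_num

theorem rpow_two_mul_mul_le {R η ε : ℝ} (hR : 1 ≤ R) (hη : η ≤ ε / 24) :
    R ^ (2 * η) * (4 * R ^ (-ε)) ^ (1 / 6 : ℝ) ≤ 4 ^ (1 / 6 : ℝ) * R ^ (-(ε / 12)) := by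
  have hR0 : 0 < R := by linarith
  rw [Real.mul_rpow (by positivity) (by positivity), ← Real.rpow_mul hR0.le, mul_left_comm,
    ← Real.rpow_add hR0]
  gcongr _ * ?_
  exact Real.rpow_le_rpow_of_exponent_le hR (by linarith)

variable [FiniteDimensional ℝ V] {γ : ℝ → V} {ε β : ℝ}

theorem ConeFrame.exists_sum_measureReal_slabs_le_of_mem_Ico {I : Set ℝ} (H : ConeFrame γ I)
    (hγ : ∀ θ ∈ I, ‖γ θ‖ = 1) (hε : 0 < ε) (hβ : β ∈ Icc 0 1) :
    ∃ C > 0, ∀ (μ : Measure V) [IsFiniteMeasure μ],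
      μ (closedBall 0 1)ᶜ = 0 → frostmanConst μ (finrank ℝ V - 2 * β) ≤ 1 →
      ∀ (s : Finset ι) (θ w : ι → ℝ) (D : ι → Finset ℝ) (R θ₀ Λ : ℝ), 1 ≤ R →
      (∀ k ∈ s, θ k ∈ I ∩ Ico θ₀ (θ₀ + H.h)) → IsFrostmanWeight s θ w (1 / R) Λ β →
      (∀ k ∈ s, ((D k).card : ℝ) ≤ R ^ (1 - ε) * μ.real univ) →
      ∑ k ∈ s, w k * μ.real (slabs (γ (θ k)) R (D k)) ≤
        C * R ^ (-(ε / 12)) * μ.real univ * (Λ * ∑ k ∈ s, w k) ^ (1 / 2 : ℝ) := by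
  set η : ℝ := min 1 (ε / 24)
  have hη : 0 < η := by positivity
  obtain ⟨C, hC, hwave⟩ :=
    H.exists_integral_norm_weighted_fejerWave_le (ι := ι) hγ ⟨hη, min_le_left _ _⟩ hβ
  have hh := H.h_pos
  set K : ℝ := 2 ^ (finrank ℝ V - 2 * β)
  refine ⟨4 * C * 4 ^ (1 / 6 : ℝ) + 8 * K * ((H.h + 1) ^ β) ^ (1 / 2 : ℝ), by positivity,
    fun μ _ hμ hμβ s θ w D R θ₀ Λ hR hθ hw hD => ?_⟩
  have hR0 : 0 < R := by linarith
  set M := μ.real univ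
  set W := ∑ k ∈ s, w k
  have hΛ := hw.const_nonneg
  have hW0 : 0 ≤ W := hw.sum_nonneg
  have hM : M ≤ K := measureReal_univ_le_two_rpow hμ hμβ
  have hA : ∀ k ∈ s, volume.real (fattened R (D k)) ≤ 4 * R ^ (-ε) * M := fun k hk =>
    volume_fattened_le_of_card_le hR0 (hD k hk)
  have hW : W ≤ ((H.h + 1) ^ β) ^ (1 / 2 : ℝ) * (Λ * W) ^ (1 / 2 : ℝ) :=
    hw.sum_le_mul_rpow (by positivity) (by rw [div_le_iff₀ hR0]; nlinarith) fun k hk =>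
      ⟨(hθ k hk).2.1, (hθ k hk).2.2.trans (by linarith)⟩
  have hRη : R ^ (2 * η) * (4 * R ^ (-ε)) ^ (1 / 6 : ℝ) ≤ 4 ^ (1 / 6 : ℝ) * R ^ (-(ε / 12)) :=
    rpow_two_mul_mul_le hR (min_le_right _ _)
  have hRε : R ^ (-ε) ≤ R ^ (-(ε / 12)) := Real.rpow_le_rpow_of_exponent_le hR (by linarith)
  calc _ ≤ 4 * ∫ x, ‖∑ k ∈ s, (w k : ℂ) *
            fejerWave (fattened R (D k)) ⌈R⌉₊ 1 ⌈R⌉₊ (γ (θ k)) x‖ ∂μ +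
          2 * (4 * R ^ (-ε) * M) * W * M :=
        sum_mul_measureReal_slabs_le hμ hR D hw.nonneg (fun k hk => (hγ _ (hθ k hk).1).le) hA
    _ ≤ 4 * (C * R ^ (2 * η) * (M ^ 5 * Λ ^ 3 * (4 * R ^ (-ε) * M) * W ^ 3) ^ (1 / 6 : ℝ)) +
          2 * (4 * R ^ (-ε) * M) * W * M := by
        gcongr
        exact hwave μ hμ hμβ s θ w _ R θ₀ Λ _ hR hθ hw (fun k hk =>
          ⟨measurableSet_fattened _ _, fattened_subset_Ioc _ _, hA k hk⟩) (by positivity)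
    _ = 4 * C * (R ^ (2 * η) * (4 * R ^ (-ε)) ^ (1 / 6 : ℝ)) * M * (Λ * W) ^ (1 / 2 : ℝ) +
          8 * M * R ^ (-ε) * M * W := by
        rw [rpow_one_div_six_eq measureReal_nonneg hΛ hW0 (by positivity)]
        ring
    _ ≤ 4 * C * (4 ^ (1 / 6 : ℝ) * R ^ (-(ε / 12))) * M * (Λ * W) ^ (1 / 2 : ℝ) +
          8 * K * R ^ (-(ε / 12)) * M *
            (((H.h + 1) ^ β) ^ (1 / 2 : ℝ) * (Λ * W) ^ (1 / 2 : ℝ)) := by gcongr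
    _ = _ := by ring

theorem exists_Icc_subset_Ico_add_nat_mul (a b : ℝ) {σ : ℝ} (hσ : 0 < σ) :
    ∃ P : ℕ, Icc a b ⊆ Ico a (a + P * σ) := by
  obtain ⟨P, hP⟩ := exists_nat_gt ((b - a) / σ)
  rw [div_lt_iff₀ hσ] at hP
  exact ⟨P, Icc_subset_Ico_right (by linarith)⟩

theorem ConeFrame.exists_sum_measureReal_slabs_le {a b : ℝ} (H : ConeFrame γ (Icc a b))
    (hγ : ∀ θ ∈ Icc a b, ‖γ θ‖ = 1) (hε : 0 < ε) (hβ : β ∈ Icc 0 1) :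
    ∃ C > 0, ∀ (μ : Measure V) [IsFiniteMeasure μ],
      μ (closedBall 0 1)ᶜ = 0 → frostmanConst μ (finrank ℝ V - 2 * β) ≤ 1 →
      ∀ (s : Finset ι) (θ w : ι → ℝ) (D : ι → Finset ℝ) (R Λ : ℝ), 1 ≤ R →
      (∀ k ∈ s, θ k ∈ Icc a b) → IsFrostmanWeight s θ w (1 / R) Λ β →
      (∀ k ∈ s, ((D k).card : ℝ) ≤ R ^ (1 - ε) * μ.real univ) →
      ∑ k ∈ s, w k * μ.real (slabs (γ (θ k)) R (D k)) ≤
        C * R ^ (-(ε / 12)) * μ.real univ * (Λ * ∑ k ∈ s, w k) ^ (1 / 2 : ℝ) := by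
  obtain ⟨C, hC, hlocal⟩ := H.exists_sum_measureReal_slabs_le_of_mem_Ico (ι := ι) hγ hε hβ
  obtain ⟨P, hP⟩ := exists_Icc_subset_Ico_add_nat_mul a b H.h_pos
  refine ⟨P * C + 1, by positivity, fun μ _ hμ hμβ s θ w D R Λ hR hθ hw hD => ?_⟩
  have hΛ := hw.const_nonneg
  have hW := hw.sum_nonneg
  have hcell : ∀ q ∈ Finset.range P, ∑ k ∈ s with θ k ∈ cell a H.h q,
      w k * μ.real (slabs (γ (θ k)) R (D k)) ≤
        C * R ^ (-(ε / 12)) * μ.real univ * (Λ * ∑ k ∈ s, w k) ^ (1 / 2 : ℝ) := by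
    intro q _
    have hsub : s.filter (θ · ∈ cell a H.h q) ⊆ s := Finset.filter_subset _ _
    have hwq := hw.mono hsub le_rfl
    have hWq := hwq.sum_nonneg
    refine (hlocal μ hμ hμβ _ θ w D R (a + q * H.h) Λ hR (fun k hk => ⟨hθ k (hsub hk), ?_⟩) hwq
      fun k hk => hD k (hsub hk)).trans ?_
    · rw [add_assoc, ← add_one_mul]
      exact (Finset.mem_filter.1 hk).2
    · gcongr
      exact fun k hk _ => hw.nonneg k hk
  rw [← sum_range_sum_cell H.h_pos (fun k hk => hP (hθ k hk))]
  calc _ ≤ P * (C * R ^ (-(ε / 12)) * μ.real univ * (Λ * ∑ k ∈ s, w k) ^ (1 / 2 : ℝ)) := by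
        simpa using Finset.sum_le_card_nsmul _ _ _ hcell
    _ = P * C * (R ^ (-(ε / 12)) * μ.real univ * (Λ * ∑ k ∈ s, w k) ^ (1 / 2 : ℝ)) := by ring
    _ ≤ (P * C + 1) * (R ^ (-(ε / 12)) * μ.real univ * (Λ * ∑ k ∈ s, w k) ^ (1 / 2 : ℝ)) := by
        gcongr
        linarith
    _ = _ := by ring

end Slabs

section Discretization

theorem exists_mem_setLIntegral_le {X : Type*} [MeasurableSpace X] {μ : Measure X} {T I : Set X}
    (hT : MeasurableSet T) (hI : μ Iᶜ = 0) (h0 : μ T ≠ 0) (hfin : μ T ≠ ∞) {φ : X → ℝ≥0∞}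
    (hφ : ∫⁻ t in T, φ t ∂μ ≠ ∞) : ∃ t ∈ T ∩ I, ∫⁻ u in T, φ u ∂μ ≤ μ T * φ t := by
  have hnull : μ.restrict T (T ∩ I)ᶜ = 0 := by
    rw [compl_inter]
    exact measure_union_null (by simp [hT.compl]) (Measure.restrict_le_self.absolutelyContinuous hI)
  obtain ⟨t, ht, hle⟩ := exists_notMem_null_laverage_le (by simpa using h0) hφ hnull
  rw [setLAverage_eq, ENNReal.div_le_iff h0 hfin, mul_comm] at hle
  exact ⟨t, not_not.1 ht, hle⟩

variable {σ β : ℝ} {lam : Measure ℝ}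

theorem pairwise_disjoint_cell (θ₀ : ℝ) (hσ : 0 ≤ σ) :
    Pairwise (Function.onFun Disjoint (cell θ₀ σ)) := by
  have hmono : Monotone fun q : ℕ => θ₀ + q * σ := fun p q hpq => by
    dsimp only
    gcongr
  simpa [cell] using hmono.pairwise_disjoint_on_Ico_succ

theorem lintegral_eq_sum_cell {θ₀ : ℝ} (hσ : 0 < σ) {P : ℕ} {I : Set ℝ}
    (hI : I ⊆ Ico θ₀ (θ₀ + P * σ)) (hlam : lam Iᶜ = 0) (φ : ℝ → ℝ≥0∞) :
    ∫⁻ t, φ t ∂lam = ∑ q ∈ Finset.range P, ∫⁻ t in cell θ₀ σ q, φ t ∂lam := by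
  have hcover : ∀ᵐ t ∂lam, t ∈ ⋃ q ∈ Finset.range P, cell θ₀ σ q := by
    have hIae : ∀ᵐ t ∂lam, t ∈ I := hlam
    filter_upwards [hIae] with t ht
    have ht' := hI ht
    refine mem_biUnion ?_ ((mem_cell_iff_floor_eq hσ ht'.1).2 rfl)
    rw [SetLike.mem_coe, Finset.mem_range, Nat.floor_lt (div_nonneg (sub_nonneg.2 ht'.1) hσ.le),
      div_lt_iff₀ hσ]
    linarith [ht'.2]
  rw [← lintegral_biUnion_finset (fun p _ q _ hpq => pairwise_disjoint_cell θ₀ hσ.le hpq)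
    fun q _ => measurableSet_Ico, Measure.restrict_eq_self_of_ae_mem hcover]

variable [IsFiniteMeasure lam]

theorem sum_measureReal_cell_eq (θ₀ : ℝ) (hσ : 0 ≤ σ) (s : Finset ℕ) :
    ∑ k ∈ s, lam.real (cell θ₀ σ k) = lam.real (⋃ k ∈ s, cell θ₀ σ k) :=
  (measureReal_biUnion_finset (fun _ _ _ _ hpq => pairwise_disjoint_cell θ₀ hσ hpq)
    fun _ _ => measurableSet_Ico).symm

theorem isFrostmanWeight_measureReal_cell (hσ : 0 < σ) (hβ : β ≤ 1)
    (hlam : frostmanConst lam β ≠ ∞) {θ₀ : ℝ} {s : Finset ℕ} {θ : ℕ → ℝ}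
    (hθ : ∀ k ∈ s, θ k ∈ cell θ₀ σ k) :
    IsFrostmanWeight s θ (fun k => lam.real (cell θ₀ σ k)) σ (2 * (frostmanConst lam β).toReal)
      β where
  nonneg _ _ := measureReal_nonneg
  sum_le x ρ hρ := by
    have hρ0 : 0 < ρ := hσ.trans_le hρ
    have hsub : ⋃ k ∈ s.filter (θ · ∈ Ico x (x + ρ)), cell θ₀ σ k ⊆ ball x (2 * ρ) := by
      refine iUnion₂_subset fun k hk u hu => ?_
      rw [Finset.mem_filter] at hk
      have hθk := hθ k hk.1
      rw [mem_ball, Real.dist_eq, abs_lt]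
      constructor <;> nlinarith [hθk.1, hθk.2, hu.1, hu.2, hk.2.1, hk.2.2]
    calc _ = lam.real (⋃ k ∈ s.filter (θ · ∈ Ico x (x + ρ)), cell θ₀ σ k) :=
          sum_measureReal_cell_eq θ₀ hσ.le _
      _ ≤ lam.real (ball x (2 * ρ)) := measureReal_mono hsub
      _ ≤ (frostmanConst lam β).toReal * (2 ^ β * ρ ^ β) := by
          rw [← Real.mul_rpow zero_le_two hρ0.le]
          exact measureReal_ball_le hlam x (by positivity)
      _ ≤ (frostmanConst lam β).toReal * (2 ^ (1 : ℝ) * ρ ^ β) := by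
          gcongr
          exact one_le_two
      _ = _ := by rw [Real.rpow_one]; ring

theorem exists_isFrostmanWeight_lintegral_le {a b : ℝ} (hsupp : lam (Icc a b)ᶜ = 0) (hσ : 0 < σ)
    (hβ : β ≤ 1) (hlam : frostmanConst lam β ≠ ∞) {φ : ℝ → ℝ≥0∞} {B : ℝ≥0∞} (hB : B ≠ ∞)
    (hφ : ∀ t, φ t ≤ B) :
    ∃ (s : Finset ℕ) (θ w : ℕ → ℝ), (∀ k ∈ s, θ k ∈ Icc a b) ∧
      IsFrostmanWeight s θ w σ (2 * (frostmanConst lam β).toReal) β ∧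
      ∑ k ∈ s, w k ≤ lam.real univ ∧ ∫⁻ t, φ t ∂lam ≤ ∑ k ∈ s, ENNReal.ofReal (w k) * φ (θ k) := by
  obtain ⟨P, hP⟩ := exists_Icc_subset_Ico_add_nat_mul a b hσ
  have hfin (k : ℕ) : ∫⁻ t in cell a σ k, φ t ∂lam ≠ ∞ := by
    refine ne_top_of_le_ne_top ?_ (lintegral_mono hφ)
    rw [lintegral_const]
    exact ENNReal.mul_ne_top hB (measure_ne_top _ _)
  choose! θ hθ hle using fun (k : ℕ) (h0 : lam (cell a σ k) ≠ 0) =>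
    exists_mem_setLIntegral_le measurableSet_Ico hsupp h0 (measure_ne_top _ _) (hfin k)
  set s := (Finset.range P).filter fun k => lam (cell a σ k) ≠ 0
  have hs : ∀ k ∈ s, lam (cell a σ k) ≠ 0 := fun k hk => (Finset.mem_filter.1 hk).2
  refine ⟨s, θ, fun k => lam.real (cell a σ k), fun k hk => (hθ k (hs k hk)).2,
    isFrostmanWeight_measureReal_cell hσ hβ hlam fun k hk => (hθ k (hs k hk)).1, ?_, ?_⟩
  · rw [sum_measureReal_cell_eq a hσ.le]
    exact measureReal_mono (subset_univ _)
  · have hzero : ∀ k ∈ Finset.range P, ∫⁻ t in cell a σ k, φ t ∂lam ≠ 0 → lam (cell a σ k) ≠ 0 :=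
      fun k _ => mt (setLIntegral_measure_zero _ _)
    rw [lintegral_eq_sum_cell hσ hP hsupp, ← Finset.sum_filter_of_ne hzero]
    refine Finset.sum_le_sum fun k hk => ?_
    rw [ofReal_measureReal]
    exact hle k (hs k hk)

theorem lowerIntegral_le_of_forall_isFrostmanWeight {a b : ℝ} (hsupp : lam (Icc a b)ᶜ = 0)
    (hσ : 0 < σ) (hβ : β ≤ 1) (hlam : frostmanConst lam β ≠ ∞) {f : ℝ → ℝ≥0∞} {B K : ℝ≥0∞}
    (hB : B ≠ ∞) (hf : ∀ t, f t ≤ B)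
    (hK : ∀ (s : Finset ℕ) (θ w : ℕ → ℝ), (∀ k ∈ s, θ k ∈ Icc a b) →
      IsFrostmanWeight s θ w σ (2 * (frostmanConst lam β).toReal) β →
      ∑ k ∈ s, w k ≤ lam.real univ → ∑ k ∈ s, ENNReal.ofReal (w k) * f (θ k) ≤ K) :
    lowerIntegral lam f ≤ K := by
  refine iSup_le fun φ => iSup₂_le fun _ hφ => ?_
  obtain ⟨s, θ, w, hθ, hw, hws, hle⟩ :=
    exists_isFrostmanWeight_lintegral_le hsupp hσ hβ hlam hB fun t => (hφ t).trans (hf t)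
  refine hle.trans (le_trans ?_ (hK s θ w hθ hw hws))
  gcongr with k
  exact hφ _

end Discretization

theorem map_lineProj_le {γ : ℝ → E3} {θ : ℝ} (hθ : ‖γ θ‖ = 1) (μ : Measure E3) (R : ℝ)
    (D : Finset ℝ) :
    μ.map (lineProj γ θ) (⋃ c ∈ D, lineInterval γ θ R c) ≤ μ (slabs (γ θ) R D) := by
  have hself : ⟪γ θ, γ θ⟫ = (1 : ℝ) := by rw [real_inner_self_eq_norm_sq, hθ, one_pow]
  have hcont : Continuous (lineProj γ θ) := by unfold lineProj; fun_prop
  have hsub : ⋃ c ∈ D, lineInterval γ θ R c ⊆ slabs (γ θ) R D := by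
    rintro _ hx
    obtain ⟨c, hc, s, hs, rfl⟩ := mem_iUnion₂.1 hx
    exact ⟨c, hc, by rwa [real_inner_smul_left, hself, mul_one]⟩
  refine (measure_mono hsub).trans ?_
  rw [Measure.map_apply hcont.measurable (measurableSet_slabs _ _ _)]
  refine measure_mono fun x ⟨c, hc, hxc⟩ => ⟨c, hc, ?_⟩
  rwa [lineProj, real_inner_smul_left, hself, mul_one] at hxc

theorem ConeFrame.exists_sum_map_lineProj_le {γ : ℝ → E3} {a b ε β : ℝ} {ι : Type*}
    (H : ConeFrame γ (Icc a b)) (hγ : ∀ θ ∈ Icc a b, ‖γ θ‖ = 1) (hε : 0 < ε)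
    (hβ : β ∈ Icc 0 1) :
    ∃ C > 0, ∀ (μ : Measure E3) [IsFiniteMeasure μ],
      μ (closedBall 0 1)ᶜ = 0 → frostmanConst μ (3 - 2 * β) ≤ 1 →
      ∀ (s : Finset ι) (θ w : ι → ℝ) (D : ι → Finset ℝ) (R Λ : ℝ), 1 ≤ R →
      (∀ k ∈ s, θ k ∈ Icc a b) → IsFrostmanWeight s θ w (1 / R) Λ β →
      (∀ k ∈ s, ((D k).card : ℝ≥0∞) ≤ ENNReal.ofReal (R ^ (1 - ε)) * μ univ) →
      ∑ k ∈ s, ENNReal.ofReal (w k) *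
          μ.map (lineProj γ (θ k)) (⋃ c ∈ D k, lineInterval γ (θ k) R c) ≤
        ENNReal.ofReal (C * R ^ (-(ε / 12))) * μ univ *
          ENNReal.ofReal (Λ * ∑ k ∈ s, w k) ^ (1 / 2 : ℝ) := by
  obtain ⟨C, hC, hle⟩ := H.exists_sum_measureReal_slabs_le (ι := ι) hγ hε hβ
  rw [finrank_euclideanSpace_fin, Nat.cast_ofNat] at hle
  refine ⟨C, hC, fun μ _ hμ hμβ s θ w D R Λ hR hθ hw hD => ?_⟩
  have hΛ := hw.const_nonneg
  have hW := hw.sum_nonneg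
  have hcard : ∀ k ∈ s, ((D k).card : ℝ) ≤ R ^ (1 - ε) * μ.real univ := fun k hk => by
    have h := ENNReal.toReal_mono (by finiteness) (hD k hk)
    rwa [ENNReal.toReal_natCast, ENNReal.toReal_mul, ENNReal.toReal_ofReal (by positivity)] at h
  calc _ ≤ ∑ k ∈ s, ENNReal.ofReal (w k * μ.real (slabs (γ (θ k)) R (D k))) := by
        refine Finset.sum_le_sum fun k hk => ?_
        rw [ENNReal.ofReal_mul (hw.nonneg k hk), ofReal_measureReal]
        exact mul_le_mul' le_rfl (map_lineProj_le (hγ _ (hθ k hk)) μ R _)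
    _ = ENNReal.ofReal (∑ k ∈ s, w k * μ.real (slabs (γ (θ k)) R (D k))) :=
        (ENNReal.ofReal_sum_of_nonneg fun k hk =>
          mul_nonneg (hw.nonneg k hk) measureReal_nonneg).symm
    _ ≤ ENNReal.ofReal (C * R ^ (-(ε / 12)) * μ.real univ *
          (Λ * ∑ k ∈ s, w k) ^ (1 / 2 : ℝ)) :=
        ENNReal.ofReal_le_ofReal (hle μ hμ hμβ s θ w D R Λ hR hθ hw hcard)
    _ = _ := by
        rw [ENNReal.ofReal_mul (by positivity), ENNReal.ofReal_mul (by positivity),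
          ofReal_measureReal, ENNReal.ofReal_rpow_of_nonneg (by positivity) (by positivity)]

theorem ofReal_two_mul_rpow_half {x y : ℝ≥0∞} (hx : x ≠ ∞) (hy : y ≠ ∞) :
    ENNReal.ofReal (2 * x.toReal * y.toReal) ^ (1 / 2 : ℝ) =
      ENNReal.ofReal (2 ^ (1 / 2 : ℝ)) * x ^ (1 / 2 : ℝ) * y ^ (1 / 2 : ℝ) := by
  have h0 : (0 : ℝ) ≤ 1 / 2 := by positivity
  rw [ENNReal.ofReal_mul (by positivity), ENNReal.ofReal_mul zero_le_two,
    ENNReal.ofReal_toReal hx, ENNReal.ofReal_toReal hy, ENNReal.mul_rpow_of_nonneg _ _ h0,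
    ENNReal.mul_rpow_of_nonneg _ _ h0, ENNReal.ofReal_rpow_of_nonneg zero_le_two h0]

theorem energy_lemma
    -- the compact interval `I = [a, b]`
    (a b : ℝ) (hab : a ≤ b)
    -- `γ : I → S²` is a `C²` curve with `det(γ, γ', γ'') ≠ 0` on `I`
    (γ : ℝ → E3) (hγC2 : ContDiff ℝ 2 γ)
    (hsphere : ∀ θ ∈ Icc a b, ‖γ θ‖ = 1)
    (hnondeg : ∀ θ ∈ Icc a b,
      LinearIndependent ℝ ![γ θ, deriv γ θ, deriv (deriv γ) θ])
    (β α : ℝ) (hβ0 : 0 ≤ β) (hβ1 : β ≤ 1) (hαβ : α = 3 - 2 * β)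
    (ε : ℝ) (hε : 0 < ε) :
    ∃ δ : ℝ, 0 < δ ∧ ∃ C : ℝ, 0 < C ∧
      ∀ R : ℝ, 1 ≤ R →
      ∀ lam : Measure ℝ, lam (Icc a b)ᶜ = 0 → frostmanConst lam β ≠ ∞ →
      ∀ μ : Measure E3, μ (Metric.closedBall (0 : E3) 1)ᶜ = 0 →
        frostmanConst μ α ≤ 1 →
      ∀ D : ℝ → Finset ℝ,
        (∀ θ ∈ Icc a b,
          ((D θ).card : ℝ≥0∞) ≤ ENNReal.ofReal (R ^ (1 - ε)) * μ Set.univ) →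
        lowerIntegral lam (fun θ =>
            μ.map (lineProj γ θ) (⋃ c ∈ D θ, lineInterval γ θ R c)) ≤
          ENNReal.ofReal (C * R ^ (-δ)) * μ Set.univ *
            frostmanConst lam β ^ ((1 : ℝ) / 2) * lam Set.univ ^ ((1 : ℝ) / 2) := by
  subst hαβ
  obtain ⟨H⟩ := nonempty_coneFrame hγC2 isCompact_Icc hnondeg
  obtain ⟨C, hC, hle⟩ := H.exists_sum_map_lineProj_le (ι := ℕ) hsphere hε ⟨hβ0, hβ1⟩
  refine ⟨ε / 12, by positivity, C * 2 ^ (1 / 2 : ℝ), by positivity,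
    fun R hR lam hlam hlamβ μ hμ hμα D hD => ?_⟩
  have := isFiniteMeasure_of_frostmanConst_ne_top (isBounded_Icc a b) hlam hlamβ
  have := isFiniteMeasure_of_frostmanConst_ne_top isBounded_closedBall hμ
    (ne_top_of_le_ne_top ENNReal.one_ne_top hμα)
  refine lowerIntegral_le_of_forall_isFrostmanWeight hlam (one_div_pos.2 (zero_lt_one.trans_le hR))
    hβ1 hlamβ (measure_ne_top μ univ) (fun θ => ?_) fun s θ w hθ hw hws => ?_
  · refine (measure_mono (subset_univ _)).trans_eq ?_
    rw [Measure.map_apply (by unfold lineProj; fun_prop) .univ, preimage_univ]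
  calc _ ≤ ENNReal.ofReal (C * R ^ (-(ε / 12))) * μ univ *
          ENNReal.ofReal (2 * (frostmanConst lam β).toReal * ∑ k ∈ s, w k) ^ (1 / 2 : ℝ) :=
        hle μ hμ hμα s θ w (fun k => D (θ k)) R _ hR hθ hw fun k hk => hD _ (hθ k hk)
    _ ≤ ENNReal.ofReal (C * R ^ (-(ε / 12))) * μ univ *
          ENNReal.ofReal (2 * (frostmanConst lam β).toReal * lam.real univ) ^ (1 / 2 : ℝ) := by
        gcongr
    _ = _ := by
        rw [measureReal_def, ofReal_two_mul_rpow_half hlamβ (measure_ne_top lam univ),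
          mul_right_comm C, ENNReal.ofReal_mul (p := C * _) (by positivity)]
        ring
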